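/- Fix an integer m ≥ 3 and a REAL coefficient vector a = (a_1, …, a_{m−1}) ∈ ℝ^{m−1}. Then all but finitely many eigenvalues of H(m,a) are real and positive; that is, the set {λ ∈ ℂ : λ is an eigenvalue of H and λ is not a positive real number} is finite. -/

import Mathlib

open Complex Real Filter Set MeasureTheory Asymptotics

/-- The polynomial `P(z) = a₁ z^{m-1} + a₂ z^{m-2} + ⋯ + a_{m-1} z`. -/
noncomputable def Ppoly (m : ℕ) (a : ℕ → ℂ) (z : ℂ) : ℂ :=
  ∑ j ∈ Finset.Icc 1 (m - 1), a j * z ^ (m - j)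

/-- `u` is an eigenfunction of `H(m,a)` associated with the eigenvalue `lam`:
`u` is a nonconstant entire solution of `-u'' - ((iz)^m + P(iz)) u = lam u` decaying
along the rays `arg z = -π/2 ± 2π/(m+2)`. -/
def IsEigenfunction (m : ℕ) (a : ℕ → ℂ) (lam : ℂ) (u : ℂ → ℂ) : Prop :=
  Differentiable ℂ u ∧
  (¬ ∃ c : ℂ, ∀ z : ℂ, u z = c) ∧
  (∀ z : ℂ, -(deriv (deriv u) z)
      - ((Complex.I * z) ^ m + Ppoly m a (Complex.I * z)) * u z = lam * u z) ∧
  Filter.Tendsto (fun r : ℝ =>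
      u ((r : ℂ) * Complex.exp (((-(Real.pi / 2) + 2 * Real.pi / ((m : ℝ) + 2) : ℝ) : ℂ)
        * Complex.I))) Filter.atTop (nhds 0) ∧
  Filter.Tendsto (fun r : ℝ =>
      u ((r : ℂ) * Complex.exp (((-(Real.pi / 2) - 2 * Real.pi / ((m : ℝ) + 2) : ℝ) : ℂ)
        * Complex.I))) Filter.atTop (nhds 0)

/-- `lam` is an eigenvalue of `H(m,a)`. -/
def IsEigenvalue (m : ℕ) (a : ℕ → ℂ) (lam : ℂ) : Prop :=
  ∃ u : ℂ → ℂ, IsEigenfunction m a lam u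




/-- derivative of the squared norm of a complex valued function of a real variable -/
theorem hasDerivAt_normsq {f : ℝ → ℂ} {f' : ℂ} {t : ℝ} (h : HasDerivAt f f' t) :
    HasDerivAt (fun t => ‖f t‖ ^ 2) (2 * (starRingEnd ℂ (f t) * f').re) t := by
  have := h.norm_sq
  rwa [Complex.inner, mul_comm f'] at this

/-- The data of a first order system along a path, together with a comparison function `φ`. -/
structure PathData (I : Set ℝ) (y y1 g Q φ φ' : ℝ → ℂ) (μ : ℝ) : Prop where
  hy : ∀ t ∈ I, HasDerivAt y (g t * y1 t) t
  hy1 : ∀ t ∈ I, HasDerivAt y1 (g t * (Q t * y t)) t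
  hφ : ∀ t ∈ I, HasDerivAt φ (φ' t) t
  hφ0 : ∀ t ∈ I, φ t ≠ 0
  hpos : ∀ t ∈ I, 0 ≤ (φ t * g t).re
  hμ : ∀ t ∈ I, ‖φ' t‖ + ‖g t‖ * ‖Q t - φ t ^ 2‖ ≤ μ * (φ t * g t).re * ‖φ t‖
  hμ2 : μ ≤ 1 / 2

namespace PathData

variable {I : Set ℝ} {y y1 g Q φ φ' : ℝ → ℂ} {μ : ℝ}

theorem dera (h : PathData I y y1 g Q φ φ' μ) {t : ℝ} (ht : t ∈ I) :
    ∃ r : ℂ, HasDerivAt (fun t => φ t * y t - y1 t)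
      (-(φ t * g t) * (φ t * y t - y1 t) + r) t ∧
      ‖r‖ ≤ μ * (φ t * g t).re * (‖φ t * y t - y1 t‖ + ‖φ t * y t + y1 t‖) / 2 := by
  refine ⟨(φ' t - g t * (Q t - φ t ^ 2)) * y t, ?_, ?_⟩
  · have := ((h.hφ t ht).mul (h.hy t ht)).sub (h.hy1 t ht)
    refine this.congr_deriv ?_
    ring
  · have h1 : ‖φ' t - g t * (Q t - φ t ^ 2)‖ ≤ μ * (φ t * g t).re * ‖φ t‖ := by
      refine le_trans (norm_sub_le _ _) ?_
      rw [norm_mul]; exact h.hμ t ht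
    have h2 : ‖φ t * y t‖ ≤ (‖φ t * y t - y1 t‖ + ‖φ t * y t + y1 t‖) / 2 := by
      have : φ t * y t = ((φ t * y t - y1 t) + (φ t * y t + y1 t)) / 2 := by ring
      calc ‖φ t * y t‖ = ‖((φ t * y t - y1 t) + (φ t * y t + y1 t)) / 2‖ := by rw [← this]
        _ ≤ _ := by
          rw [norm_div]
          have := norm_add_le (φ t * y t - y1 t) (φ t * y t + y1 t)
          rw [Complex.norm_ofNat]
          linarith
    have h0 : 0 ≤ μ * (φ t * g t).re := by
      have := h.hμ t ht
      have h3 : 0 < ‖φ t‖ := norm_pos_iff.2 (h.hφ0 t ht)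
      by_contra hc
      push Not at hc
      nlinarith [mul_pos (neg_pos.2 hc) h3, norm_nonneg (φ' t), mul_nonneg (norm_nonneg (g t)) (norm_nonneg (Q t - φ t ^ 2))]
    calc ‖(φ' t - g t * (Q t - φ t ^ 2)) * y t‖
        ≤ (μ * (φ t * g t).re * ‖φ t‖) * ‖y t‖ := by
          rw [norm_mul]; gcongr
      _ = (μ * (φ t * g t).re) * ‖φ t * y t‖ := by rw [norm_mul]; ring
      _ ≤ (μ * (φ t * g t).re) * ((‖φ t * y t - y1 t‖ + ‖φ t * y t + y1 t‖) / 2) := by gcongr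
      _ = _ := by ring

theorem derb (h : PathData I y y1 g Q φ φ' μ) {t : ℝ} (ht : t ∈ I) :
    ∃ r : ℂ, HasDerivAt (fun t => φ t * y t + y1 t)
      ((φ t * g t) * (φ t * y t + y1 t) + r) t ∧
      ‖r‖ ≤ μ * (φ t * g t).re * (‖φ t * y t - y1 t‖ + ‖φ t * y t + y1 t‖) / 2 := by
  refine ⟨(φ' t + g t * (Q t - φ t ^ 2)) * y t, ?_, ?_⟩
  · have := ((h.hφ t ht).mul (h.hy t ht)).add (h.hy1 t ht)
    refine this.congr_deriv ?_
    ring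
  · have h1 : ‖φ' t + g t * (Q t - φ t ^ 2)‖ ≤ μ * (φ t * g t).re * ‖φ t‖ := by
      refine le_trans (norm_add_le _ _) ?_
      rw [norm_mul]; exact h.hμ t ht
    have h2 : ‖φ t * y t‖ ≤ (‖φ t * y t - y1 t‖ + ‖φ t * y t + y1 t‖) / 2 := by
      have : φ t * y t = ((φ t * y t - y1 t) + (φ t * y t + y1 t)) / 2 := by ring
      calc ‖φ t * y t‖ = ‖((φ t * y t - y1 t) + (φ t * y t + y1 t)) / 2‖ := by rw [← this]
        _ ≤ _ := by
          rw [norm_div]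
          have := norm_add_le (φ t * y t - y1 t) (φ t * y t + y1 t)
          rw [Complex.norm_ofNat]
          linarith
    have h0 : 0 ≤ μ * (φ t * g t).re := by
      have := h.hμ t ht
      have h3 : 0 < ‖φ t‖ := norm_pos_iff.2 (h.hφ0 t ht)
      by_contra hc
      push Not at hc
      nlinarith [mul_pos (neg_pos.2 hc) h3, norm_nonneg (φ' t), mul_nonneg (norm_nonneg (g t)) (norm_nonneg (Q t - φ t ^ 2))]
    calc ‖(φ' t + g t * (Q t - φ t ^ 2)) * y t‖
        ≤ (μ * (φ t * g t).re * ‖φ t‖) * ‖y t‖ := by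
          rw [norm_mul]; gcongr
      _ = (μ * (φ t * g t).re) * ‖φ t * y t‖ := by rw [norm_mul]; ring
      _ ≤ (μ * (φ t * g t).re) * ((‖φ t * y t - y1 t‖ + ‖φ t * y t + y1 t‖) / 2) := by gcongr
      _ = _ := by ring

/-- derivative of the square of `a`. -/
theorem dersqa (h : PathData I y y1 g Q φ φ' μ) {t : ℝ} (ht : t ∈ I) :
    ∃ r : ℝ, HasDerivAt (fun t => ‖φ t * y t - y1 t‖ ^ 2)
      (-2 * (φ t * g t).re * ‖φ t * y t - y1 t‖ ^ 2 + r) t ∧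
      |r| ≤ μ * (φ t * g t).re * (‖φ t * y t - y1 t‖ + ‖φ t * y t + y1 t‖)
        * ‖φ t * y t - y1 t‖ := by
  obtain ⟨r, h1, h2⟩ := h.dera ht
  refine ⟨2 * (starRingEnd ℂ (φ t * y t - y1 t) * r).re, ?_, ?_⟩
  · refine (hasDerivAt_normsq h1).congr_deriv ?_
    rw [Complex.sq_norm, normSq_apply]
    simp only [mul_re, add_re, conj_re, conj_im, neg_re, neg_im, mul_im, add_im, sub_re, sub_im]
    ring
  · rw [abs_mul]
    have h3 := Complex.abs_re_le_norm (starRingEnd ℂ (φ t * y t - y1 t) * r)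
    rw [norm_mul, RCLike.norm_conj] at h3
    rw [abs_two]
    have h4 := mul_le_mul_of_nonneg_left h2 (norm_nonneg (φ t * y t - y1 t))
    linarith

theorem dersqb (h : PathData I y y1 g Q φ φ' μ) {t : ℝ} (ht : t ∈ I) :
    ∃ r : ℝ, HasDerivAt (fun t => ‖φ t * y t + y1 t‖ ^ 2)
      (2 * (φ t * g t).re * ‖φ t * y t + y1 t‖ ^ 2 + r) t ∧
      |r| ≤ μ * (φ t * g t).re * (‖φ t * y t - y1 t‖ + ‖φ t * y t + y1 t‖)
        * ‖φ t * y t + y1 t‖ := by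
  obtain ⟨r, h1, h2⟩ := h.derb ht
  refine ⟨2 * (starRingEnd ℂ (φ t * y t + y1 t) * r).re, ?_, ?_⟩
  · refine (hasDerivAt_normsq h1).congr_deriv ?_
    rw [Complex.sq_norm, normSq_apply]
    simp only [mul_re, add_re, conj_re, conj_im, mul_im, add_im]
    ring
  · rw [abs_mul]
    have h3 := Complex.abs_re_le_norm (starRingEnd ℂ (φ t * y t + y1 t) * r)
    rw [norm_mul, RCLike.norm_conj] at h3
    rw [abs_two]
    have h4 := mul_le_mul_of_nonneg_left h2 (norm_nonneg (φ t * y t + y1 t))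
    linarith

theorem alg1 {A B P μ ra rb : ℝ} (hA : 0 ≤ A) (hB : 0 ≤ B) (hP : 0 ≤ P) (hμ : μ ≤ 1 / 2)
    (hra : |ra| ≤ μ * P * (A + B) * A) (hrb : |rb| ≤ μ * P * (A + B) * B) :
    0 ≤ (2 * P * B ^ 2 + rb) - (-2 * P * A ^ 2 + ra) / 9 := by
  have h1 : μ * P * (A + B) * A ≤ 1 / 2 * P * (A + B) * A := by gcongr
  have h2 : μ * P * (A + B) * B ≤ 1 / 2 * P * (A + B) * B := by gcongr
  have h3 := (abs_le.1 (hra.trans h1)).2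
  have h4 := (abs_le.1 (hrb.trans h2)).1
  have h5 : 0 ≤ P * (2 * B ^ 2 + 2 * A ^ 2 / 9 - 1 / 2 * (A + B) * B - 1 / 2 * (A + B) * A / 9) := by
    apply mul_nonneg hP
    nlinarith [sq_nonneg (B - A / 3), sq_nonneg A, sq_nonneg B]
  nlinarith

theorem monoF (h : PathData I y y1 g Q φ φ' μ) (hI : Convex ℝ I) :
    MonotoneOn (fun t => ‖φ t * y t + y1 t‖ ^ 2 - ‖φ t * y t - y1 t‖ ^ 2 / 9) I := by
  have key : ∀ t ∈ I, ∃ d, 0 ≤ d ∧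
      HasDerivAt (fun t => ‖φ t * y t + y1 t‖ ^ 2 - ‖φ t * y t - y1 t‖ ^ 2 / 9) d t := by
    intro t ht
    obtain ⟨ra, h1, h2⟩ := h.dersqa ht
    obtain ⟨rb, h3, h4⟩ := h.dersqb ht
    exact ⟨_, alg1 (norm_nonneg _) (norm_nonneg _) (h.hpos t ht) h.hμ2 h2 h4,
      h3.sub (h1.div_const 9)⟩
  apply monotoneOn_of_deriv_nonneg hI
  · intro t ht
    obtain ⟨d, -, hd⟩ := key t ht
    exact hd.continuousAt.continuousWithinAt
  · intro t ht
    obtain ⟨d, -, hd⟩ := key t (interior_subset ht)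
    exact hd.differentiableAt.differentiableWithinAt
  · intro t ht
    obtain ⟨d, h0, hd⟩ := key t (interior_subset ht)
    rw [hd.deriv]; exact h0

theorem antiF (h : PathData I y y1 g Q φ φ' μ) (hI : Convex ℝ I) :
    AntitoneOn (fun t => ‖φ t * y t - y1 t‖ ^ 2 - ‖φ t * y t + y1 t‖ ^ 2 / 9) I := by
  have key : ∀ t ∈ I, ∃ d, d ≤ 0 ∧
      HasDerivAt (fun t => ‖φ t * y t - y1 t‖ ^ 2 - ‖φ t * y t + y1 t‖ ^ 2 / 9) d t := by
    intro t ht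
    obtain ⟨ra, h1, h2⟩ := h.dersqa ht
    obtain ⟨rb, h3, h4⟩ := h.dersqb ht
    refine ⟨_, ?_, h1.sub (h3.div_const 9)⟩
    rw [add_comm ‖φ t * y t - y1 t‖] at h2 h4
    have := alg1 (ra := -rb) (rb := -ra) (norm_nonneg _) (norm_nonneg _) (h.hpos t ht) h.hμ2
      (by rw [abs_neg]; exact h4) (by rw [abs_neg]; exact h2)
    linarith
  apply antitoneOn_of_deriv_nonpos hI
  · intro t ht
    obtain ⟨d, -, hd⟩ := key t ht
    exact hd.continuousAt.continuousWithinAt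
  · intro t ht
    obtain ⟨d, -, hd⟩ := key t (interior_subset ht)
    exact hd.differentiableAt.differentiableWithinAt
  · intro t ht
    obtain ⟨d, h0, hd⟩ := key t (interior_subset ht)
    rw [hd.deriv]; exact h0

end PathData

/-- exponential monotonicity -/
theorem exp_mono_aux {I : Set ℝ} (hI : Convex ℝ I) {f Ψ f' Ψ' : ℝ → ℝ} (c : ℝ)
    (hf : ∀ t ∈ I, HasDerivAt f (f' t) t) (hΨ : ∀ t ∈ I, HasDerivAt Ψ (Ψ' t) t)
    (h : ∀ t ∈ I, c * Ψ' t * f t ≤ f' t) {s t : ℝ} (hs : s ∈ I) (ht : t ∈ I) (hst : s ≤ t) :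
    f s * Real.exp (c * (Ψ t - Ψ s)) ≤ f t := by
  have key : ∀ t ∈ I, HasDerivAt (fun t => f t * Real.exp (-(c * Ψ t)))
      ((f' t - c * Ψ' t * f t) * Real.exp (-(c * Ψ t))) t := by
    intro t ht
    have := (hf t ht).mul (((hΨ t ht).const_mul c).neg.exp)
    refine this.congr_deriv ?_
    simp only [Pi.neg_apply]
    ring
  have mono : MonotoneOn (fun t => f t * Real.exp (-(c * Ψ t))) I := by
    apply monotoneOn_of_deriv_nonneg hI
    · intro t ht
      exact (key t ht).continuousAt.continuousWithinAt
    · intro t ht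
      exact (key t (interior_subset ht)).differentiableAt.differentiableWithinAt
    · intro t ht
      rw [(key t (interior_subset ht)).deriv]
      exact mul_nonneg (by linarith [h t (interior_subset ht)]) (Real.exp_nonneg _)
  have := mono hs ht hst
  simp only at this
  have e1 : f s * Real.exp (c * (Ψ t - Ψ s)) = f s * Real.exp (-(c * Ψ s)) * Real.exp (c * Ψ t) := by
    rw [mul_assoc, ← Real.exp_add]; ring_nf
  have e2 : f t = f t * Real.exp (-(c * Ψ t)) * Real.exp (c * Ψ t) := by
    rw [mul_assoc, ← Real.exp_add]; simp
  rw [e1, e2]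
  gcongr

theorem exp_anti_aux {I : Set ℝ} (hI : Convex ℝ I) {f Ψ f' Ψ' : ℝ → ℝ} (c : ℝ)
    (hf : ∀ t ∈ I, HasDerivAt f (f' t) t) (hΨ : ∀ t ∈ I, HasDerivAt Ψ (Ψ' t) t)
    (h : ∀ t ∈ I, f' t ≤ c * Ψ' t * f t) {s t : ℝ} (hs : s ∈ I) (ht : t ∈ I) (hst : s ≤ t) :
    f t ≤ f s * Real.exp (c * (Ψ t - Ψ s)) := by
  have := exp_mono_aux hI (f := fun t => - f t) (f' := fun t => - f' t) c
    (fun t ht => (hf t ht).neg) hΨ (fun t ht => by have := h t ht; linarith) hs ht hst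
  linarith

theorem choose_deriv {I : Set ℝ} {f : ℝ → ℝ} {p : ℝ → ℝ → Prop}
    (h : ∀ t ∈ I, ∃ d, HasDerivAt f d t ∧ p t d) :
    ∀ t ∈ I, HasDerivAt f (deriv f t) t ∧ p t (deriv f t) := by
  intro t ht
  obtain ⟨d, h1, h2⟩ := h t ht
  rw [h1.deriv]; exact ⟨h1, h2⟩

theorem sq_exp_le {A B x : ℝ} (hB : 0 ≤ B) (h : A ^ 2 * Real.exp (2 * x) ≤ B ^ 2) :
    A * Real.exp x ≤ B := by
  apply le_of_sq_le_sq _ hB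
  rw [mul_pow, ← Real.exp_nat_mul]; exact_mod_cast h

theorem le_sq_exp {A B x : ℝ} (hA : 0 ≤ A) (h : B ^ 2 ≤ A ^ 2 * Real.exp (2 * x)) :
    B ≤ A * Real.exp x := by
  apply le_of_sq_le_sq _ (by positivity)
  rw [mul_pow, ← Real.exp_nat_mul]; exact_mod_cast h

namespace PathData

variable {I : Set ℝ} {y y1 g Q φ φ' : ℝ → ℂ} {μ : ℝ}

/-- growth along a path on which the solution lies in the growing cone -/
theorem growth (h : PathData I y y1 g Q φ φ' μ) (hI : Convex ℝ I) {Ψ : ℝ → ℝ}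
    (hΨ : ∀ t ∈ I, HasDerivAt Ψ ((φ t * g t).re) t)
    {s t : ℝ} (hs : s ∈ I) (ht : t ∈ I) (hst : s ≤ t)
    (hc : ∀ t ∈ I, ‖φ t * y t - y1 t‖ ≤ ‖φ t * y t + y1 t‖ / 3) :
    ‖φ s * y s + y1 s‖ * Real.exp ((1 - μ) * (Ψ t - Ψ s)) ≤ ‖φ t * y t + y1 t‖ ∧
    ‖φ t * y t + y1 t‖ ≤ ‖φ s * y s + y1 s‖ * Real.exp ((1 + μ) * (Ψ t - Ψ s)) := by
  have key := choose_deriv (I := I) (f := fun t => ‖φ t * y t + y1 t‖ ^ 2)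
    (p := fun t d => 2 * (1 - μ) * (φ t * g t).re * ‖φ t * y t + y1 t‖ ^ 2 ≤ d ∧
      d ≤ 2 * (1 + μ) * (φ t * g t).re * ‖φ t * y t + y1 t‖ ^ 2) (by
    intro t ht
    obtain ⟨r, h1, h2⟩ := h.dersqb ht
    refine ⟨_, h1, ?_⟩
    have h0 := h.hpos t ht
    have h3 := hc t ht
    have hm := h.hμ t ht
    have hp : 0 < ‖φ t‖ := norm_pos_iff.2 (h.hφ0 t ht)
    have hm0 : 0 ≤ μ * (φ t * g t).re := by
      by_contra hc
      push Not at hc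
      nlinarith [mul_pos (neg_pos.2 hc) hp, norm_nonneg (φ' t), mul_nonneg (norm_nonneg (g t)) (norm_nonneg (Q t - φ t ^ 2))]
    set B := ‖φ t * y t + y1 t‖ with hB
    have hB0 : 0 ≤ B := norm_nonneg _
    have h5 : μ * (φ t * g t).re * (‖φ t * y t - y1 t‖ + B) * B ≤
       μ * (φ t * g t).re * (2 * B) * B := by gcongr; linarith
    have h6 := abs_le.1 (h2.trans h5)
    constructor <;> nlinarith [h6.1, h6.2])
  constructor
  · apply sq_exp_le (norm_nonneg _)
    have := exp_mono_aux hI (2 * (1 - μ)) (fun t ht => (key t ht).1) hΨ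
      (fun t ht => (key t ht).2.1) hs ht hst
    rwa [mul_assoc] at this
  · apply le_sq_exp (norm_nonneg _)
    have := exp_anti_aux hI (2 * (1 + μ)) (fun t ht => (key t ht).1) hΨ
      (fun t ht => (key t ht).2.2) hs ht hst
    rwa [mul_assoc] at this

/-- decay along a path on which the solution lies in the decaying cone -/
theorem decay (h : PathData I y y1 g Q φ φ' μ) (hI : Convex ℝ I) {Ψ : ℝ → ℝ}
    (hΨ : ∀ t ∈ I, HasDerivAt Ψ ((φ t * g t).re) t)
    {s t : ℝ} (hs : s ∈ I) (ht : t ∈ I) (hst : s ≤ t)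
    (hc : ∀ t ∈ I, ‖φ t * y t + y1 t‖ ≤ ‖φ t * y t - y1 t‖ / 3) :
    ‖φ t * y t - y1 t‖ ≤ ‖φ s * y s - y1 s‖ * Real.exp (-(1 - μ) * (Ψ t - Ψ s)) := by
  have key := choose_deriv (I := I) (f := fun t => ‖φ t * y t - y1 t‖ ^ 2)
    (p := fun t d => 
      d ≤ (2 * -(1 - μ)) * (φ t * g t).re * ‖φ t * y t - y1 t‖ ^ 2) (by
    intro t ht
    obtain ⟨r, h1, h2⟩ := h.dersqa ht
    refine ⟨_, h1, ?_⟩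
    have h0 := h.hpos t ht
    have h3 := hc t ht
    have hm := h.hμ t ht
    have hp : 0 < ‖φ t‖ := norm_pos_iff.2 (h.hφ0 t ht)
    have hm0 : 0 ≤ μ * (φ t * g t).re := by
      by_contra hc
      push Not at hc
      nlinarith [mul_pos (neg_pos.2 hc) hp, norm_nonneg (φ' t), mul_nonneg (norm_nonneg (g t)) (norm_nonneg (Q t - φ t ^ 2))]
    set B := ‖φ t * y t - y1 t‖ with hB
    have hB0 : 0 ≤ B := norm_nonneg _
    have h5 : μ * (φ t * g t).re * (B + ‖φ t * y t + y1 t‖) * B ≤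
       μ * (φ t * g t).re * (2 * B) * B := by gcongr; linarith
    have h6 := abs_le.1 (h2.trans h5)
    nlinarith [h6.1, h6.2])
  · apply le_sq_exp (norm_nonneg _)
    have := exp_anti_aux hI (2 * -(1 - μ)) (fun t ht => (key t ht).1) hΨ
      (fun t ht => (key t ht).2) hs ht hst
    rwa [mul_assoc] at this

end PathData



/-- A solution whose energy density stays bounded below cannot decay. -/
theorem no_growth {y y1 q : ℝ → ℂ} {t1 δ : ℝ} (hδ : 0 < δ)
    (hy : ∀ t, t1 ≤ t → HasDerivAt y (y1 t) t)
    (hy1 : ∀ t, t1 ≤ t → HasDerivAt y1 (q t * y t) t)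
    (hE : ∀ t, t1 ≤ t → δ ≤ ‖y1 t‖ ^ 2 + (q t).re * ‖y t‖ ^ 2)
    (hlim : Tendsto y atTop (nhds 0)) : False := by
  have hh : ∀ t, t1 ≤ t → HasDerivAt (fun t => (starRingEnd ℂ (y t) * y1 t).re)
      (‖y1 t‖ ^ 2 + (q t).re * ‖y t‖ ^ 2) t := by
    intro t ht
    have h1 := ((hy t ht).star.mul (hy1 t ht))
    have h2 := Complex.reCLM.hasFDerivAt.comp_hasDerivAt t h1
    have h3 : HasDerivAt (fun t => (starRingEnd ℂ (y t) * y1 t).re) _ t := h2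
    refine h3.congr_deriv ?_
    rw [Complex.sq_norm, Complex.sq_norm, normSq_apply, normSq_apply]
    simp
    ring
  have hhlow : ∀ t, t1 ≤ t → (starRingEnd ℂ (y t1) * y1 t1).re + δ * (t - t1) ≤
      (starRingEnd ℂ (y t) * y1 t).re := by
    intro t ht
    have m : MonotoneOn (fun t => (starRingEnd ℂ (y t) * y1 t).re - δ * t) (Ici t1) := by
      have hd : ∀ t, t1 ≤ t → HasDerivAt (fun t => (starRingEnd ℂ (y t) * y1 t).re - δ * t)
        (‖y1 t‖ ^ 2 + (q t).re * ‖y t‖ ^ 2 - δ) t := by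
        intro t ht
        have h9 : HasDerivAt (fun t => (starRingEnd ℂ (y t) * y1 t).re - δ * t) _ t :=
          (hh t ht).sub ((hasDerivAt_id t).const_mul δ)
        refine h9.congr_deriv ?_
        ring
      apply monotoneOn_of_deriv_nonneg (convex_Ici t1)
      · intro t ht
        exact (hd t ht).continuousAt.continuousWithinAt
      · intro t ht
        exact (hd t (interior_subset ht)).differentiableAt.differentiableWithinAt
      · intro t ht
        rw [(hd t (interior_subset ht)).deriv]
        linarith [hE t (interior_subset ht)]
    have := m (mem_Ici.2 le_rfl) (mem_Ici.2 ht) ht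
    simp only at this
    linarith
  -- beyond `t2` the derivative of `‖y‖²` is at least 2
  obtain ⟨t2, ht2, hbig⟩ : ∃ t2, t1 ≤ t2 ∧ ∀ t, t2 ≤ t → 1 ≤ (starRingEnd ℂ (y t) * y1 t).re := by
    set h0 := (starRingEnd ℂ (y t1) * y1 t1).re
    refine ⟨t1 + |1 - h0| / δ, by have : 0 ≤ |1 - h0| / δ := by positivity
                                  linarith, fun t ht => ?_⟩
    have h5 : t1 ≤ t := by
      have : 0 ≤ |1 - h0| / δ := by positivity
      linarith
    have h6 := hhlow t h5
    have h7 : |1 - h0| ≤ δ * (t - t1) := by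
      rw [← div_le_iff₀' hδ]; linarith
    linarith [le_abs_self (1 - h0)]
  have m : MonotoneOn (fun t => ‖y t‖ ^ 2 - 2 * t) (Ici t2) := by
    have hd : ∀ t, t2 ≤ t → HasDerivAt (fun t => ‖y t‖ ^ 2 - 2 * t)
      (2 * (starRingEnd ℂ (y t) * y1 t).re - 2) t := by
      intro t ht
      have h9 : HasDerivAt (fun t => ‖y t‖ ^ 2 - 2 * t) _ t :=
        (hasDerivAt_normsq (hy t (ht2.trans ht))).sub ((hasDerivAt_id t).const_mul (2:ℝ))
      refine h9.congr_deriv ?_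
      ring
    apply monotoneOn_of_deriv_nonneg (convex_Ici t2)
    · intro t ht
      exact (hd t ht).continuousAt.continuousWithinAt
    · intro t ht
      exact (hd t (interior_subset ht)).differentiableAt.differentiableWithinAt
    · intro t ht
      rw [(hd t (interior_subset ht)).deriv]
      linarith [hbig t (interior_subset ht)]
  have hl2 : Tendsto (fun t => ‖y t‖ ^ 2) atTop (nhds 0) := by
    have := (hlim.norm).pow 2
    simpa using this
  obtain ⟨t3, ht3⟩ := ((hl2.eventually (gt_mem_nhds (zero_lt_one))).and
    (eventually_ge_atTop (t2 + 1))).exists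
  have := m (mem_Ici.2 le_rfl) (mem_Ici.2 (by linarith [ht3.2] : t2 ≤ t3)) (by linarith [ht3.2])
  simp only at this
  nlinarith [ht3.1, ht3.2, sq_nonneg ‖y t2‖]

/-- decaying solutions lie in the decaying cone -/
theorem ray_cone {y y1 q φ φ' : ℝ → ℂ} {μ s0 C t2 : ℝ}
    (h : PathData (Ici s0) y y1 (fun _ => 1) q φ φ' μ)
    (hC : 0 < C) (hq : ∀ t, t2 ≤ t → ‖φ t‖ ^ 2 ≤ C * (q t).re)
    (hlim : Tendsto y atTop (nhds 0)) :
    ∀ t ∈ Ici s0, ‖φ t * y t + y1 t‖ ≤ ‖φ t * y t - y1 t‖ / 3 := by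
  intro t1 ht1
  by_contra hcon
  push Not at hcon
  have hF : 0 < ‖φ t1 * y t1 + y1 t1‖ ^ 2 - ‖φ t1 * y t1 - y1 t1‖ ^ 2 / 9 := by
    nlinarith [norm_nonneg (φ t1 * y t1 - y1 t1), norm_nonneg (φ t1 * y t1 + y1 t1)]
  set F := ‖φ t1 * y t1 + y1 t1‖ ^ 2 - ‖φ t1 * y t1 - y1 t1‖ ^ 2 / 9 with hFdef
  have mono := h.monoF (convex_Ici s0)
  have hM : 0 < max C 1 := by positivity
  refine no_growth (y := y) (y1 := y1) (q := q) (t1 := max t1 t2) (δ := F / (2 * max C 1))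
    (by positivity) ?_ ?_ ?_ hlim
  · intro t ht
    have := h.hy t (le_trans ht1 ((le_max_left _ _).trans ht))
    simpa using this
  · intro t ht
    have := h.hy1 t (le_trans ht1 ((le_max_left _ _).trans ht))
    simpa using this
  · intro t ht
    have e1 : t1 ≤ t := (le_max_left _ _).trans ht
    have := mono ht1 (mem_Ici.2 (le_trans ht1 e1)) e1
    simp only at this
    rw [← hFdef] at this
    have h2 : ‖φ t * y t + y1 t‖ ^ 2 ≤ 2 * (‖φ t * y t‖ ^ 2 + ‖y1 t‖ ^ 2) := by
      have := norm_add_le (φ t * y t) (y1 t)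
      have h3 : ‖φ t * y t + y1 t‖ ^ 2 ≤ (‖φ t * y t‖ + ‖y1 t‖) ^ 2 := by gcongr
      nlinarith [sq_nonneg (‖φ t * y t‖ - ‖y1 t‖)]
    have h4 : ‖φ t * y t‖ ^ 2 ≤ max C 1 * ((q t).re * ‖y t‖ ^ 2) := by
      have h5 := hq t ((le_max_right _ _).trans ht)
      have h6 : 0 ≤ (q t).re := by
        by_contra hc
        push Not at hc
        nlinarith [sq_nonneg ‖φ t‖, mul_pos hC (neg_pos.2 hc)]
      rw [norm_mul, mul_pow]
      calc ‖φ t‖ ^ 2 * ‖y t‖ ^ 2 ≤ (C * (q t).re) * ‖y t‖ ^ 2 := by gcongr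
        _ ≤ (max C 1 * (q t).re) * ‖y t‖ ^ 2 := by gcongr; exact le_max_left _ _
        _ = _ := by ring
    have h7 : ‖y1 t‖ ^ 2 ≤ max C 1 * ‖y1 t‖ ^ 2 :=
      le_mul_of_one_le_left (sq_nonneg _) (le_max_right _ _)
    rw [div_le_iff₀ (by positivity)]
    nlinarith [sq_nonneg ‖φ t * y t - y1 t‖]

/-- complex square root, and its real part -/
noncomputable def csq (z : ℂ) : ℂ := z ^ (1 / 2 : ℂ)

noncomputable def rsq (z : ℂ) : ℝ := √((‖z‖ + z.re) / 2)

theorem csq_sq (z : ℂ) : csq z ^ 2 = z := by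
  unfold csq
  rw [← Complex.cpow_nat_mul]; norm_num

theorem norm_csq_sq (z : ℂ) : ‖csq z‖ ^ 2 = ‖z‖ := by
  rw [← norm_pow, csq_sq]

theorem norm_csq (z : ℂ) : ‖csq z‖ = √‖z‖ := by
  have h : √‖z‖ = ‖csq z‖ := by
    rw [← norm_csq_sq z, Real.sqrt_sq (norm_nonneg _)]
  exact h.symm

theorem csq_re_nonneg (z : ℂ) : 0 ≤ (csq z).re := by
  unfold csq
  by_cases hz : z = 0
  · subst hz; simp
  rw [Complex.cpow_def_of_ne_zero hz, Complex.exp_re]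
  apply mul_nonneg (Real.exp_nonneg _)
  have : (Complex.log z * (1 / 2)).im = z.arg / 2 := by
    simp [Complex.log_im]; ring
  rw [this]
  apply Real.cos_nonneg_of_mem_Icc
  constructor <;> linarith [Complex.neg_pi_lt_arg z, Complex.arg_le_pi z]

theorem csq_re (z : ℂ) : (csq z).re = rsq z := by
  unfold rsq
  rw [eq_comm, Real.sqrt_eq_iff_mul_self_eq]
  · have h1 := norm_csq_sq z
    have h2 : z.re = (csq z ^ 2).re := by rw [csq_sq]
    rw [Complex.sq_norm, normSq_apply] at h1
    rw [sq, mul_re] at h2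
    linarith
  · have := (abs_le.1 (Complex.abs_re_le_norm z)).1
    linarith
  · exact csq_re_nonneg z

theorem rsq_nonneg (z : ℂ) : 0 ≤ rsq z := Real.sqrt_nonneg _

theorem rsq_sq (z : ℂ) : rsq z ^ 2 = (‖z‖ + z.re) / 2 := by
  unfold rsq
  rw [Real.sq_sqrt]
  have := (abs_le.1 (Complex.abs_re_le_norm z)).1
  linarith

theorem continuous_rsq : Continuous rsq := by
  unfold rsq
  fun_prop

theorem rsq_le_norm_csq (z : ℂ) : rsq z ≤ ‖csq z‖ := by
  rw [← csq_re]; exact (le_abs_self _).trans (Complex.abs_re_le_norm _)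

theorem sqrt_sub_le {x y : ℝ} (hy : 0 ≤ y) : √x - √y ≤ √|x - y| := by
  rw [sub_le_iff_le_add]
  apply Real.sqrt_le_iff.2
  refine ⟨by positivity, ?_⟩
  have := Real.sq_sqrt hy
  have h2 := Real.sq_sqrt (abs_nonneg (x - y))
  nlinarith [le_abs_self (x - y), mul_nonneg (Real.sqrt_nonneg (|x - y|)) (Real.sqrt_nonneg y)]

theorem rsq_sub_le (z w : ℂ) : rsq z ≤ rsq w + √‖z - w‖ := by
  have h1 : rsq z - rsq w ≤ √‖z - w‖ := by
    refine (sqrt_sub_le ?_).trans ?_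
    · have := (abs_le.1 (Complex.abs_re_le_norm w)).1
      linarith
    · apply Real.sqrt_le_sqrt
      have h2 := abs_norm_sub_norm_le z w
      have h3 := Complex.abs_re_le_norm (z - w)
      rw [sub_re] at h3
      rw [abs_le] at *
      constructor <;> linarith [h2.1, h2.2, h3.1, h3.2]
  linarith

theorem hasDerivAt_csq {f : ℝ → ℂ} {f' : ℂ} {t : ℝ} (hf : HasDerivAt f f' t)
    (h : f t ∈ slitPlane) : HasDerivAt (fun t => csq (f t)) (f' / (2 * csq (f t))) t := by
  have h0 : f t ≠ 0 := slitPlane_ne_zero h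
  have h1 : csq (f t) ≠ 0 := by
    intro hc
    apply h0; rw [← csq_sq (f t), hc]; simp
  have h2 : HasDerivAt (fun z : ℂ => csq z) ((1 / 2 : ℂ) * (f t) ^ ((1 / 2 : ℂ) - 1) * 1) (f t) := by
    unfold csq
    exact (hasDerivAt_id (f t)).cpow_const h
  have h3 := h2.comp_of_eq t hf rfl
  refine h3.congr_deriv ?_
  rw [Complex.cpow_sub _ _ h0, Complex.cpow_one]
  have h4 : f t ^ (1 / 2 : ℂ) = csq (f t) := rfl
  rw [h4]
  nth_rewrite 2 [← csq_sq (f t)]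
  field_simp

/-- the leading exponent along a ray -/
noncomputable def Phi (m : ℕ) (A : ℂ) (L : ℝ) : ℝ := ∫ t in (0 : ℝ)..L, rsq ((t : ℂ) ^ m + A)

theorem cont_rsq_ray (m : ℕ) (A : ℂ) : Continuous (fun t : ℝ => rsq ((t : ℂ) ^ m + A)) :=
  continuous_rsq.comp (by fun_prop)

theorem hasDerivAt_Phi (m : ℕ) (A : ℂ) (L : ℝ) :
    HasDerivAt (fun L => Phi m A L) (rsq ((L : ℂ) ^ m + A)) L := by
  unfold Phi
  exact intervalIntegral.integral_hasDerivAt_right ((cont_rsq_ray m A).intervalIntegrable _ _)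
    ((cont_rsq_ray m A).stronglyMeasurableAtFilter _ _) (cont_rsq_ray m A).continuousAt

theorem Phi_zero (m : ℕ) (A : ℂ) : Phi m A 0 = 0 := by simp [Phi]

theorem norm_ray_le {m : ℕ} {A : ℂ} (hA : ‖A‖ ≤ 2) {t : ℝ} (ht : 0 ≤ t) :
    ‖(t : ℂ) ^ m + A‖ ≤ t ^ m + 2 := by
  refine (norm_add_le _ _).trans ?_
  rw [norm_pow, Complex.norm_real, Real.norm_of_nonneg ht]
  linarith

theorem re_ray {m : ℕ} {A : ℂ} {t : ℝ} : ((t : ℂ) ^ m + A).re = t ^ m + A.re := by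
  rw [add_re, ← ofReal_pow, ofReal_re]

theorem Phi_nonneg (m : ℕ) (A : ℂ) {L : ℝ} (hL : 0 ≤ L) : 0 ≤ Phi m A L :=
  intervalIntegral.integral_nonneg hL (fun _ _ => rsq_nonneg _)

theorem Phi_le {m : ℕ} {A : ℂ} (hA : ‖A‖ ≤ 2) {L : ℝ} (hL : 0 ≤ L) :
    Phi m A L ≤ L * (L ^ m + 2) := by
  have h := intervalIntegral.integral_mono_on (μ := volume) hL ((cont_rsq_ray m A).intervalIntegrable 0 L)
    (_root_.intervalIntegrable_const (c := L ^ m + 2)) (fun t ht => ?_)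
  · unfold Phi
    refine h.trans ?_
    simp
    linarith
  · have h1 := norm_ray_le (m := m) hA ht.1
    have h2 : t ^ m ≤ L ^ m := by gcongr; exacts [ht.1, ht.2]
    have h3 : 0 ≤ L ^ m := by positivity
    refine (rsq_le_norm_csq _).trans ?_
    rw [norm_csq]
    apply Real.sqrt_le_iff.2
    constructor
    · positivity
    · nlinarith

theorem Phi_perturb (m : ℕ) (A B : ℂ) {L : ℝ} (hL : 0 ≤ L) :
    Phi m B L ≤ Phi m A L + L * √‖B - A‖ := by
  have h := intervalIntegral.integral_mono_on (μ := volume) hL ((cont_rsq_ray m B).intervalIntegrable 0 L)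
    (((cont_rsq_ray m A).intervalIntegrable 0 L).add
      (_root_.intervalIntegrable_const (c := √‖B - A‖))) (fun t ht => ?_)
  · unfold Phi
    refine h.trans ?_
    rw [intervalIntegral.integral_add ((cont_rsq_ray m A).intervalIntegrable 0 L)
      (_root_.intervalIntegrable_const)]
    simp
  · have := rsq_sub_le ((t : ℂ) ^ m + B) ((t : ℂ) ^ m + A)
    simpa using this



/-- a decaying solution of the rescaled equation along a ray -/
structure RayEq (m : ℕ) (K ν : ℝ) (A : ℂ) (y y1 ρ : ℝ → ℂ) : Prop where
  hy : ∀ t, 0 ≤ t → HasDerivAt y (y1 t) t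
  hy1 : ∀ t : ℝ, 0 ≤ t → HasDerivAt y1 ((K : ℂ) ^ 2 * ((t : ℂ) ^ m + A + ρ t) * y t) t
  hρ : ∀ t, 0 ≤ t → ‖ρ t‖ ≤ ν * (1 + t ^ (m - 1))
  hnt : ∀ t, 0 ≤ t → y t = 0 → y1 t ≠ 0
  hlim : Tendsto y atTop (nhds 0)

theorem cone_ne {φ y y1 : ℂ} (h : ‖φ * y + y1‖ ≤ ‖φ * y - y1‖ / 3) (h0 : y = 0 → y1 ≠ 0) :
    y ≠ 0 := by
  intro hy
  apply h0 hy
  rw [hy] at h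
  simp at h
  have := norm_nonneg y1
  exact norm_eq_zero.1 (by linarith)

theorem cone_bounds {φ y y1 : ℂ} (h : ‖φ * y + y1‖ ≤ ‖φ * y - y1‖ / 3) :
    ‖φ * y - y1‖ ≤ 3 * ‖φ * y‖ ∧ ‖φ * y‖ ≤ 2 / 3 * ‖φ * y - y1‖ ∧ ‖y1‖ ≤ 2 * ‖φ * y‖ := by
  have e1 : φ * y + φ * y = (φ * y - y1) + (φ * y + y1) := by ring
  have e2 : y1 + y1 = (φ * y + y1) - (φ * y - y1) := by ring
  have n1 : ‖φ * y + φ * y‖ = 2 * ‖φ * y‖ := by rw [← two_mul, norm_mul]; simp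
  have n2 : ‖y1 + y1‖ = 2 * ‖y1‖ := by rw [← two_mul, norm_mul]; simp
  have t1 := norm_add_le (φ * y - y1) (φ * y + y1)
  have t2 := norm_sub_le (φ * y + y1) (φ * y - y1)
  have t3 := norm_sub_norm_le (φ * y - y1) (-(φ * y + y1))
  rw [sub_neg_eq_add, norm_neg] at t3
  rw [← e1, n1] at t1
  rw [← e1, n1] at t3
  rw [← e2, n2] at t2
  refine ⟨by linarith, by linarith, by linarith⟩

theorem pow_pred_mul {m : ℕ} (hm : 3 ≤ m) (t : ℝ) : t ^ m = t * t ^ (m - 1) := by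
  rw [← pow_succ']; congr 1; omega

/-- far away on the ray the real comparison function works -/
theorem RayL {m : ℕ} (hm : 3 ≤ m) {K ν : ℝ} {A : ℂ} {y y1 ρ : ℝ → ℂ} (h : RayEq m K ν A y y1 ρ)
    (hK : 4 * m ≤ K) (hν : ν ≤ 1) (hA : ‖A‖ ≤ 2) {L : ℝ} (hL : 16 ≤ L) :
    ‖((K * √(L ^ m) : ℝ) : ℂ) * y L + y1 L‖ ≤ ‖((K * √(L ^ m) : ℝ) : ℂ) * y L - y1 L‖ / 3 := by
  have hm' : (3 : ℝ) ≤ m := by exact_mod_cast hm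
  have hK0 : 0 < K := by linarith
  have hρ' : ∀ t : ℝ, 16 ≤ t → ‖A + ρ t‖ ≤ t ^ m / 4 := by
    intro t ht
    have h1 := h.hρ t (by linarith)
    have h2 : 1 ≤ t ^ (m - 1) := one_le_pow₀ (by linarith)
    have h3 := pow_pred_mul hm t
    have h4 : ν * (1 + t ^ (m - 1)) ≤ 1 * (1 + t ^ (m - 1)) := by gcongr
    have h5 := norm_add_le A (ρ t)
    nlinarith
  have hφ : ∀ t : ℝ, 16 ≤ t → HasDerivAt (fun t : ℝ => ((K * √(t ^ m) : ℝ) : ℂ))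
      ((K * ((m * t ^ (m - 1)) / (2 * √(t ^ m))) : ℝ) : ℂ) t := by
    intro t ht
    apply HasDerivAt.ofReal_comp
    apply HasDerivAt.const_mul
    apply (hasDerivAt_pow m t).sqrt
    positivity
  have PD : PathData (Ici 16) y y1 (fun _ => 1) (fun t => (K : ℂ) ^ 2 * ((t : ℂ) ^ m + A + ρ t))
      (fun t : ℝ => ((K * √(t ^ m) : ℝ) : ℂ))
      (fun t : ℝ => ((K * ((m * t ^ (m - 1)) / (2 * √(t ^ m))) : ℝ) : ℂ)) (1 / 2) := by
    have hsq : ∀ t : ℝ, 16 ≤ t → 1 ≤ √(t ^ m) := by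
      intro t ht
      rw [Real.one_le_sqrt]; exact one_le_pow₀ (by linarith)
    constructor
    · intro t ht
      simpa using h.hy t (by have : (16:ℝ) ≤ t := ht
                             linarith)
    · intro t ht
      have : (16:ℝ) ≤ t := ht
      rw [one_mul]
      exact h.hy1 t (by linarith)
    · intro t ht; exact hφ t ht
    · intro t ht
      have := hsq t ht
      have h2 : 0 < K * √(t ^ m) := by positivity
      exact_mod_cast h2.ne'
    · intro t ht
      rw [mul_one, ofReal_re]; positivity
    · intro t ht
      have ht' : (16 : ℝ) ≤ t := ht
      have h1 := hsq t ht
      have h2 := hρ' t ht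
      have h3 : (K : ℂ) ^ 2 * ((t : ℂ) ^ m + A + ρ t) - (((K * √(t ^ m) : ℝ) : ℂ)) ^ 2
         = (K : ℂ) ^ 2 * (A + ρ t) := by
        have : (√(t ^ m) : ℂ) ^ 2 = (t : ℂ) ^ m := by
          rw [← ofReal_pow, Real.sq_sqrt (by positivity)]; simp
        push_cast
        rw [mul_pow, this]; ring
      rw [h3, mul_one, ofReal_re, norm_one, one_mul, norm_mul, norm_pow, Complex.norm_real,
        Complex.norm_real, Complex.norm_real, Real.norm_of_nonneg hK0.le,
        Real.norm_of_nonneg (by positivity), Real.norm_of_nonneg (by positivity)]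
      have h4 : (m * t ^ (m - 1)) / (2 * √(t ^ m)) ≤ m * t ^ (m - 1) / 2 := by
        gcongr; linarith
      have h5 := pow_pred_mul hm t
      have h6 : (K * √(t ^ m)) * (K * √(t ^ m)) = K ^ 2 * t ^ m := by
        have := Real.mul_self_sqrt (show 0 ≤ t ^ m by positivity)
        calc _ = K ^ 2 * (√(t ^ m) * √(t ^ m)) := by ring
          _ = _ := by rw [this]
      rw [mul_assoc (1 / 2 : ℝ), h6]
      have h7 : K * (m * t ^ (m - 1) / 2) ≤ K ^ 2 * t ^ m / 128 := by
        have : (m : ℝ) * t ^ (m - 1) ≤ K / 4 * t ^ (m - 1) := by gcongr; linarith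
        have h9 : 16 * t ^ (m - 1) ≤ t ^ m := by rw [h5]; gcongr
        calc _ ≤ K * (K / 4 * t ^ (m - 1) / 2) := by gcongr
          _ = K ^ 2 / 128 * (16 * t ^ (m - 1)) := by ring
          _ ≤ K ^ 2 / 128 * t ^ m := by gcongr
          _ = _ := by ring
      have h8 : K ^ 2 * ‖A + ρ t‖ ≤ K ^ 2 * (t ^ m / 4) := by gcongr
      have h10 : K * ((m * t ^ (m - 1)) / (2 * √(t ^ m))) ≤ K * (m * t ^ (m - 1) / 2) := by gcongr
      have : 0 ≤ K ^ 2 * t ^ m := by positivity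
      linarith
    · norm_num
  refine ray_cone PD (C := 2) (t2 := 16) (by norm_num) ?_ h.hlim L hL
  intro t ht
  have h2 := hρ' t ht
  have e1 : ((K : ℂ) ^ 2 * ((t : ℂ) ^ m + A + ρ t)).re = K ^ 2 * (t ^ m + (A + ρ t).re) := by
    rw [← ofReal_pow, re_ofReal_mul, ← ofReal_pow, add_assoc, add_re, ofReal_re]
  rw [e1, Complex.norm_real, Real.norm_of_nonneg (by positivity), mul_pow,
    Real.sq_sqrt (by positivity)]
  have h3 := (abs_le.1 ((Complex.abs_re_le_norm (A + ρ t)).trans h2)).1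
  have : 0 ≤ t ^ m := by positivity
  have : K ^ 2 * t ^ m ≤ K ^ 2 * (2 * (t ^ m + (A + ρ t).re)) := by gcongr; linarith
  linarith

theorem clean_low {A : ℂ} {c T : ℝ} (hc : c ≤ ‖A‖ + A.re) (hA : ‖A‖ ≤ 2) (hc4 : c ≤ 4)
     (hT : 0 ≤ T) : c ≤ ‖(T : ℂ) + A‖ + ((T : ℂ) + A).re ∧
      c / 10 * (1 + T) ≤ rsq ((T : ℂ) + A) ^ 2 := by
  have h1 : c ≤ ‖(T : ℂ) + A‖ + ((T : ℂ) + A).re := by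
    have := norm_sub_norm_le A (-(T : ℂ))
    rw [sub_neg_eq_add, norm_neg, Complex.norm_real, Real.norm_of_nonneg hT, add_comm A] at this
    rw [add_re, ofReal_re]; linarith
  refine ⟨h1, ?_⟩
  rw [rsq_sq]
  have h2 := (abs_le.1 (Complex.abs_re_le_norm ((T : ℂ) + A))).2
  have h3 := (abs_le.1 (Complex.abs_re_le_norm A)).1
  rw [add_re, ofReal_re] at *
  by_cases h : T ≤ 4
  · by_cases h0 : 0 ≤ c
    · nlinarith
    · nlinarith [norm_nonneg A, (abs_le.1 (Complex.abs_re_le_norm A)).1, norm_nonneg ((T : ℂ) + A), (abs_le.1 (Complex.abs_re_le_norm ((T : ℂ) + A))).1, add_re (T : ℂ) A, ofReal_re T]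
  · push Not at h
    nlinarith

theorem slit_of_clean {z : ℂ} (h : 0 < ‖z‖ + z.re) : z ∈ slitPlane := by
  rw [mem_slitPlane_iff]
  by_contra hc
  push Not at hc
  have : z = (z.re : ℂ) := by apply Complex.ext <;> simp [hc.2]
  rw [this, Complex.norm_real, ofReal_re, Real.norm_of_nonpos hc.1] at h
  linarith

theorem Ray0_aux {m : ℕ} (hm : 3 ≤ m) {K ν : ℝ} {A : ℂ} {y y1 ρ : ℝ → ℂ} (h : RayEq m K ν A y y1 ρ)
    (hK : 0 < K) (hν : ν ≤ 1) (hA : ‖A‖ ≤ 2) {c μ : ℝ} (hc0 : 0 < c) (hc : c ≤ ‖A‖ + A.re)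
    (hμ2 : μ ≤ 1 / 2) (hμ0 : 0 ≤ μ) (hμ : m / (2 * √(c / 2) * K) + 2 * ν ≤ μ * (c / 10)) :
    y 0 ≠ 0 ∧ ∀ L, 0 ≤ L → ‖y L‖ * Real.exp ((1 - μ) * (K * Phi m A L)) ≤ 6 / √c * ‖y 0‖ := by
  have hm' : (3 : ℝ) ≤ m := by exact_mod_cast hm
  have hc4 : c ≤ 4 := by
    have := (abs_le.1 (Complex.abs_re_le_norm A)).2
    linarith
  have low : ∀ t : ℝ, 0 ≤ t → c ≤ ‖(t : ℂ) ^ m + A‖ + ((t : ℂ) ^ m + A).re ∧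
      c / 10 * (1 + t ^ m) ≤ rsq ((t : ℂ) ^ m + A) ^ 2 := by
    intro t ht
    have := clean_low hc hA hc4 (show 0 ≤ t ^ m by positivity)
    rwa [ofReal_pow] at this
  have hR : ∀ t : ℝ, 0 ≤ t → √(c / 2) ≤ rsq ((t : ℂ) ^ m + A) := by
    intro t ht
    unfold rsq
    apply Real.sqrt_le_sqrt
    linarith [(low t ht).1]
  have hc2 : 0 < √(c / 2) := Real.sqrt_pos.2 (by linarith)
  have slit : ∀ t : ℝ, 0 ≤ t → (t : ℂ) ^ m + A ∈ slitPlane := fun t ht =>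
    slit_of_clean (by linarith [(low t ht).1])
  have PD : PathData (Ici 0) y y1 (fun _ => 1) (fun t => (K : ℂ) ^ 2 * ((t : ℂ) ^ m + A + ρ t))
      (fun t : ℝ => (K : ℂ) * csq ((t : ℂ) ^ m + A))
      (fun t : ℝ => (K : ℂ) * ((m : ℂ) * (t : ℂ) ^ (m - 1) / (2 * csq ((t : ℂ) ^ m + A)))) μ := by
    constructor
    · intro t ht
      simpa using h.hy t ht
    · intro t ht
      rw [one_mul]
      exact h.hy1 t ht
    · intro t ht
      apply HasDerivAt.const_mul
      refine hasDerivAt_csq (f := fun t : ℝ => (t : ℂ) ^ m + A) ?_ (slit t ht)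
      exact ((hasDerivAt_pow m (t : ℂ)).comp_ofReal).add_const A
    · intro t ht
      apply mul_ne_zero (by exact_mod_cast hK.ne')
      intro h0
      have := hR t ht
      rw [← csq_re, h0, zero_re] at this
      linarith
    · intro t ht
      rw [mul_one, re_ofReal_mul, csq_re]
      exact mul_nonneg hK.le (rsq_nonneg _)
    · intro t ht
      have ht' : (0 : ℝ) ≤ t := ht
      have h1 := low t ht
      have h2 := hR t ht
      have h3 := rsq_le_norm_csq ((t : ℂ) ^ m + A)
      have h4 := h.hρ t ht
      have h5 : (K : ℂ) ^ 2 * ((t : ℂ) ^ m + A + ρ t) - ((K : ℂ) * csq ((t : ℂ) ^ m + A)) ^ 2 =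
        (K : ℂ) ^ 2 * ρ t := by rw [mul_pow, csq_sq]; ring
      have h6 : t ^ (m - 1) ≤ 1 + t ^ m := by
        have := pow_pred_mul hm t
        by_cases h : t ≤ 1
        · have := pow_le_one₀ (n := m - 1) ht' h
          have : 0 ≤ t ^ m := by positivity
          linarith
        · push Not at h
          have : 0 ≤ t ^ (m - 1) := by positivity
          nlinarith
      have hν0 : 0 ≤ ν := by
        have := h.hρ 0 le_rfl
        have h9 : (0 : ℝ) ^ (m - 1) = 0 := by apply zero_pow; omega
        rw [h9] at this
        linarith [norm_nonneg (ρ 0)]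
      rw [h5]
      simp only [mul_one, re_ofReal_mul, csq_re, norm_one, one_mul, norm_mul, norm_pow, norm_div,
        Complex.norm_real, Real.norm_of_nonneg hK.le, Real.norm_of_nonneg ht', Complex.norm_natCast,
        Complex.norm_ofNat]
      set R := rsq ((t : ℂ) ^ m + A)
      set B := ‖csq ((t : ℂ) ^ m + A)‖
      have h7 : m * t ^ (m - 1) / (2 * B) ≤ m * (1 + t ^ m) / (2 * √(c / 2)) := by
        gcongr; linarith
      have h8 : ‖ρ t‖ ≤ ν * (2 * (1 + t ^ m)) := by
        refine h4.trans ?_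
        have : 0 ≤ t ^ m := by positivity
        gcongr; linarith
      have hpos : 0 ≤ 1 + t ^ m := by positivity
      have h10 : K * (m * (1 + t ^ m) / (2 * √(c / 2))) + K ^ 2 * (ν * (2 * (1 + t ^ m))) =
         K ^ 2 * (1 + t ^ m) * (m / (2 * √(c / 2) * K) + 2 * ν) := by
        field_simp
      calc _ ≤ K * (m * (1 + t ^ m) / (2 * √(c / 2))) + K ^ 2 * (ν * (2 * (1 + t ^ m))) := by gcongr
        _ = K ^ 2 * (1 + t ^ m) * (m / (2 * √(c / 2) * K) + 2 * ν) := h10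
        _ ≤ K ^ 2 * (1 + t ^ m) * (μ * (c / 10)) := by gcongr
        _ = K ^ 2 * μ * (c / 10 * (1 + t ^ m)) := by ring
        _ ≤ K ^ 2 * μ * R ^ 2 := by gcongr; exact h1.2
        _ = K ^ 2 * μ * R * R := by ring
        _ ≤ K ^ 2 * μ * R * B := by
          have hR0 : 0 ≤ R := rsq_nonneg _
          gcongr
        _ = _ := by ring
    · exact hμ2
  have cone := ray_cone PD (C := 4) (t2 := 16) (by norm_num) (by
    intro t ht
    have ht0 : 0 ≤ t := by linarith
    have h1 := h.hρ t ht0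
    have h2 : 1 ≤ t ^ (m - 1) := one_le_pow₀ (by linarith)
    have h3 := pow_pred_mul hm t
    have h4 : ν * (1 + t ^ (m - 1)) ≤ 1 * (1 + t ^ (m - 1)) := by gcongr
    have e1 : ((K : ℂ) ^ 2 * ((t : ℂ) ^ m + A + ρ t)).re = K ^ 2 * (t ^ m + A.re + (ρ t).re) := by
      rw [← ofReal_pow, re_ofReal_mul, ← ofReal_pow, add_re, add_re, ofReal_re]
    rw [e1, norm_mul, mul_pow, norm_csq_sq, Complex.norm_real, Real.norm_of_nonneg hK.le]
    have h5 := norm_ray_le (m := m) hA ht0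
    have h6 := (abs_le.1 (Complex.abs_re_le_norm A)).1
    have h7 := (abs_le.1 (Complex.abs_re_le_norm (ρ t))).1
    have h8 : 16 * t ^ (m - 1) ≤ t ^ m := by rw [h3]; gcongr
    calc K ^ 2 * ‖(t : ℂ) ^ m + A‖ ≤ K ^ 2 * (t ^ m + 2) := by gcongr
      _ ≤ K ^ 2 * (4 * (t ^ m + A.re + (ρ t).re)) := by
        gcongr
        linarith
      _ = _ := by ring) h.hlim
  refine ⟨cone_ne (cone 0 (mem_Ici.2 le_rfl)) (h.hnt 0 le_rfl), fun L hL => ?_⟩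
  have dec := PD.decay (convex_Ici 0) (Ψ := fun t => K * Phi m A t) (by
    intro t ht
    rw [mul_one, re_ofReal_mul, csq_re]
    exact (hasDerivAt_Phi m A t).const_mul K) (mem_Ici.2 le_rfl) (mem_Ici.2 hL) hL cone
  have b0 := (cone_bounds (cone 0 (mem_Ici.2 le_rfl))).1
  have bL := (cone_bounds (cone L hL)).2.1
  simp only [Phi_zero, mul_zero, sub_zero] at dec
  rw [norm_mul, norm_mul, Complex.norm_real, Real.norm_of_nonneg hK.le] at b0 bL
  have n0 : ‖csq (((0 : ℝ) : ℂ) ^ m + A)‖ ≤ √2 := by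
    rw [norm_csq]
    apply Real.sqrt_le_sqrt
    have := norm_ray_le (m := m) hA (le_refl (0 : ℝ))
    rw [zero_pow (by omega)] at this
    linarith
  have nL : √(c / 2) ≤ ‖csq ((L : ℂ) ^ m + A)‖ := (hR L hL).trans (rsq_le_norm_csq _)
  set aL := ‖(K : ℂ) * csq ((L : ℂ) ^ m + A) * y L - y1 L‖
  set a0 := ‖(K : ℂ) * csq (((0 : ℝ) : ℂ) ^ m + A) * y 0 - y1 0‖
  have s1 : K * √(c / 2) * ‖y L‖ ≤ aL := by
    calc _ ≤ K * ‖csq ((L : ℂ) ^ m + A)‖ * ‖y L‖ := by gcongr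
      _ ≤ 2 / 3 * aL := bL
      _ ≤ aL := by have : 0 ≤ aL := norm_nonneg _
                   linarith
  have s2 : a0 ≤ 3 * (K * √2 * ‖y 0‖) := by
    refine b0.trans ?_
    gcongr
  have s3 : K * √(c / 2) * ‖y L‖ ≤ 3 * (K * √2 * ‖y 0‖) * Real.exp (-(1 - μ) * (K * Phi m A L)) := by
    refine s1.trans (dec.trans ?_)
    gcongr
  have s4 : √(c / 2) * √2 = √c := by
    rw [← Real.sqrt_mul (by linarith)]; congr 1; ring
  have s5 : √2 * √2 = (2:ℝ) := Real.mul_self_sqrt (by norm_num)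
  have hcs : 0 < √c := Real.sqrt_pos.2 hc0
  have e0 : Real.exp (-(1 - μ) * (K * Phi m A L)) * Real.exp ((1 - μ) * (K * Phi m A L)) = 1 := by
    rw [← Real.exp_add, neg_mul, neg_add_cancel, Real.exp_zero]
  rw [div_mul_eq_mul_div, le_div_iff₀ hcs]
  have s6 : K * (‖y L‖ * √c) ≤ K * (6 * ‖y 0‖ * Real.exp (-(1 - μ) * (K * Phi m A L))) := by
    have := mul_le_mul_of_nonneg_right s3 (Real.sqrt_nonneg 2)
    calc K * (‖y L‖ * √c) = K * √(c / 2) * ‖y L‖ * √2 := by rw [← s4]; ring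
      _ ≤ _ := this
      _ = K * (3 * (√2 * √2) * ‖y 0‖ * Real.exp (-(1 - μ) * (K * Phi m A L))) := by ring
      _ = _ := by rw [s5]; ring
  have s7 := le_of_mul_le_mul_left s6 hK
  have s8 := mul_le_mul_of_nonneg_right s7 (Real.exp_nonneg ((1 - μ) * (K * Phi m A L)))
  calc _ = ‖y L‖ * √c * Real.exp ((1 - μ) * (K * Phi m A L)) := by ring
    _ ≤ _ := s8
    _ = 6 * ‖y 0‖ * (Real.exp (-(1 - μ) * (K * Phi m A L)) * Real.exp ((1 - μ) * (K * Phi m A L))) := by ring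
    _ = _ := by rw [e0, mul_one]



theorem exists_exp_ge (C : ℝ) {ε : ℝ} (hε : 0 < ε) :
    ∃ K0 : ℝ, 0 < K0 ∧ ∀ K, K0 ≤ K → C ≤ Real.exp (K * ε) := by
  refine ⟨max (C / ε) 1, by positivity, fun K hK => ?_⟩
  have h1 : C / ε ≤ K := (le_max_left _ _).trans hK
  rw [div_le_iff₀ hε] at h1
  linarith [Real.add_one_le_exp (K * ε)]

theorem Ray0 {m : ℕ} (hm : 3 ≤ m) {c ε L : ℝ} (hc0 : 0 < c) (hε : 0 < ε) (hL : 0 ≤ L) :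
    ∃ K0 ν0 : ℝ, 0 < K0 ∧ 0 < ν0 ∧ ∀ (K ν : ℝ) (A : ℂ) (y y1 ρ : ℝ → ℂ), RayEq m K ν A y y1 ρ →
      K0 ≤ K → ν ≤ ν0 → ‖A‖ ≤ 2 → c ≤ ‖A‖ + A.re →
      y 0 ≠ 0 ∧ Real.exp (K * (Phi m A L - ε)) * ‖y L‖ ≤ ‖y 0‖ := by
  set M := L * (L ^ m + 2) + 1 with hM
  have hM0 : 0 < M := by positivity
  obtain ⟨K1, hK1, hK1'⟩ := exists_exp_ge (6 / √c) (half_pos hε)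
  set μ := min (1 / 2) (ε / 2 / M) with hμdef
  have hμ0 : 0 < μ := by positivity
  have hc2 : 0 < √(c / 2) := Real.sqrt_pos.2 (by linarith)
  have hm' : (3 : ℝ) ≤ m := by exact_mod_cast hm
  refine ⟨max K1 (m / (2 * √(c / 2)) / (μ * (c / 20))), min 1 (μ * (c / 40)), by positivity,
    by positivity, ?_⟩
  intro K ν A y y1 ρ h hK hν hA hcA
  have hKp : 0 < K := lt_of_lt_of_le hK1 ((le_max_left _ _).trans hK)
  have hcond : m / (2 * √(c / 2) * K) + 2 * ν ≤ μ * (c / 10) := by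
    have h1 : m / (2 * √(c / 2)) / (μ * (c / 20)) ≤ K := (le_max_right _ _).trans hK
    have h2 : ν ≤ μ * (c / 40) := hν.trans (min_le_right _ _)
    rw [div_le_iff₀ (by positivity)] at h1
    have h3 : m / (2 * √(c / 2) * K) ≤ μ * (c / 20) := by
      rw [← div_div, div_le_iff₀ hKp]; linarith
    linarith
  obtain ⟨h0, hh⟩ := Ray0_aux hm h hKp (hν.trans (min_le_left _ _)) hA hc0 hcA (min_le_left _ _)
    hμ0.le hcond
  refine ⟨h0, ?_⟩
  have h1 := hh L hL
  have h2 : 6 / √c ≤ Real.exp (K * (ε / 2)) := hK1' K ((le_max_left _ _).trans hK)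
  have h3 : ‖y L‖ * Real.exp ((1 - μ) * (K * Phi m A L)) ≤ Real.exp (K * (ε / 2)) * ‖y 0‖ :=
    h1.trans (by gcongr)
  have h4 : μ * Phi m A L ≤ ε / 2 := by
    have e1 := Phi_le (m := m) hA hL
    have e2 := Phi_nonneg m A hL
    have e3 : μ ≤ ε / 2 / M := min_le_right _ _
    calc μ * Phi m A L ≤ (ε / 2 / M) * M := by
          apply mul_le_mul e3 (by linarith) e2 (by positivity)
      _ = ε / 2 := by field_simp
  have h5 : Real.exp (K * (Phi m A L - ε)) ≤
      Real.exp ((1 - μ) * (K * Phi m A L)) * Real.exp (-(K * (ε / 2))) := by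
    rw [← Real.exp_add]
    apply Real.exp_le_exp.2
    nlinarith
  calc Real.exp (K * (Phi m A L - ε)) * ‖y L‖
      ≤ Real.exp ((1 - μ) * (K * Phi m A L)) * Real.exp (-(K * (ε / 2))) * ‖y L‖ := by gcongr
    _ = (‖y L‖ * Real.exp ((1 - μ) * (K * Phi m A L))) * Real.exp (-(K * (ε / 2))) := by ring
    _ ≤ (Real.exp (K * (ε / 2)) * ‖y 0‖) * Real.exp (-(K * (ε / 2))) := by gcongr
    _ = (Real.exp (K * (ε / 2)) * Real.exp (-(K * (ε / 2)))) * ‖y 0‖ := by ring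
    _ = _ := by rw [← Real.exp_add]; simp

theorem energy_low {p y1 φ φd δ y : ℂ} {e : ℝ} (hp : p = φ * y) (he1 : ‖φd‖ ≤ e * ‖φ‖)
    (he2 : ‖δ‖ ≤ 2 * e * ‖φ‖) (hφ : 0 ≤ φ.re) (he : 0 ≤ e) :
    -2 * (φ.re + 2 * e) * (‖p‖ ^ 2 + ‖y1‖ ^ 2) ≤
      2 * (starRingEnd ℂ p * (φd * y + φ * y1)).re + 2 * (starRingEnd ℂ y1 * ((φ ^ 2 + δ) * y)).re := by
  have e1 : (starRingEnd ℂ p * (φd * y + φ * y1)).re + (starRingEnd ℂ y1 * ((φ ^ 2 + δ) * y)).re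
     = (starRingEnd ℂ p * (φd * y)).re + (starRingEnd ℂ y1 * (δ * y)).re +
       φ.re * (2 * (starRingEnd ℂ p * y1).re) := by
    have : starRingEnd ℂ y1 * ((φ ^ 2 + δ) * y) = φ * starRingEnd ℂ (starRingEnd ℂ p * y1) +
        starRingEnd ℂ y1 * (δ * y) := by
      rw [hp]; simp only [map_mul, conj_conj]; ring
    rw [this]
    have h2 : starRingEnd ℂ p * (φd * y + φ * y1) = starRingEnd ℂ p * (φd * y) + φ * (starRingEnd ℂ p * y1) := by ring
    rw [h2]
    simp only [add_re, mul_re φ, conj_re, conj_im]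
    ring
  have n1 := (abs_le.1 (Complex.abs_re_le_norm (starRingEnd ℂ p * (φd * y)))).1
  have n2 := (abs_le.1 (Complex.abs_re_le_norm (starRingEnd ℂ y1 * (δ * y)))).1
  have n3 := (abs_le.1 (Complex.abs_re_le_norm (starRingEnd ℂ p * y1))).1
  rw [norm_mul, RCLike.norm_conj] at n1 n2 n3
  have n4 : ‖φd * y‖ ≤ e * ‖p‖ := by
    rw [hp, norm_mul, norm_mul, ← mul_assoc]; gcongr
  have n5 : ‖δ * y‖ ≤ 2 * e * ‖p‖ := by
    rw [hp, norm_mul, norm_mul, ← mul_assoc]; gcongr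
  have n6 : ‖p‖ * ‖φd * y‖ ≤ ‖p‖ * (e * ‖p‖) := by gcongr
  have n7 : ‖y1‖ * ‖δ * y‖ ≤ ‖y1‖ * (2 * e * ‖p‖) := by gcongr
  have q3 : -φ.re * (‖p‖ ^ 2 + ‖y1‖ ^ 2) ≤ φ.re * (2 * (starRingEnd ℂ p * y1).re) := by
    rw [neg_mul, ← mul_neg]
    gcongr
    nlinarith [sq_nonneg (‖p‖ - ‖y1‖)]
  have q4 : e * (2 * ‖p‖ * ‖y1‖) ≤ e * (‖p‖ ^ 2 + ‖y1‖ ^ 2) := by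
    gcongr
    nlinarith [sq_nonneg (‖p‖ - ‖y1‖)]
  have q5 : 0 ≤ e * ‖y1‖ ^ 2 := by positivity
  nlinarith

theorem Up_aux {m : ℕ} {K ν : ℝ} {A : ℂ} {y y1 ρ : ℝ → ℂ} (h : RayEq m K ν A y y1 ρ)
    (hK : 0 < K) (hν : 0 ≤ ν) (hA : ‖A‖ ≤ 2) {η L e : ℝ} (hη : 0 < η) (hη1 : η ≤ 1) (hL : 0 ≤ L)
    (he : m * L ^ (m - 1) / (2 * η) + K * (√η + ν * (1 + L ^ (m - 1)) / √η) ≤ e)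
    (hend : ‖y1 L‖ ≤ 2 * (K * √(L ^ m) * ‖y L‖)) :
    ‖y 0‖ ^ 2 ≤ (5 * L ^ m + 3) / η * ‖y L‖ ^ 2 *
      Real.exp (2 * (K * (Phi m A L + L * √η) + 2 * e * L)) := by
  obtain ⟨σ, hσ, him⟩ : ∃ σ : ℝ, |σ| = η ∧ η ≤ |A.im + σ| := by
    by_cases hc : 0 ≤ A.im
    · exact ⟨η, abs_of_pos hη, by rw [abs_of_nonneg (by linarith)]; linarith⟩
    · push Not at hc
      exact ⟨-η, by rw [abs_neg, abs_of_pos hη], by rw [abs_of_neg (by linarith)]; linarith⟩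
  set B : ℂ := A + σ * Complex.I with hB
  have hz : ∀ t : ℝ, η ≤ ‖(t : ℂ) ^ m + B‖ ∧ (t : ℂ) ^ m + B ∈ slitPlane := by
    intro t
    have e1 : ((t : ℂ) ^ m + B).im = A.im + σ := by
      rw [hB, ← ofReal_pow, add_im, ofReal_im]; simp
    have h1 := Complex.abs_im_le_norm ((t : ℂ) ^ m + B)
    rw [e1] at h1
    refine ⟨him.trans h1, ?_⟩
    rw [mem_slitPlane_iff, e1]
    right
    intro h0
    rw [h0, abs_zero] at him
    linarith
  have hBA : ‖B - A‖ = η := by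
    rw [hB]; simp [hσ]
  have hsη : 0 < √η := Real.sqrt_pos.2 hη
  have hsη2 : √η * √η = η := Real.mul_self_sqrt hη.le
  have he0 : 0 ≤ e := le_trans (by positivity) he
  have hφn : ∀ t : ℝ, √η ≤ ‖csq ((t : ℂ) ^ m + B)‖ := by
    intro t
    rw [norm_csq]
    exact Real.sqrt_le_sqrt (hz t).1
  set φ : ℝ → ℂ := fun t : ℝ => (K : ℂ) * csq ((t : ℂ) ^ m + B) with hφdef
  set φ' : ℝ → ℂ := fun t : ℝ =>
    (K : ℂ) * ((m : ℂ) * (t : ℂ) ^ (m - 1) / (2 * csq ((t : ℂ) ^ m + B))) with hφ'def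
  have hφ : ∀ t, HasDerivAt φ (φ' t) t := by
    intro t
    apply HasDerivAt.const_mul
    exact hasDerivAt_csq (f := fun t : ℝ => (t : ℂ) ^ m + B)
      (((hasDerivAt_pow m (t : ℂ)).comp_ofReal).add_const B) (hz t).2
  have hN : ∀ t ∈ Icc 0 L, HasDerivAt (fun t => ‖φ t * y t‖ ^ 2 + ‖y1 t‖ ^ 2)
     (2 * (starRingEnd ℂ (φ t * y t) * (φ' t * y t + φ t * y1 t)).re +
      2 * (starRingEnd ℂ (y1 t) * ((φ t ^ 2 + (K : ℂ) ^ 2 * (ρ t - σ * Complex.I)) * y t)).re) t := by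
    intro t ht
    have h1 := hasDerivAt_normsq ((hφ t).mul (h.hy t ht.1))
    have h2 := hasDerivAt_normsq (h.hy1 t ht.1)
    refine (h1.add h2).congr_deriv ?_
    have : φ t ^ 2 + (K : ℂ) ^ 2 * (ρ t - σ * Complex.I) = (K : ℂ) ^ 2 * ((t : ℂ) ^ m + A + ρ t) := by
      simp only [hφdef]
      rw [mul_pow, csq_sq, hB]; ring
    rw [this]
    rfl
  have key := exp_mono_aux (convex_Icc 0 L) (f := fun t => ‖φ t * y t‖ ^ 2 + ‖y1 t‖ ^ 2)
    (Ψ := fun t => K * Phi m B t + 2 * e * t)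
    (Ψ' := fun t => K * rsq ((t : ℂ) ^ m + B) + 2 * e) (-2) hN
    (by
      intro t ht
      have := ((hasDerivAt_Phi m B t).const_mul K).add ((hasDerivAt_id t).const_mul (2 * e))
      exact this.congr_deriv (by ring))
    (by
      intro t ht
      have hre : (φ t).re = K * rsq ((t : ℂ) ^ m + B) := by
        simp only [hφdef]; rw [re_ofReal_mul, csq_re]
      rw [← hre]
      have hn := hφn t
      have hnφ : ‖φ t‖ = K * ‖csq ((t : ℂ) ^ m + B)‖ := by
        simp only [hφdef]; rw [norm_mul, Complex.norm_real, Real.norm_of_nonneg hK.le]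
      have hpw : t ^ (m - 1) ≤ L ^ (m - 1) := pow_le_pow_left₀ ht.1 ht.2 _
      refine energy_low rfl ?_ ?_ ?_ he0
      · have : ‖φ' t‖ = K * (m * t ^ (m - 1) / (2 * ‖csq ((t : ℂ) ^ m + B)‖)) := by
          simp only [hφ'def]
          simp only [norm_mul, norm_div, norm_pow, Complex.norm_real, Real.norm_of_nonneg hK.le,
            Real.norm_of_nonneg ht.1, Complex.norm_natCast, Complex.norm_ofNat]
        rw [this, hnφ]
        have e1 : m * L ^ (m - 1) / (2 * η) ≤ e := by
          refine le_trans ?_ he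
          have : 0 ≤ K * (√η + ν * (1 + L ^ (m - 1)) / √η) := by positivity
          linarith
        set b := ‖csq ((t : ℂ) ^ m + B)‖
        have hb : 0 < b := lt_of_lt_of_le hsη hn
        have hb2 : η ≤ b * b := by rw [← hsη2]; gcongr
        have e2 : m * t ^ (m - 1) / (2 * b) ≤ e * b := by
          rw [div_le_iff₀ (by positivity)]
          rw [div_le_iff₀ (by positivity)] at e1
          calc m * t ^ (m - 1) ≤ m * L ^ (m - 1) := by gcongr
            _ ≤ e * (2 * η) := e1
            _ ≤ e * (2 * (b * b)) := by gcongr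
            _ = _ := by ring
        calc _ ≤ K * (e * b) := by gcongr
          _ = _ := by ring
      · rw [norm_mul, norm_pow, Complex.norm_real, Real.norm_of_nonneg hK.le, hnφ]
        have e1 : ‖ρ t - σ * Complex.I‖ ≤ ν * (1 + L ^ (m - 1)) + η := by
          refine (norm_sub_le _ _).trans ?_
          have : ‖(σ : ℂ) * Complex.I‖ = η := by simp [hσ]
          rw [this]
          have := h.hρ t ht.1
          gcongr
          exact this.trans (by gcongr)
        have e2 : K * (√η + ν * (1 + L ^ (m - 1)) / √η) ≤ e := by
          refine le_trans ?_ he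
          have : 0 ≤ m * L ^ (m - 1) / (2 * η) := by positivity
          linarith
        have e3 : K * (ν * (1 + L ^ (m - 1)) + η) ≤ e * √η := by
          have := mul_le_mul_of_nonneg_right e2 hsη.le
          refine le_trans (le_of_eq ?_) this
          rw [mul_assoc, add_mul, hsη2, div_mul_cancel₀ _ hsη.ne']; ring
        have e4 : 0 ≤ e * ‖csq ((t : ℂ) ^ m + B)‖ := by positivity
        calc K ^ 2 * ‖ρ t - σ * Complex.I‖ ≤ K ^ 2 * (ν * (1 + L ^ (m - 1)) + η) := by gcongr
          _ = K * (K * (ν * (1 + L ^ (m - 1)) + η)) := by ring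
          _ ≤ K * (e * √η) := by gcongr
          _ ≤ K * (e * ‖csq ((t : ℂ) ^ m + B)‖) := by gcongr
          _ ≤ K * (2 * (e * ‖csq ((t : ℂ) ^ m + B)‖)) := by
            apply mul_le_mul_of_nonneg_left _ hK.le
            linarith
          _ = _ := by ring
      · rw [hre]; exact mul_nonneg hK.le (rsq_nonneg _)) ⟨le_rfl, hL⟩ ⟨hL, le_rfl⟩ hL
  simp only [Phi_zero, mul_zero, add_zero, sub_zero] at key
  have k0 : K ^ 2 * η * ‖y 0‖ ^ 2 ≤ ‖φ 0 * y 0‖ ^ 2 + ‖y1 0‖ ^ 2 := by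
    have : K * √η ≤ ‖φ 0‖ := by
      simp only [hφdef]; rw [norm_mul, Complex.norm_real, Real.norm_of_nonneg hK.le]
      gcongr
      exact hφn 0
    have h2 : (K * √η) ^ 2 ≤ ‖φ 0‖ ^ 2 := by gcongr
    rw [mul_pow, Real.sq_sqrt hη.le] at h2
    rw [norm_mul, mul_pow]
    nlinarith [sq_nonneg ‖y 0‖, sq_nonneg ‖y1 0‖]
  have kL : ‖φ L * y L‖ ^ 2 + ‖y1 L‖ ^ 2 ≤ K ^ 2 * (5 * L ^ m + 3) * ‖y L‖ ^ 2 := by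
    have e1 : ‖φ L‖ ^ 2 ≤ K ^ 2 * (L ^ m + 3) := by
      simp only [hφdef]; rw [norm_mul, Complex.norm_real, Real.norm_of_nonneg hK.le, mul_pow,
        norm_csq_sq]
      gcongr
      have e1 : (L : ℂ) ^ m + B = ((L : ℂ) ^ m + A) + (B - A) := by ring
      rw [e1]
      refine (norm_add_le _ _).trans ?_
      linarith [norm_ray_le (m := m) hA hL]
    have e2 : ‖y1 L‖ ^ 2 ≤ (2 * (K * √(L ^ m) * ‖y L‖)) ^ 2 := by gcongr
    have e3 : (2 * (K * √(L ^ m) * ‖y L‖)) ^ 2 = 4 * K ^ 2 * L ^ m * ‖y L‖ ^ 2 := by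
      rw [mul_pow, mul_pow, mul_pow, Real.sq_sqrt (by positivity)]; ring
    rw [norm_mul, mul_pow]
    nlinarith [sq_nonneg ‖y L‖]
  set X := Real.exp (-2 * (K * Phi m B L + 2 * e * L)) with hX
  have hXX : X * Real.exp (2 * (K * Phi m B L + 2 * e * L)) = 1 := by
    rw [hX, ← Real.exp_add, neg_mul, neg_add_cancel, Real.exp_zero]
  have s1 : K ^ 2 * η * ‖y 0‖ ^ 2 * X ≤ K ^ 2 * (5 * L ^ m + 3) * ‖y L‖ ^ 2 :=
    le_trans (by gcongr) (key.trans kL)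
  have s2 : η * ‖y 0‖ ^ 2 ≤ (5 * L ^ m + 3) * ‖y L‖ ^ 2 *
      Real.exp (2 * (K * Phi m B L + 2 * e * L)) := by
    have hK2 : 0 < K ^ 2 := by positivity
    apply le_of_mul_le_mul_left _ hK2
    have := mul_le_mul_of_nonneg_right s1 (Real.exp_nonneg (2 * (K * Phi m B L + 2 * e * L)))
    calc K ^ 2 * (η * ‖y 0‖ ^ 2) = K ^ 2 * η * ‖y 0‖ ^ 2 * (X *
          Real.exp (2 * (K * Phi m B L + 2 * e * L))) := by rw [hXX]; ring
      _ = K ^ 2 * η * ‖y 0‖ ^ 2 * X * Real.exp (2 * (K * Phi m B L + 2 * e * L)) := by ring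
      _ ≤ _ := this
      _ = _ := by ring
  have s3 : Phi m B L ≤ Phi m A L + L * √η := by
    have := Phi_perturb m A B hL
    rwa [hBA] at this
  have s4 : η * ‖y 0‖ ^ 2 ≤ (5 * L ^ m + 3) * ‖y L‖ ^ 2 *
      Real.exp (2 * (K * (Phi m A L + L * √η) + 2 * e * L)) := by
    refine s2.trans ?_
    gcongr
  calc ‖y 0‖ ^ 2 = (η * ‖y 0‖ ^ 2) / η := by field_simp
    _ ≤ ((5 * L ^ m + 3) * ‖y L‖ ^ 2 *
      Real.exp (2 * (K * (Phi m A L + L * √η) + 2 * e * L))) / η := by gcongr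
    _ = _ := by ring

theorem Up {m : ℕ} {ε L : ℝ} (hε : 0 < ε) (hL : 0 < L) :
    ∃ K0 ν0 : ℝ, 0 < K0 ∧ 0 < ν0 ∧ ∀ (K ν : ℝ) (A : ℂ) (y y1 ρ : ℝ → ℂ), RayEq m K ν A y y1 ρ →
      K0 ≤ K → 0 ≤ ν → ν ≤ ν0 → ‖A‖ ≤ 2 → ‖y1 L‖ ≤ 2 * (K * √(L ^ m) * ‖y L‖) →
      ‖y 0‖ ≤ Real.exp (K * (Phi m A L + ε)) * ‖y L‖ := by
  set η := min 1 ((ε / (12 * L)) ^ 2) with hηd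
  have hη : 0 < η := by positivity
  have hsη : 0 < √η := Real.sqrt_pos.2 hη
  have h1 : L * √η ≤ ε / 12 := by
    have : √η ≤ ε / (12 * L) := by
      apply Real.sqrt_le_iff.2
      exact ⟨by positivity, min_le_right _ _⟩
    calc L * √η ≤ L * (ε / (12 * L)) := by gcongr
      _ = _ := by field_simp
  obtain ⟨K1, hK1, hK1'⟩ := exists_exp_ge ((5 * L ^ m + 3) / η) (show 0 < ε / 2 by positivity)
  set E := m * L ^ (m - 1) / (2 * η) with hE
  have hE0 : 0 ≤ E := by positivity
  set M := (1 + L ^ (m - 1)) / √η with hM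
  have hM0 : 0 < M := by positivity
  refine ⟨max K1 (2 * E * L / (ε / 12)), ε / 24 / (L * M), by positivity, by positivity, ?_⟩
  intro K ν A y y1 ρ h hK hν hν0 hA hend
  have hKp : 0 < K := lt_of_lt_of_le hK1 ((le_max_left _ _).trans hK)
  have key := Up_aux h hKp hν hA hη (min_le_left _ _) hL.le le_rfl hend
  have h2 : 2 * E * L ≤ K * (ε / 12) := by
    have := (le_max_right _ _).trans hK
    rwa [div_le_iff₀ (by positivity)] at this
  have h3 : L * (ν * (1 + L ^ (m - 1)) / √η) ≤ ε / 24 := by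
    have : L * (ν * (1 + L ^ (m - 1)) / √η) = ν * (L * M) := by rw [hM]; ring
    rw [this]
    rwa [le_div_iff₀ (by positivity)] at hν0
  have h4 := hK1' K ((le_max_left _ _).trans hK)
  have h5 : Real.exp (2 * (K * (Phi m A L + L * √η) + 2 * (E +
      K * (√η + ν * (1 + L ^ (m - 1)) / √η)) * L)) * Real.exp (K * (ε / 2)) ≤
      Real.exp (K * (Phi m A L + ε)) ^ 2 := by
    rw [← Real.exp_add, ← Real.exp_nat_mul]
    apply Real.exp_le_exp.2
    push_cast
    have h6 : K * (L * √η) ≤ K * (ε / 12) := by gcongr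
    have h7 : K * (L * (ν * (1 + L ^ (m - 1)) / √η)) ≤ K * (ε / 24) := by gcongr
    nlinarith
  apply le_of_sq_le_sq _ (by positivity)
  rw [mul_pow]
  calc ‖y 0‖ ^ 2 ≤ _ := key
    _ ≤ Real.exp (K * (ε / 2)) * ‖y L‖ ^ 2 *  Real.exp (2 * (K * (Phi m A L + L * √η) + 2 * (E +
      K * (√η + ν * (1 + L ^ (m - 1)) / √η)) * L)) := by gcongr
    _ = (Real.exp (2 * (K * (Phi m A L + L * √η) + 2 * (E +
      K * (√η + ν * (1 + L ^ (m - 1)) / √η)) * L)) * Real.exp (K * (ε / 2))) * ‖y L‖ ^ 2 := by ring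
    _ ≤ _ := by gcongr



/-- the opening angle -/
noncomputable def bet (m : ℕ) : ℝ := 2 * Real.pi / ((m : ℝ) + 2)

noncomputable def om (m : ℕ) : ℂ := Complex.exp ((bet m : ℂ) * Complex.I)

theorem norm_om (m : ℕ) : ‖om m‖ = 1 := Complex.norm_exp_ofReal_mul_I _

theorem om_ne (m : ℕ) : om m ≠ 0 := Complex.exp_ne_zero _

theorem om_pow (m : ℕ) : om m ^ m * om m ^ 2 = 1 := by
  unfold om bet
  rw [← pow_add, ← Complex.exp_nat_mul, ← Complex.exp_two_pi_mul_I]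
  congr 1
  have : (m : ℂ) + 2 ≠ 0 := by exact_mod_cast (by omega : m + 2 ≠ 0)
  push_cast
  field_simp

/-- A solution of the rescaled equation, decaying along the ray through `om m`. -/
structure SolEq (m : ℕ) (K ν : ℝ) (e : ℂ) (V D r : ℂ → ℂ) : Prop where
  hV : ∀ x, HasDerivAt V (D x) x
  hD : ∀ x, HasDerivAt D ((K : ℂ) ^ 2 * (x ^ m + e + r x) * V x) x
  hr : ∀ x, ‖r x‖ ≤ ν * (1 + ‖x‖ ^ (m - 1))
  hnt : ∀ x, V x = 0 → D x ≠ 0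
  hlim : Tendsto (fun t : ℝ => V (om m * t)) atTop (nhds 0)

theorem hasDerivAt_ray {V : ℂ → ℂ} {d w : ℂ} {t : ℝ} (h : HasDerivAt V d (w * t)) :
    HasDerivAt (fun t : ℝ => V (w * t)) (w * d) t := by
  have h1 : HasDerivAt (fun z : ℂ => V (w * z)) (w * d) (t : ℂ) := by
    have := h.comp_of_eq (t : ℂ) ((hasDerivAt_id (t : ℂ)).const_mul w) rfl
    refine this.congr_deriv ?_
    ring
  exact h1.comp_ofReal

theorem SolEq.ray {m : ℕ} {K ν : ℝ} {e : ℂ} {V D r : ℂ → ℂ} (h : SolEq m K ν e V D r) :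
    RayEq m K ν (om m ^ 2 * e) (fun t => V (om m * t)) (fun t => om m * D (om m * t))
      (fun t => om m ^ 2 * r (om m * t)) := by
  constructor
  · intro t _
    exact hasDerivAt_ray (h.hV _)
  · intro t _
    refine ((hasDerivAt_ray (h.hD (om m * t))).const_mul (om m)).congr_deriv ?_
    have := om_pow m
    rw [mul_pow]
    linear_combination (K ^ 2 * t ^ m * V (om m * t)) * this
  · intro t ht
    have := h.hr (om m * t)
    simp only [norm_mul, norm_pow, norm_om, one_pow, one_mul, Complex.norm_real,
      Real.norm_of_nonneg ht] at *
    exact this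
  · intro t _ h0
    exact mul_ne_zero (om_ne m) (h.hnt _ h0)
  · exact h.hlim

/-- the path used to go from the ray to the real axis -/
noncomputable def tz (t : ℝ) : ℂ := (1 - (t : ℂ) ^ 2) - t * Complex.I

theorem tz_re (t : ℝ) : (tz t).re = 1 - t ^ 2 := by simp [tz, ← ofReal_pow]
theorem tz_im (t : ℝ) : (tz t).im = -t := by simp [tz, ← ofReal_pow]

theorem tz_slit {t : ℝ} (_ht : t ∈ Icc (-1 : ℝ) 1) : tz t ∈ slitPlane := by
  rw [mem_slitPlane_iff, tz_re, tz_im]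
  by_cases h : t = 0
  · left; rw [h]; norm_num
  · right; simpa using h

theorem tz_norm {t : ℝ} (ht : t ∈ Icc (-1 : ℝ) 1) : 1 / 2 ≤ ‖tz t‖ ∧ ‖tz t‖ ≤ 1 := by
  have h : ‖tz t‖ ^ 2 = (1 - t ^ 2) ^ 2 + t ^ 2 := by
    rw [Complex.sq_norm, normSq_apply, tz_re, tz_im]; ring
  have h1 : t ^ 2 ≤ 1 := by nlinarith [ht.1, ht.2]
  constructor
  · nlinarith [norm_nonneg (tz t), sq_nonneg (2 * t ^ 2 - 1)]
  · nlinarith [norm_nonneg (tz t), sq_nonneg t]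

theorem tz_deriv (t : ℝ) : HasDerivAt tz (-2 * (t : ℂ) - Complex.I) t := by
  have h : HasDerivAt (fun z : ℂ => (1 - z ^ 2) - z * Complex.I) (-2 * (t : ℂ) - Complex.I) (t : ℂ) := by
    have := ((hasDerivAt_pow 2 (t : ℂ)).const_sub 1).sub ((hasDerivAt_id (t : ℂ)).mul_const Complex.I)
    refine this.congr_deriv ?_
    simp
  exact h.comp_ofReal

theorem tz_deriv_norm {t : ℝ} (ht : t ∈ Icc (-1 : ℝ) 1) : ‖-2 * (t : ℂ) - Complex.I‖ ≤ 3 := by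
  refine (norm_sub_le _ _).trans ?_
  simp
  have := abs_le.2 ⟨ht.1, ht.2⟩
  linarith

theorem tz_cpow_deriv (s : ℂ) {t : ℝ} (ht : t ∈ Icc (-1 : ℝ) 1) :
    HasDerivAt (fun t => tz t ^ s) (s * tz t ^ (s - 1) * (-2 * (t : ℂ) - Complex.I)) t := by
  have h2 : HasDerivAt (fun z : ℂ => z ^ s) (s * (tz t) ^ (s - 1) * 1) (tz t) :=
    (hasDerivAt_id (tz t)).cpow_const (tz_slit ht)
  have h3 := h2.comp_of_eq t (tz_deriv t) rfl
  exact h3.congr_deriv (by ring)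

theorem tz_cpow_norm_le {s : ℝ} (hs : -1 ≤ s) {t : ℝ} (ht : t ∈ Icc (-1 : ℝ) 1) :
    ‖tz t ^ (s : ℂ)‖ ≤ 2 := by
  rw [Complex.norm_cpow_real]
  obtain ⟨h1, h2⟩ := tz_norm ht
  calc ‖tz t‖ ^ s ≤ ‖tz t‖ ^ (-1 : ℝ) := Real.rpow_le_rpow_of_exponent_ge (by linarith) h2 hs
    _ = ‖tz t‖⁻¹ := Real.rpow_neg_one _
    _ ≤ (1 / 2 : ℝ)⁻¹ := by gcongr
    _ = 2 := by norm_num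

theorem tz_cpow_norm_ge {s : ℝ} (hs : s ≤ 1) {t : ℝ} (ht : t ∈ Icc (-1 : ℝ) 1) :
    1 / 2 ≤ ‖tz t ^ (s : ℂ)‖ := by
  rw [Complex.norm_cpow_real]
  obtain ⟨h1, h2⟩ := tz_norm ht
  calc 1 / 2 ≤ ‖tz t‖ := h1
    _ = ‖tz t‖ ^ (1 : ℝ) := (Real.rpow_one _).symm
    _ ≤ _ := Real.rpow_le_rpow_of_exponent_ge (by linarith) h2 hs

theorem tz_cpow_norm_le_one {s : ℝ} (hs : 0 ≤ s) {t : ℝ} (ht : t ∈ Icc (-1 : ℝ) 1) :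
    ‖tz t ^ (s : ℂ)‖ ≤ 1 := by
  rw [Complex.norm_cpow_real]
  exact Real.rpow_le_one (norm_nonneg _) (tz_norm ht).2 hs

noncomputable def sE (m : ℕ) : ℝ := 2 / ((m : ℝ) + 2)
noncomputable def qE (m : ℕ) : ℝ := m / ((m : ℝ) + 2)

theorem sq_one (m : ℕ) : sE m + qE m = 1 := by
  unfold sE qE; field_simp; ring
theorem sE_pos (m : ℕ) : 0 < sE m := by unfold sE; positivity
theorem qE_nonneg (m : ℕ) : 0 ≤ qE m := by unfold qE; positivity
theorem bet_eq (m : ℕ) : bet m = Real.pi * sE m := by unfold bet sE; ring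
theorem ms_eq (m : ℕ) : (m : ℝ) * sE m = 2 * qE m := by unfold sE qE; ring

noncomputable def tx (m : ℕ) (L : ℝ) (t : ℝ) : ℂ :=
  Complex.exp (((Real.pi * sE m / 2 : ℝ) : ℂ) * Complex.I) * L * tz t ^ (sE m : ℂ)
noncomputable def tx' (m : ℕ) (L : ℝ) (t : ℝ) : ℂ :=
  Complex.exp (((Real.pi * sE m / 2 : ℝ) : ℂ) * Complex.I) * L *
    (sE m * tz t ^ ((sE m : ℂ) - 1) * (-2 * (t : ℂ) - Complex.I))
noncomputable def tφ (m : ℕ) (K L : ℝ) (t : ℝ) : ℂ :=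
  Complex.exp (((Real.pi * qE m / 2 : ℝ) : ℂ) * Complex.I) * ((K * √(L ^ m) : ℝ) : ℂ) * tz t ^ (qE m : ℂ)
noncomputable def tφ' (m : ℕ) (K L : ℝ) (t : ℝ) : ℂ :=
  Complex.exp (((Real.pi * qE m / 2 : ℝ) : ℂ) * Complex.I) * ((K * √(L ^ m) : ℝ) : ℂ) *
    (qE m * tz t ^ ((qE m : ℂ) - 1) * (-2 * (t : ℂ) - Complex.I))

theorem tx_deriv (m : ℕ) (L : ℝ) {t : ℝ} (ht : t ∈ Icc (-1 : ℝ) 1) :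
    HasDerivAt (tx m L) (tx' m L t) t := (tz_cpow_deriv _ ht).const_mul _

theorem tφ_deriv (m : ℕ) (K L : ℝ) {t : ℝ} (ht : t ∈ Icc (-1 : ℝ) 1) :
    HasDerivAt (tφ m K L) (tφ' m K L t) t := (tz_cpow_deriv _ ht).const_mul _

theorem tz_neg_one : tz (-1) = Complex.I := by simp [tz]
theorem tz_one : tz 1 = -Complex.I := by simp [tz]

theorem I_cpow (s : ℝ) : Complex.I ^ (s : ℂ) = Complex.exp (((Real.pi * s / 2 : ℝ) : ℂ) * Complex.I) := by
  rw [Complex.cpow_def_of_ne_zero I_ne_zero, Complex.log_I]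
  congr 1; push_cast; ring

theorem neg_I_cpow (s : ℝ) : (-Complex.I) ^ (s : ℂ) =
    Complex.exp (-(((Real.pi * s / 2 : ℝ) : ℂ) * Complex.I)) := by
  rw [Complex.cpow_def_of_ne_zero (neg_ne_zero.2 I_ne_zero), Complex.log_neg_I]
  congr 1; push_cast; ring

theorem tx_neg_one (m : ℕ) (L : ℝ) : tx m L (-1) = om m * L := by
  unfold tx om
  rw [tz_neg_one, I_cpow, mul_right_comm, ← Complex.exp_add, bet_eq]
  congr 2; push_cast; ring

theorem tx_one (m : ℕ) (L : ℝ) : tx m L 1 = L := by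
  unfold tx
  rw [tz_one, neg_I_cpow, mul_right_comm, ← Complex.exp_add, add_neg_cancel, Complex.exp_zero, one_mul]

theorem tφ_neg_one (m : ℕ) (K L : ℝ) : om m * tφ m K L (-1) = -((K * √(L ^ m) : ℝ) : ℂ) := by
  unfold tφ om
  rw [tz_neg_one, I_cpow, mul_right_comm, ← Complex.exp_add, bet_eq, ← mul_assoc, ← Complex.exp_add]
  have : ((Real.pi * sE m : ℝ) : ℂ) * Complex.I + (((Real.pi * qE m / 2 : ℝ) : ℂ) * Complex.I
    + ((Real.pi * qE m / 2 : ℝ) : ℂ) * Complex.I) = Real.pi * Complex.I := by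
    have h : ((sE m : ℂ)) + qE m = 1 := by exact_mod_cast sq_one m
    push_cast
    linear_combination (Real.pi : ℂ) * Complex.I * h
  rw [this, Complex.exp_pi_mul_I]; ring

theorem tφ_one (m : ℕ) (K L : ℝ) : tφ m K L 1 = ((K * √(L ^ m) : ℝ) : ℂ) := by
  unfold tφ
  rw [tz_one, neg_I_cpow, mul_right_comm, ← Complex.exp_add, add_neg_cancel, Complex.exp_zero, one_mul]

theorem tφ_sq (m : ℕ) (K : ℝ) {L : ℝ} (hL : 0 ≤ L) (t : ℝ) :
    tφ m K L t ^ 2 = (K : ℂ) ^ 2 * tx m L t ^ m := by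
  unfold tφ tx
  have hc : (m : ℂ) * sE m = 2 * qE m := by exact_mod_cast ms_eq m
  have e1 : (tz t ^ (qE m : ℂ)) ^ 2 = (tz t ^ (sE m : ℂ)) ^ m := by
    rw [← Complex.cpow_nat_mul, ← Complex.cpow_nat_mul, hc]; norm_num
  have e2 : (Complex.exp (((Real.pi * qE m / 2 : ℝ) : ℂ) * Complex.I)) ^ 2 =
     (Complex.exp (((Real.pi * sE m / 2 : ℝ) : ℂ) * Complex.I)) ^ m := by
    rw [← Complex.exp_nat_mul, ← Complex.exp_nat_mul]
    congr 1
    push_cast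
    linear_combination (-(Real.pi : ℂ) * Complex.I / 2) * hc
  have e3 : (((K * √(L ^ m) : ℝ) : ℂ)) ^ 2 = (K : ℂ) ^ 2 * (L : ℂ) ^ m := by
    rw [← ofReal_pow, mul_pow, Real.sq_sqrt (by positivity)]; push_cast; ring
  rw [mul_pow, mul_pow, e1, e2, e3, mul_pow, mul_pow]; ring

theorem tφ_mul (m : ℕ) (K L : ℝ) {t : ℝ} (ht : t ∈ Icc (-1 : ℝ) 1) :
    tφ m K L t * tx' m L t = ((K * (sE m * (L * √(L ^ m))) : ℝ) : ℂ) * (1 - 2 * t * Complex.I) := by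
  unfold tφ tx'
  have h : ((sE m : ℂ)) + qE m = 1 := by exact_mod_cast sq_one m
  have e1 : tz t ^ (qE m : ℂ) * tz t ^ ((sE m : ℂ) - 1) = 1 := by
    rw [← Complex.cpow_add _ _ (slitPlane_ne_zero (tz_slit ht))]
    have : (qE m : ℂ) + ((sE m : ℂ) - 1) = 0 := by linear_combination h
    rw [this, Complex.cpow_zero]
  have e2 : Complex.exp (((Real.pi * qE m / 2 : ℝ) : ℂ) * Complex.I) *
     Complex.exp (((Real.pi * sE m / 2 : ℝ) : ℂ) * Complex.I) = Complex.I := by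
    rw [← Complex.exp_add]
    refine Eq.trans ?_ Complex.exp_pi_div_two_mul_I
    congr 1
    push_cast
    linear_combination (Real.pi : ℂ) * Complex.I / 2 * h
  set E1 := Complex.exp (((Real.pi * qE m / 2 : ℝ) : ℂ) * Complex.I)
  set E2 := Complex.exp (((Real.pi * sE m / 2 : ℝ) : ℂ) * Complex.I)
  set z1 := tz t ^ (qE m : ℂ)
  set z2 := tz t ^ ((sE m : ℂ) - 1)
  push_cast
  have hI : Complex.I * (-2 * (t : ℂ) - Complex.I) = 1 - 2 * t * Complex.I := by
    linear_combination -Complex.I_mul_I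
  calc _ = (E1 * E2) * (z1 * z2) * (K * (sE m * (L * √(L ^ m)))) * (-2 * (t : ℂ) - Complex.I) := by ring
    _ = K * (sE m * (L * √(L ^ m))) * (Complex.I * (-2 * (t : ℂ) - Complex.I)) := by rw [e1, e2]; ring
    _ = _ := by rw [hI]



theorem exp_norm_one (x : ℝ) : ‖Complex.exp ((x : ℂ) * Complex.I)‖ = 1 :=
  Complex.norm_exp_ofReal_mul_I x

theorem sE_le (m : ℕ) : sE m ≤ 1 := by linarith [sq_one m, qE_nonneg m]
theorem qE_le (m : ℕ) : qE m ≤ 1 := by linarith [sq_one m, sE_pos m]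

noncomputable def tau (m : ℕ) (L : ℝ) : ℝ := 2 * (sE m * (L * √(L ^ m)))

theorem tent_pd {m : ℕ} {K ν : ℝ} {e : ℂ} {V D r : ℂ → ℂ} (h : SolEq m K ν e V D r)
    (he : ‖e‖ ≤ 2) {L : ℝ} (hL : 1 ≤ L) (hK : √(L ^ m) ≤ K) (hν0 : 0 ≤ ν)
    (hν : ν * (1 + L ^ (m - 1)) ≤ 1)
    {μ : ℝ} (hμ : 24 * (m + 2) ≤ μ * L ^ m) (hμ2 : μ ≤ 1 / 2) (hμ0 : 0 ≤ μ) :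
    PathData (Icc (-1) 1) (fun t => V (tx m L t)) (fun t => D (tx m L t)) (tx' m L)
      (fun t => (K : ℂ) ^ 2 * (tx m L t ^ m + e + r (tx m L t))) (tφ m K L) (tφ' m K L) μ := by
  have hL0 : 0 < L := by linarith
  have hs1 : 1 ≤ √(L ^ m) := by rw [Real.one_le_sqrt]; exact one_le_pow₀ hL
  have hK0 : 0 < K := by linarith
  have hKs : 0 < K * √(L ^ m) := by positivity
  have re_mul : ∀ t ∈ Icc (-1 : ℝ) 1, (tφ m K L t * tx' m L t).re = K * (sE m * (L * √(L ^ m))) := by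
    intro t ht
    rw [tφ_mul m K L ht, re_ofReal_mul]
    simp
  have nφ : ∀ t ∈ Icc (-1 : ℝ) 1, K * √(L ^ m) / 2 ≤ ‖tφ m K L t‖ := by
    intro t ht
    unfold tφ
    rw [norm_mul, norm_mul, exp_norm_one, Complex.norm_real, Real.norm_of_nonneg hKs.le]
    have := tz_cpow_norm_ge (qE_le m) ht
    nlinarith
  constructor
  · intro t ht
    refine ((h.hV (tx m L t)).comp_of_eq t (tx_deriv m L ht) rfl).congr_deriv ?_
    ring
  · intro t ht
    refine ((h.hD (tx m L t)).comp_of_eq t (tx_deriv m L ht) rfl).congr_deriv ?_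
    ring
  · intro t ht
    exact tφ_deriv m K L ht
  · intro t ht
    rw [← norm_pos_iff]
    exact lt_of_lt_of_le (by positivity) (nφ t ht)
  · intro t ht
    rw [re_mul t ht]
    have := sE_pos m
    positivity
  · intro t ht
    have n1 : ‖tφ' m K L t‖ ≤ 6 * (K * √(L ^ m)) := by
      unfold tφ'
      rw [norm_mul, norm_mul, exp_norm_one, Complex.norm_real, Real.norm_of_nonneg hKs.le, norm_mul,
        norm_mul, Complex.norm_real, Real.norm_of_nonneg (qE_nonneg m)]
      have e1 := tz_cpow_norm_le (s := qE m - 1) (by linarith [qE_nonneg m]) ht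
      push_cast at e1
      have e2 := tz_deriv_norm ht
      calc 1 * (K * √(L ^ m)) * (qE m * ‖tz t ^ ((qE m : ℂ) - 1)‖ * ‖-2 * (t : ℂ) - Complex.I‖)
          ≤ 1 * (K * √(L ^ m)) * (1 * 2 * 3) := by
            gcongr
            exact qE_le m
        _ = _ := by ring
    have n2 : ‖tx' m L t‖ ≤ 6 * L := by
      unfold tx'
      rw [norm_mul, norm_mul, exp_norm_one, Complex.norm_real, Real.norm_of_nonneg hL0.le, norm_mul,
        norm_mul, Complex.norm_real, Real.norm_of_nonneg (sE_pos m).le]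
      have e1 := tz_cpow_norm_le (s := sE m - 1) (by linarith [sE_pos m]) ht
      push_cast at e1
      have e2 := tz_deriv_norm ht
      calc 1 * L * (sE m * ‖tz t ^ ((sE m : ℂ) - 1)‖ * ‖-2 * (t : ℂ) - Complex.I‖)
          ≤ 1 * L * (1 * 2 * 3) := by
            gcongr
            exact sE_le m
        _ = _ := by ring
    have n3 : ‖tx m L t‖ ≤ L := by
      unfold tx
      rw [norm_mul, norm_mul, exp_norm_one, Complex.norm_real, Real.norm_of_nonneg hL0.le]
      have := tz_cpow_norm_le_one (sE_pos m).le ht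
      nlinarith
    have n4 : (K : ℂ) ^ 2 * (tx m L t ^ m + e + r (tx m L t)) - tφ m K L t ^ 2 =
       (K : ℂ) ^ 2 * (e + r (tx m L t)) := by rw [tφ_sq m K hL0.le]; ring
    have n5 : ‖e + r (tx m L t)‖ ≤ 3 := by
      refine (norm_add_le _ _).trans ?_
      have := h.hr (tx m L t)
      have h2 : ν * (1 + ‖tx m L t‖ ^ (m - 1)) ≤ ν * (1 + L ^ (m - 1)) := by gcongr
      linarith
    rw [n4, norm_mul, norm_pow, Complex.norm_real, Real.norm_of_nonneg hK0.le, re_mul t ht]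
    have n6 : sE m * (24 * (m + 2)) = 48 := by unfold sE; field_simp; norm_num
    have n7 : √(L ^ m) * √(L ^ m) = L ^ m := Real.mul_self_sqrt (by positivity)
    have hs0 := sE_pos m
    calc ‖tφ' m K L t‖ + ‖tx' m L t‖ * (K ^ 2 * ‖e + r (tx m L t)‖)
        ≤ 6 * (K * √(L ^ m)) + 6 * L * (K ^ 2 * 3) := by gcongr
      _ ≤ 6 * (K * K) + 6 * L * (K ^ 2 * 3) := by gcongr
      _ ≤ 24 * L * K ^ 2 := by nlinarith [sq_nonneg K]
      _ = K ^ 2 * L / 2 * (sE m * (24 * (m + 2))) := by rw [n6]; ring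
      _ ≤ K ^ 2 * L / 2 * (sE m * (μ * L ^ m)) := by gcongr
      _ = μ * (K * (sE m * (L * √(L ^ m)))) * (K * √(L ^ m) / 2) := by
        linear_combination (-(K ^ 2 * L / 2 * sE m * μ)) * n7
      _ ≤ _ := by
        gcongr
        exact nφ t ht
  · exact hμ2

theorem tent_aux {m : ℕ} (hm : 3 ≤ m) {K ν : ℝ} {e : ℂ} {V D r : ℂ → ℂ} (h : SolEq m K ν e V D r)
    (he : ‖e‖ ≤ 2) {L : ℝ} (hL : 16 ≤ L) (hK : √(L ^ m) ≤ K) (hK4 : 4 * m ≤ K) (hν0 : 0 ≤ ν)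
    (hν : ν * (1 + L ^ (m - 1)) ≤ 1)
    {μ : ℝ} (hμ : 24 * (m + 2) ≤ μ * L ^ m) (hμ2 : μ ≤ 1 / 2) (hμ0 : 0 ≤ μ) :
    V (om m * L) ≠ 0 ∧
    ‖V (om m * L)‖ * Real.exp ((1 - μ) * (K * tau m L)) ≤ 2 * ‖V L‖ ∧
    ‖V L‖ ≤ 2 * (‖V (om m * L)‖ * Real.exp ((1 + μ) * (K * tau m L))) ∧
    ‖om m * D (om m * L)‖ ≤ 2 * (K * √(L ^ m) * ‖V (om m * L)‖) := by
  have hL1 : 1 ≤ L := by linarith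
  have hs1 : 1 ≤ √(L ^ m) := by rw [Real.one_le_sqrt]; exact one_le_pow₀ hL1
  have hK0 : 0 < K := by linarith
  have hν1 : ν ≤ 1 := by
    have : 0 ≤ L ^ (m - 1) := by positivity
    nlinarith
  have hA : ‖om m ^ 2 * e‖ ≤ 2 := by simpa [norm_om] using he
  have cone0 := RayL hm h.ray hK4 hν1 hA hL
  have hne := cone_ne cone0 (h.ray.hnt L (by linarith))
  have hb := (cone_bounds cone0).2.2
  have PD := tent_pd h he hL1 hK hν0 hν hμ hμ2 hμ0
  beta_reduce at cone0 hne hb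
  set φ0 : ℂ := ((K * √(L ^ m) : ℝ) : ℂ) with hφ0
  have nφ0 : ‖φ0‖ = K * √(L ^ m) := by
    rw [hφ0, Complex.norm_real, Real.norm_of_nonneg (by positivity)]
  have hstart := tφ_neg_one m K L
  rw [← hφ0] at hstart
  have e1 : ‖tφ m K L (-1) * V (om m * L) - D (om m * L)‖ = ‖φ0 * V (om m * L) + om m * D (om m * L)‖ := by
    have : φ0 * V (om m * L) + om m * D (om m * L) =
      -(om m * (tφ m K L (-1) * V (om m * L) - D (om m * L))) := by
      linear_combination V (om m * L) * hstart
    rw [this, norm_neg, norm_mul, norm_om, one_mul]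
  have e2 : ‖tφ m K L (-1) * V (om m * L) + D (om m * L)‖ = ‖φ0 * V (om m * L) - om m * D (om m * L)‖ := by
    have : φ0 * V (om m * L) - om m * D (om m * L) =
      -(om m * (tφ m K L (-1) * V (om m * L) + D (om m * L))) := by
      linear_combination V (om m * L) * hstart
    rw [this, norm_neg, norm_mul, norm_om, one_mul]
  have m1 : (-1 : ℝ) ∈ Icc (-1 : ℝ) 1 := by simp
  have p1 : (1 : ℝ) ∈ Icc (-1 : ℝ) 1 := by simp
  have cone : ∀ t ∈ Icc (-1 : ℝ) 1, ‖tφ m K L t * V (tx m L t) - D (tx m L t)‖ ≤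
      ‖tφ m K L t * V (tx m L t) + D (tx m L t)‖ / 3 := by
    intro t ht
    have := PD.antiF (convex_Icc _ _) m1 ht ht.1
    simp only [tx_neg_one, e1, e2] at this
    have h2 : ‖φ0 * V (om m * L) + om m * D (om m * L)‖ ^ 2 ≤
       (‖φ0 * V (om m * L) - om m * D (om m * L)‖ / 3) ^ 2 := by gcongr
    apply le_of_sq_le_sq _ (by positivity)
    rw [div_pow] at *
    linarith
  have gr := PD.growth (convex_Icc _ _) (Ψ := fun t => K * (sE m * (L * √(L ^ m))) * t) (by
    intro t ht
    rw [tφ_mul m K L ht, re_ofReal_mul]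
    have := (hasDerivAt_id t).const_mul (K * (sE m * (L * √(L ^ m))))
    refine this.congr_deriv ?_
    simp) m1 p1 (by norm_num) cone
  have e3 : K * (sE m * (L * √(L ^ m))) * 1 - K * (sE m * (L * √(L ^ m))) * (-1) = K * tau m L := by
    unfold tau; ring
  simp only [e3, tx_neg_one, tx_one] at gr
  have c1 := cone 1 p1
  have c2 := cone (-1) m1
  rw [tx_one] at c1
  rw [tx_neg_one] at c2
  have c1' := cone_bounds (φ := tφ m K L 1) (y := V L) (y1 := -D L) (by
    rw [sub_neg_eq_add, ← sub_eq_add_neg]; exact c1)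
  have c2' := cone_bounds (φ := tφ m K L (-1)) (y := V (om m * L)) (y1 := -D (om m * L)) (by
    rw [sub_neg_eq_add, ← sub_eq_add_neg]; exact c2)
  rw [sub_neg_eq_add, norm_mul, tφ_one, ← hφ0, nφ0] at c1'
  have nneg : ‖tφ m K L (-1)‖ = K * √(L ^ m) := by
    have : ‖om m * tφ m K L (-1)‖ = K * √(L ^ m) := by rw [hstart, norm_neg, nφ0]
    rwa [norm_mul, norm_om, one_mul] at this
  rw [sub_neg_eq_add, norm_mul, nneg] at c2'
  rw [tφ_one, ← hφ0] at gr
  set b1 := ‖φ0 * V L + D L‖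
  set b0 := ‖tφ m K L (-1) * V (om m * L) + D (om m * L)‖
  set F := K * √(L ^ m) with hF
  have hF0 : 0 < F := by positivity
  refine ⟨hne, ?_, ?_, ?_⟩
  · apply le_of_mul_le_mul_left _ hF0
    have := mul_le_mul_of_nonneg_right c2'.2.1 (Real.exp_nonneg ((1 - μ) * (K * tau m L)))
    nlinarith [gr.1, c1'.1]
  · apply le_of_mul_le_mul_left _ hF0
    have := mul_le_mul_of_nonneg_right c2'.1 (Real.exp_nonneg ((1 + μ) * (K * tau m L)))
    nlinarith [gr.2, c1'.2.1]
  · rw [norm_mul φ0, nφ0] at hb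
    exact hb



theorem theoremM {m : ℕ} (hm : 3 ≤ m) {c ε : ℝ} (hc0 : 0 < c) (hε : 0 < ε) :
    ∃ L K0 ν0 : ℝ, 1 ≤ L ∧ 0 < K0 ∧ 0 < ν0 ∧ ∀ (K ν : ℝ) (e : ℂ) (V D r : ℂ → ℂ),
      SolEq m K ν e V D r → K0 ≤ K → 0 ≤ ν → ν ≤ ν0 → ‖e‖ ≤ 2 →
      V L ≠ 0 ∧ ‖V 0‖ ≤ Real.exp (K * (Phi m (om m ^ 2 * e) L - tau m L + ε)) * ‖V L‖ ∧
      (c ≤ ‖om m ^ 2 * e‖ + (om m ^ 2 * e).re → V 0 ≠ 0 ∧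
        Real.exp (K * (Phi m (om m ^ 2 * e) L - tau m L - ε)) * ‖V L‖ ≤ ‖V 0‖) := by
  have hm' : (3 : ℝ) ≤ m := by exact_mod_cast hm
  set L := max (48 * ((m : ℝ) + 2)) ((384 / ε) ^ 2) with hLdef
  have hL1 : 48 * ((m : ℝ) + 2) ≤ L := le_max_left _ _
  have hL2 : (384 / ε) ^ 2 ≤ L := le_max_right _ _
  have hL16 : 16 ≤ L := by linarith
  have hL0 : 0 < L := by linarith
  obtain ⟨K1, ν1, hK1, hν1, H1⟩ := Up (m := m) (L := L) (show 0 < ε / 4 by positivity) hL0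
  obtain ⟨K2, ν2, hK2, hν2, H2⟩ := Ray0 hm (L := L) hc0 (show 0 < ε / 4 by positivity) hL0.le
  obtain ⟨K3, hK3, H3⟩ := exists_exp_ge 2 (show 0 < ε / 4 by positivity)
  set μ := 24 * ((m : ℝ) + 2) / L ^ m with hμdef
  have hLm : 0 < L ^ m := by positivity
  have hμ : 24 * ((m : ℝ) + 2) ≤ μ * L ^ m := by rw [hμdef, div_mul_cancel₀ _ hLm.ne']
  have hμ0 : 0 ≤ μ := by positivity
  have hLle : L ≤ L ^ m := le_self_pow₀ (by linarith) (by omega)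
  have hμ2 : μ ≤ 1 / 2 := by
    rw [hμdef, div_le_iff₀ hLm]; linarith
  have hμτ : μ * tau m L ≤ ε / 4 := by
    have hs : √(L ^ m) * √(L ^ m) = L ^ m := Real.mul_self_sqrt hLm.le
    have hs0 : 0 < √(L ^ m) := Real.sqrt_pos.2 hLm
    have e1 : μ * tau m L = 96 * L / √(L ^ m) := by
      rw [hμdef]; unfold tau sE
      generalize hsq : √(L ^ m) = q at hs hs0 ⊢
      rw [← hs]
      field_simp
      norm_num
    rw [e1, div_le_iff₀ hs0]
    have e2 : L * √L ≤ √(L ^ m) := by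
      apply Real.le_sqrt_of_sq_le
      rw [mul_pow, Real.sq_sqrt hL0.le, ← pow_succ]
      exact pow_le_pow_right₀ (by linarith) (by omega)
    have e3 : 384 / ε ≤ √L := Real.le_sqrt_of_sq_le hL2
    rw [div_le_iff₀ hε] at e3
    nlinarith
  have hτ0 : 0 ≤ tau m L := by
    unfold tau
    have := sE_pos m
    positivity
  have hq : 0 < 1 + L ^ (m - 1) := by positivity
  refine ⟨L, max (max K1 K2) (max K3 (max (√(L ^ m)) (4 * m))),
    min (min ν1 ν2) (1 / (1 + L ^ (m - 1))), by linarith, by positivity, by positivity, ?_⟩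
  intro K ν e V D r h hK hν0 hν he
  simp only [max_le_iff] at hK
  simp only [le_min_iff] at hν
  obtain ⟨⟨hk1, hk2⟩, hk3, hk4, hk5⟩ := hK
  obtain ⟨⟨hn1, hn2⟩, hn3⟩ := hν
  rw [le_div_iff₀ hq] at hn3
  have hA : ‖om m ^ 2 * e‖ ≤ 2 := by simpa [norm_om] using he
  obtain ⟨t0, t1, t2, t3⟩ := tent_aux hm h he hL16 hk4 hk5 hν0 hn3 hμ hμ2 hμ0
  have hKp : 0 < K := by linarith
  have u1 := H1 K ν _ _ _ _ h.ray hk1 hν0 hn1 hA t3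
  have u3 := H3 K hk3
  have hKμ : K * (μ * tau m L) ≤ K * (ε / 4) := by gcongr
  set Φ := Phi m (om m ^ 2 * e) L
  simp only [ofReal_zero, mul_zero] at u1
  have hVL : V L ≠ 0 := by
    intro h0
    rw [h0, norm_zero, mul_zero] at t1
    have : 0 < ‖V (om m * L)‖ := norm_pos_iff.2 t0
    have := mul_pos this (Real.exp_pos ((1 - μ) * (K * tau m L)))
    linarith
  refine ⟨hVL, ?_, ?_⟩
  · have a1 : ‖V (om m * L)‖ ≤ Real.exp (-((1 - μ) * (K * tau m L))) * (2 * ‖V L‖) := by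
      rw [Real.exp_neg, ← div_eq_inv_mul, le_div_iff₀ (Real.exp_pos _)]; exact t1
    calc ‖V 0‖ ≤ Real.exp (K * (Φ + ε / 4)) * ‖V (om m * L)‖ := u1
      _ ≤ Real.exp (K * (Φ + ε / 4)) * (Real.exp (-((1 - μ) * (K * tau m L))) * (Real.exp (K * (ε / 4)) * ‖V L‖)) := by
        gcongr
        refine a1.trans ?_
        gcongr
      _ = Real.exp (K * (Φ + ε / 4) + -((1 - μ) * (K * tau m L)) + K * (ε / 4)) * ‖V L‖ := by
        rw [Real.exp_add, Real.exp_add]; ring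
      _ ≤ _ := by
        gcongr
        nlinarith
  · intro hc
    obtain ⟨v1, v2⟩ := H2 K ν _ _ _ _ h.ray hk2 hn2 hA hc
    simp only [ofReal_zero, mul_zero] at v1 v2
    refine ⟨v1, ?_⟩
    calc Real.exp (K * (Φ - tau m L - ε)) * ‖V L‖
        ≤ Real.exp (K * (Φ - tau m L - ε)) * (2 * (‖V (om m * L)‖ * Real.exp ((1 + μ) * (K * tau m L)))) := by
          gcongr
      _ ≤ Real.exp (K * (Φ - tau m L - ε)) * (Real.exp (K * (ε / 4)) *
            (‖V (om m * L)‖ * Real.exp ((1 + μ) * (K * tau m L)))) := by gcongr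
      _ = Real.exp (K * (Φ - tau m L - ε) + K * (ε / 4) + (1 + μ) * (K * tau m L)) * ‖V (om m * L)‖ := by
        rw [Real.exp_add, Real.exp_add]; ring
      _ ≤ Real.exp (K * (Φ - ε / 4)) * ‖V (om m * L)‖ := by
        gcongr
        nlinarith
      _ ≤ _ := v2

theorem om_sq (m : ℕ) : om m ^ 2 = Complex.exp (((2 * bet m : ℝ) : ℂ) * Complex.I) := by
  unfold om
  rw [← Complex.exp_nat_mul]; congr 1; push_cast; ring

theorem om_sq_re (m : ℕ) : (om m ^ 2).re = Real.cos (2 * bet m) := by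
  rw [om_sq, Complex.exp_ofReal_mul_I_re]
theorem om_sq_im (m : ℕ) : (om m ^ 2).im = Real.sin (2 * bet m) := by
  rw [om_sq, Complex.exp_ofReal_mul_I_im]

theorem bet_bounds {m : ℕ} (hm : 3 ≤ m) : 0 < bet m ∧ 2 * bet m ≤ 4 * Real.pi / 5 := by
  unfold bet
  have hm' : (3 : ℝ) ≤ m := by exact_mod_cast hm
  have hp := Real.pi_pos
  refine ⟨by positivity, ?_⟩
  rw [mul_div_assoc', div_le_div_iff₀ (by positivity) (by norm_num)]
  nlinarith

theorem sin2_pos {m : ℕ} (hm : 3 ≤ m) : 0 < Real.sin (2 * bet m) := by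
  have := bet_bounds hm
  have hp := Real.pi_pos
  apply Real.sin_pos_of_pos_of_lt_pi <;> linarith

theorem Phi_gap {m : ℕ} (hm : 3 ≤ m) {e : ℂ} (he : ‖e‖ ≤ 2) (him : 0 ≤ e.im) {L : ℝ} (hL : 1 ≤ L) :
    Phi m (om m ^ 2 * e) L + Real.sin (2 * bet m) / 4 * e.im ≤
      Phi m (om m ^ 2 * starRingEnd ℂ e) L := by
  set A := om m ^ 2 * e with hA
  set B := om m ^ 2 * starRingEnd ℂ e with hB
  have nA : ‖A‖ = ‖e‖ := by rw [hA]; simp [norm_om]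
  have nB : ‖B‖ = ‖e‖ := by rw [hB, norm_mul, RCLike.norm_conj]; simp [norm_om]
  have hsin := sin2_pos hm
  have hre : B.re = A.re + 2 * e.im * Real.sin (2 * bet m) := by
    rw [hA, hB, mul_re, mul_re, conj_re, conj_im, om_sq_im]; ring
  have hnn : ∀ t : ℝ, 0 ≤ t → ‖(t : ℂ) ^ m + A‖ ≤ ‖(t : ℂ) ^ m + B‖ := by
    intro t ht
    apply le_of_sq_le_sq _ (norm_nonneg _)
    have nn : ∀ C : ℂ, ‖(t : ℂ) ^ m + C‖ ^ 2 = t ^ m * t ^ m + 2 * t ^ m * C.re + ‖C‖ ^ 2 := by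
      intro C
      rw [Complex.sq_norm, Complex.sq_norm, normSq_apply, normSq_apply, ← ofReal_pow, add_re, add_im,
        ofReal_re, ofReal_im]; ring
    rw [nn, nn, nA, nB, hre]
    have : 0 ≤ 2 * t ^ m * (2 * e.im * Real.sin (2 * bet m)) := by positivity
    linarith
  have hsq : ∀ t : ℝ, 0 ≤ t → rsq ((t : ℂ) ^ m + A) ^ 2 + e.im * Real.sin (2 * bet m) ≤
      rsq ((t : ℂ) ^ m + B) ^ 2 := by
    intro t ht
    rw [rsq_sq, rsq_sq, re_ray, re_ray, hre]
    linarith [hnn t ht]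
  have hmono : ∀ t : ℝ, 0 ≤ t → rsq ((t : ℂ) ^ m + A) ≤ rsq ((t : ℂ) ^ m + B) := by
    intro t ht
    apply le_of_sq_le_sq _ (rsq_nonneg _)
    have := hsq t ht
    have h2 : 0 ≤ e.im * Real.sin (2 * bet m) := by positivity
    linarith
  have hdiff : ∀ t ∈ Icc (0 : ℝ) 1, rsq ((t : ℂ) ^ m + A) + Real.sin (2 * bet m) / 4 * e.im ≤
      rsq ((t : ℂ) ^ m + B) := by
    intro t ht
    have bd : ∀ C : ℂ, ‖C‖ ≤ 2 → rsq ((t : ℂ) ^ m + C) ≤ 2 := by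
      intro C hC
      refine (rsq_le_norm_csq _).trans ?_
      rw [norm_csq]
      apply Real.sqrt_le_iff.2
      have := norm_ray_le (m := m) hC ht.1
      have h2 : t ^ m ≤ 1 := pow_le_one₀ ht.1 ht.2
      constructor <;> linarith
    have b1 := bd A (by rw [nA]; exact he)
    have b2 := bd B (by rw [nB]; exact he)
    have h1 := hsq t ht.1
    have h2 := hmono t ht.1
    nlinarith [rsq_nonneg ((t : ℂ) ^ m + A)]
  unfold Phi
  have iA := fun a b => (cont_rsq_ray m A).intervalIntegrable (μ := volume) a b
  have iB := fun a b => (cont_rsq_ray m B).intervalIntegrable (μ := volume) a b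
  rw [← intervalIntegral.integral_add_adjacent_intervals (iA 0 1) (iA 1 L),
    ← intervalIntegral.integral_add_adjacent_intervals (iB 0 1) (iB 1 L)]
  have q1 := intervalIntegral.integral_mono_on (μ := volume) zero_le_one
    ((iA 0 1).add (_root_.intervalIntegrable_const (c := Real.sin (2 * bet m) / 4 * e.im))) (iB 0 1) hdiff
  rw [intervalIntegral.integral_add (iA 0 1) (_root_.intervalIntegrable_const)] at q1
  have q2 := intervalIntegral.integral_mono_on (μ := volume) hL (iA 1 L) (iB 1 L)
    (fun t ht => hmono t (by linarith [ht.1]))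
  simp only [intervalIntegral.integral_const, sub_zero, one_smul] at q1
  linarith


def EntU (c : ℂ → ℕ → ℂ) (U : Set ℂ) : Prop :=
  ∀ R : ℝ, 0 < R → ∃ G : ℝ, ∀ l ∈ U, ∀ n, ‖c l n‖ * R ^ n ≤ G

lemma EntU.shift {c : ℂ → ℕ → ℂ} {U : Set ℂ} (h : EntU c U) :
    EntU (fun l n => ((n : ℂ) + 1) * c l (n + 1)) U := by
  intro R hR
  obtain ⟨G, hG⟩ := h (2 * R) (by positivity)
  refine ⟨G / R, fun l hl n => ?_⟩
  have h1 := hG l hl (n + 1)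
  rw [le_div_iff₀ hR, norm_mul]
  have h2 : ‖((n : ℂ) + 1)‖ = (n : ℝ) + 1 := by
    have : ((n : ℂ) + 1) = ((n + 1 : ℝ) : ℂ) := by push_cast; rfl
    rw [this, Complex.norm_real, Real.norm_of_nonneg (by positivity)]
  rw [h2]
  have h3 : ((n : ℝ) + 1) ≤ 2 ^ (n + 1) := by
    have := (Nat.lt_two_pow_self (n := n + 1)).le
    exact_mod_cast this
  calc ((n : ℝ) + 1) * ‖c l (n + 1)‖ * R ^ n * R = ((n : ℝ) + 1) * (‖c l (n + 1)‖ * R ^ (n + 1)) := by ring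
    _ ≤ 2 ^ (n + 1) * (‖c l (n + 1)‖ * R ^ (n + 1)) := by gcongr
    _ = ‖c l (n + 1)‖ * (2 * R) ^ (n + 1) := by rw [mul_pow]; ring
    _ ≤ G := h1

/-- geometric majorant on a ball -/
lemma EntU.major {c : ℂ → ℕ → ℂ} {U : Set ℂ} (h : EntU c U) (R : ℝ) (hR : 0 < R) :
    ∃ u : ℕ → ℝ, Summable u ∧ ∀ l ∈ U, ∀ x : ℂ, ‖x‖ ≤ R → ∀ n, ‖c l n * x ^ n‖ ≤ u n := by
  obtain ⟨G, hG⟩ := h (2 * R) (by positivity)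
  refine ⟨fun n => G * (1 / 2) ^ n, (summable_geometric_two).mul_left G, ?_⟩
  intro l hl x hx n
  have h1 := hG l hl n
  rw [norm_mul, norm_pow]
  calc ‖c l n‖ * ‖x‖ ^ n ≤ ‖c l n‖ * R ^ n := by gcongr
    _ = (‖c l n‖ * (2 * R) ^ n) * (1 / 2) ^ n := by
      rw [mul_assoc, ← mul_pow]; congr 2; ring
    _ ≤ G * (1 / 2) ^ n := by gcongr

lemma EntU.summable {c : ℂ → ℕ → ℂ} {U : Set ℂ} (h : EntU c U) {l : ℂ} (hl : l ∈ U) (x : ℂ) :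
    Summable (fun n => ‖c l n * x ^ n‖) := by
  obtain ⟨u, hu, hb⟩ := h.major (‖x‖ + 1) (by positivity)
  exact Summable.of_nonneg_of_le (fun n => norm_nonneg _) (fun n => hb l hl x (by linarith) n) hu

lemma EntU.diff_l {c : ℂ → ℕ → ℂ} {U : Set ℂ} (h : EntU c U) (hU : IsOpen U)
    (hd : ∀ n, Differentiable ℂ (fun l => c l n)) (x : ℂ) :
    DifferentiableOn ℂ (fun l => ∑' n, c l n * x ^ n) U := by
  obtain ⟨u, hu, hb⟩ := h.major (‖x‖ + 1) (by positivity)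
  exact differentiableOn_tsum_of_summable_norm hu
    (fun n => ((hd n).mul_const _).differentiableOn) hU (fun n l hl => hb l hl x (by linarith) n)

lemma EntU.deriv_x {c : ℂ → ℕ → ℂ} {U : Set ℂ} (h : EntU c U) {l : ℂ} (hl : l ∈ U) (x : ℂ) :
    HasDerivAt (fun x => ∑' n, c l n * x ^ n) (∑' n : ℕ, (((n : ℂ) + 1) * c l (n + 1)) * x ^ n) x := by
  obtain ⟨u, hu, hb⟩ := h.shift.major (‖x‖ + 1) (by positivity)
  have hx : x ∈ Metric.ball (0 : ℂ) (‖x‖ + 1) := by simp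
  have hs : Summable (fun n : ℕ => ((n : ℝ)) * 0 + (if n = 0 then 0 else u (n - 1))) := by
    rw [← summable_nat_add_iff 1]
    simpa using hu
  have key := hasDerivAt_tsum_of_isPreconnected (g := fun n x => c l n * x ^ n)
    (g' := fun n x => c l n * ((n : ℂ) * x ^ (n - 1))) (t := Metric.ball (0 : ℂ) (‖x‖ + 1)) (y₀ := x) (y := x)
    hs Metric.isOpen_ball (convex_ball _ _).isPreconnected
    (fun n y _ => (hasDerivAt_pow n y).const_mul _) (fun n y hy => ?_) hx (h.summable hl x).of_norm hx
  · refine key.congr_deriv ?_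
    have hs2 : Summable (fun n : ℕ => c l n * ((n : ℂ) * x ^ (n - 1))) := by
      rw [← summable_nat_add_iff 1]
      refine ((h.shift.summable hl x).of_norm).congr fun n => ?_
      simp only [Nat.add_sub_cancel]; push_cast; ring
    rw [hs2.tsum_eq_zero_add]
    simp only [Nat.cast_zero, zero_mul, mul_zero, zero_add]
    refine tsum_congr fun n => ?_
    simp only [Nat.add_sub_cancel]; push_cast; ring
  · rcases n with _ | n
    · simp
    · have := hb l hl y (by rw [mem_ball_zero_iff] at hy; exact hy.le) n
      simp only [mul_zero, zero_add, Nat.add_sub_cancel, Nat.succ_ne_zero, if_false]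
      refine le_trans (le_of_eq ?_) this
      congr 1; push_cast; ring

/-- Taylor coefficients of solutions of `v'' = Q v`. -/
noncomputable def cf (q : ℕ → ℂ) (α β : ℂ) : ℕ → ℂ
  | 0 => α
  | 1 => β
  | (n + 2) => (∑ k : Fin (n + 1), q k * cf q α β (n - k)) / (((n : ℂ) + 1) * ((n : ℂ) + 2))

lemma cf_succ (q : ℕ → ℂ) (α β : ℂ) (n : ℕ) :
    ((n : ℂ) + 1) * ((((n + 1 : ℕ) : ℂ) + 1) * cf q α β (n + 2)) =
      ∑ k ∈ Finset.range (n + 1), q k * cf q α β (n - k) := by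
  rw [cf, Finset.sum_range]
  have h1 : ((n : ℂ) + 1) ≠ 0 := by exact_mod_cast Nat.succ_ne_zero n
  have h2 : ((n : ℂ) + 2) ≠ 0 := by exact_mod_cast Nat.succ_ne_zero (n+1)
  push_cast
  field_simp
  ring

lemma cf_diff (q : ℂ → ℕ → ℂ) (hq : ∀ k, Differentiable ℂ (fun l => q l k)) (α β : ℂ) (n : ℕ) :
    Differentiable ℂ (fun l => cf (q l) α β n) := by
  induction n using Nat.strong_induction_on with
  | _ n ih =>
    match n with
    | 0 => simp only [cf]; exact differentiable_const _
    | 1 => simp only [cf]; exact differentiable_const _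
    | n + 2 =>
      simp only [cf]
      apply Differentiable.div_const
      apply Differentiable.fun_sum
      intro k _
      exact (hq k).mul (ih _ (by omega))

lemma cf_bound (N : ℕ) (M : ℝ) (hM : 0 ≤ M) (α β : ℂ) (R : ℝ) (hR : 0 < R) :
    ∃ G, ∀ q : ℕ → ℂ, (∀ k, ‖q k‖ ≤ M) → (∀ k, N < k → q k = 0) → ∀ n, ‖cf q α β n‖ * R ^ n ≤ G := by
  set C := (∑ k ∈ Finset.range (N + 1), M * R ^ (k + 2)) with hC
  have hC0 : 0 ≤ C := by positivity
  obtain ⟨n0, hn0⟩ := exists_nat_ge C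
  set A := ‖α‖ + ‖β‖ * R with hA
  have hA0 : 0 ≤ A := by positivity
  refine ⟨A * (C + 1) ^ n0, fun q hq hqN n => ?_⟩
  suffices H : ∀ n, ‖cf q α β n‖ * R ^ n ≤ A * (C + 1) ^ (min n n0) by
    refine (H n).trans ?_
    gcongr
    · linarith
    · exact min_le_right _ _
  intro n
  induction n using Nat.strong_induction_on with
  | _ n ih =>
    match n with
    | 0 => simp [cf, hA]; positivity
    | 1 =>
      simp only [cf, pow_one]
      have : (1 : ℝ) ≤ (C + 1) ^ (min 1 n0) := one_le_pow₀ (by linarith)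
      nlinarith [norm_nonneg α]
    | n + 2 =>
      set E := A * (C + 1) ^ (min n n0) with hE
      have hE0 : 0 ≤ E := by positivity
      have hsum : ‖∑ k ∈ Finset.range (n + 1), q k * cf q α β (n - k)‖ * R ^ (n + 2) ≤ C * E := by
        calc _ ≤ (∑ k ∈ Finset.range (n + 1), ‖q k * cf q α β (n - k)‖) * R ^ (n + 2) := by
              gcongr; exact norm_sum_le _ _
          _ = ∑ k ∈ Finset.range (n + 1), ‖q k‖ * R ^ (k + 2) * (‖cf q α β (n - k)‖ * R ^ (n - k)) := by
              rw [Finset.sum_mul]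
              refine Finset.sum_congr rfl fun k hk => ?_
              rw [Finset.mem_range] at hk
              have : R ^ (n + 2) = R ^ (k + 2) * R ^ (n - k) := by
                rw [← pow_add]; congr 1; omega
              rw [this, norm_mul]; ring
          _ ≤ ∑ k ∈ Finset.range (n + 1), ‖q k‖ * R ^ (k + 2) * E := by
              refine Finset.sum_le_sum fun k hk => ?_
              gcongr
              refine (ih (n - k) (by omega)).trans ?_
              rw [hE]
              gcongr
              · linarith
              · omega
          _ = (∑ k ∈ Finset.range (n + 1), ‖q k‖ * R ^ (k + 2)) * E := by rw [Finset.sum_mul]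
          _ ≤ C * E := by
              gcongr
              calc _ ≤ ∑ k ∈ Finset.range (max (n + 1) (N + 1)), ‖q k‖ * R ^ (k + 2) := by
                    apply Finset.sum_le_sum_of_subset_of_nonneg
                    · apply Finset.range_mono; exact le_max_left _ _
                    · intros; positivity
                _ = ∑ k ∈ Finset.range (N + 1), ‖q k‖ * R ^ (k + 2) := by
                    symm
                    apply Finset.sum_subset
                    · apply Finset.range_mono; exact le_max_right _ _
                    · intro k _ hk
                      rw [Finset.mem_range] at hk
                      rw [hqN k (by omega)]; simp
                _ ≤ C := by
                    refine Finset.sum_le_sum fun k hk => ?_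
                    gcongr; exact hq k
      have h1 : ‖cf q α β (n + 2)‖ = ‖∑ k ∈ Finset.range (n + 1), q k * cf q α β (n - k)‖ / (((n : ℝ) + 1) * (n + 2)) := by
        rw [cf, Finset.sum_range, norm_div]
        congr 1
        have : (((n : ℂ) + 1) * ((n : ℂ) + 2)) = (((n + 1) * (n + 2) : ℝ) : ℂ) := by push_cast; rfl
        rw [this, Complex.norm_real, Real.norm_of_nonneg (by positivity)]
      rw [h1, div_mul_eq_mul_div, div_le_iff₀ (by positivity)]
      refine hsum.trans ?_
      have hn' : (1 : ℝ) ≤ ((n : ℝ) + 1) * (n + 2) := by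
        have : (0 : ℝ) ≤ n := by positivity
        nlinarith
      by_cases hn : n < n0
      · have hm1 : (C + 1) ^ (min n n0) * (C + 1) ≤ (C + 1) ^ (min (n + 2) n0) := by
          rw [← pow_succ]
          apply pow_le_pow_right₀ (by linarith)
          omega
        calc C * E ≤ (C + 1) * E := by gcongr; linarith
          _ = A * ((C + 1) ^ (min n n0) * (C + 1)) := by rw [hE]; ring
          _ ≤ A * (C + 1) ^ (min (n + 2) n0) := by gcongr
          _ ≤ _ := le_mul_of_one_le_right (by positivity) hn'
      · have hm1 : min (n + 2) n0 = min n n0 := by omega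
        rw [hm1, ← hE, mul_comm]
        gcongr
        have : (n0 : ℝ) ≤ n := by exact_mod_cast not_lt.1 hn
        nlinarith


structure IsSol (p : ℂ → ℂ) (l : ℂ) (v d : ℂ → ℂ) : Prop where
  hv : ∀ x, HasDerivAt v (d x) x
  hd : ∀ x, HasDerivAt d ((p x + l) * v x) x

lemma IsSol.wronsk {p : ℂ → ℂ} {l : ℂ} {v d w e : ℂ → ℂ} (h : IsSol p l v d) (h' : IsSol p l w e) (x y : ℂ) :
    v x * e x - d x * w x = v y * e y - d y * w y := by
  have key : ∀ x, HasDerivAt (fun x => v x * e x - d x * w x) 0 x := by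
    intro x
    have := ((h.hv x).mul (h'.hd x)).sub ((h.hd x).mul (h'.hv x))
    have h9 : HasDerivAt (fun x => v x * e x - d x * w x) _ x := this
    exact h9.congr_deriv (by ring)
  exact is_const_of_deriv_eq_zero (fun x => (key x).differentiableAt) (fun x => (key x).deriv) x y

lemma IsSol.lin {p : ℂ → ℂ} {l : ℂ} {v d w e : ℂ → ℂ} (h : IsSol p l v d) (h' : IsSol p l w e) (a b : ℂ) :
    IsSol p l (fun x => a * v x + b * w x) (fun x => a * d x + b * e x) := by
  refine ⟨fun x => ((h.hv x).const_mul a).add ((h'.hv x).const_mul b), fun x => ?_⟩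
  have h9 : HasDerivAt (fun x => a * d x + b * e x) _ x := ((h.hd x).const_mul a).add ((h'.hd x).const_mul b)
  exact h9.congr_deriv (by ring)

lemma IsSol.repr {p : ℂ → ℂ} {l : ℂ} {v d C C1 S S1 : ℂ → ℂ} {x0 : ℂ} (h : IsSol p l v d)
    (hC : IsSol p l C C1) (hS : IsSol p l S S1) (h1 : C x0 = 1) (h2 : C1 x0 = 0) (h3 : S x0 = 0) (h4 : S1 x0 = 1)
    (x : ℂ) : v x = v x0 * C x + d x0 * S x ∧ d x = v x0 * C1 x + d x0 * S1 x := by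
  have w1 := hC.wronsk hS x x0
  have w2 := h.wronsk hS x x0
  have w3 := hC.wronsk h x x0
  rw [h1, h2, h3, h4] at w1
  rw [h3, h4] at w2
  rw [h1, h2] at w3
  constructor
  · linear_combination (-v x) * w1 + C x * w2 + S x * w3
  · linear_combination (-d x) * w1 + C1 x * w2 + S1 x * w3

lemma exists_fund0 (P : Polynomial ℂ) : ∃ F F1 : ℂ → ℂ → ℂ → ℂ → ℂ,
    (∀ α β l, IsSol (fun x => P.eval x) l (F α β l) (F1 α β l) ∧ F α β l 0 = α ∧ F1 α β l 0 = β) ∧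
    ∀ α β x, Differentiable ℂ (fun l => F α β l x) ∧ Differentiable ℂ (fun l => F1 α β l x) := by
  set q : ℂ → ℕ → ℂ := fun l k => P.coeff k + if k = 0 then l else 0 with hq
  set N := P.natDegree with hN
  have hqd : ∀ k, Differentiable ℂ (fun l => q l k) := by
    intro k
    simp only [hq]
    by_cases h : k = 0
    · simp only [h, if_true]; fun_prop
    · simp only [h, if_false]; fun_prop
  have hq0 : ∀ l k, N < k → q l k = 0 := by
    intro l k hk
    simp only [hq]
    rw [Polynomial.coeff_eq_zero_of_natDegree_lt hk, if_neg (by omega), add_zero]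
  have ent : ∀ α β r, EntU (fun l n => cf (q l) α β n) (Metric.ball 0 r) := by
    intro α β r R hR
    set M := (∑ k ∈ Finset.range (N + 1), ‖P.coeff k‖) + |r| with hM
    have hM0 : 0 ≤ M := by positivity
    obtain ⟨G, hG⟩ := cf_bound N M hM0 α β R hR
    refine ⟨G, fun l hl n => hG (q l) (fun k => ?_) (hq0 l) n⟩
    rw [mem_ball_zero_iff] at hl
    by_cases hk : N < k
    · rw [hq0 l k hk, norm_zero]; exact hM0
    · simp only [hq]
      refine (norm_add_le _ _).trans (add_le_add ?_ ?_)
      · exact Finset.single_le_sum (f := fun k => ‖P.coeff k‖) (fun _ _ => norm_nonneg _)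
          (Finset.mem_range.2 (by omega))
      · by_cases h : k = 0
        · simp only [h, if_true]; exact hl.le.trans (le_abs_self r)
        · simp [h]
  have hmem : ∀ l : ℂ, l ∈ Metric.ball (0 : ℂ) (‖l‖ + 1) := by intro l; simp
  have glob : ∀ f : ℂ → ℂ, (∀ r, DifferentiableOn ℂ f (Metric.ball 0 r)) → Differentiable ℂ f := by
    intro f h l
    exact (h (‖l‖ + 1)).differentiableAt (Metric.isOpen_ball.mem_nhds (hmem l))
  refine ⟨fun α β l x => ∑' n, cf (q l) α β n * x ^ n,
    fun α β l x => ∑' n : ℕ, (((n : ℂ) + 1) * cf (q l) α β (n + 1)) * x ^ n, ?_, ?_⟩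
  · intro α β l
    refine ⟨⟨fun x => (ent α β _).deriv_x (hmem l) x, fun x => ?_⟩, ?_, ?_⟩
    · have := (ent α β _).shift.deriv_x (hmem l) x
      refine this.congr_deriv ?_
      have hs := (ent α β _).summable (hmem l) x
      have hqs : Summable (fun n => ‖q l n * x ^ n‖) := by
        apply summable_of_hasFiniteSupport
        apply (Finset.range (N + 1)).finite_toSet.subset
        intro k hk
        simp only [Finset.coe_range, mem_Iio]
        by_contra h
        apply hk
        simp only
        rw [hq0 l k (by omega), zero_mul, norm_zero]
      have hP : P.eval x + l = ∑' n, q l n * x ^ n := by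
        rw [tsum_eq_sum (s := Finset.range (N + 1))]
        · simp only [hq, add_mul, Finset.sum_add_distrib]
          rw [Polynomial.eval_eq_sum_range]
          simp [hN]
        · intro k hk
          rw [Finset.mem_range] at hk
          rw [hq0 l k (by omega), zero_mul]
      simp only
      rw [hP, tsum_mul_tsum_eq_tsum_sum_range_of_summable_norm hqs hs]
      refine tsum_congr fun n => ?_
      rw [cf_succ, Finset.sum_mul]
      refine Finset.sum_congr rfl fun k hk => ?_
      rw [Finset.mem_range] at hk
      have : x ^ n = x ^ k * x ^ (n - k) := by rw [← pow_add]; congr 1; omega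
      rw [this]; ring
    · simp only
      rw [tsum_eq_single 0]
      · simp [cf]
      · intro n hn; simp [hn]
    · simp only
      rw [tsum_eq_single 0]
      · simp [cf]
      · intro n hn; simp [hn]
  · intro α β x
    constructor
    · exact glob _ fun r => (ent α β r).diff_l Metric.isOpen_ball (cf_diff q hqd α β) x
    · exact glob _ fun r => (ent α β r).shift.diff_l Metric.isOpen_ball
        (fun n => (cf_diff q hqd α β (n + 1)).const_mul _) x

lemma exists_fund (P : Polynomial ℂ) (x0 : ℂ) : ∃ F F1 : ℂ → ℂ → ℂ → ℂ → ℂ,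
    (∀ α β l, IsSol (fun x => P.eval x) l (F α β l) (F1 α β l) ∧ F α β l x0 = α ∧ F1 α β l x0 = β) ∧
    ∀ α β x, Differentiable ℂ (fun l => F α β l x) ∧ Differentiable ℂ (fun l => F1 α β l x) := by
  obtain ⟨F, F1, h1, h2⟩ := exists_fund0 (P.comp (Polynomial.X + Polynomial.C x0))
  refine ⟨fun α β l x => F α β l (x - x0), fun α β l x => F1 α β l (x - x0), fun α β l => ?_, fun α β x => h2 _ _ _⟩
  obtain ⟨s, i1, i2⟩ := h1 α β l
  refine ⟨⟨fun x => ?_, fun x => ?_⟩, by simpa using i1, by simpa using i2⟩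
  · exact HasDerivAt.comp_sub_const x x0 (s.hv _)
  · have := HasDerivAt.comp_sub_const x x0 (s.hd (x - x0))
    simpa using this


lemma mono_of_deriv' {f f' : ℝ → ℝ} {a : ℝ} (h : ∀ t, HasDerivAt f (f' t) t) (hp : ∀ t, a < t → 0 ≤ f' t) :
    MonotoneOn f (Ici a) := by
  apply monotoneOn_of_deriv_nonneg (convex_Ici a)
  · exact fun t _ => (h t).continuousAt.continuousWithinAt
  · exact fun t _ => (h t).differentiableAt.differentiableWithinAt
  · intro t ht
    rw [interior_Ici] at ht
    rw [(h t).deriv]; exact hp t ht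

/-- A solution on a half line of `y'' = q y` with `Re q ≥ 1`. -/
structure HalfSol (X : ℝ) (q y y1 : ℝ → ℂ) : Prop where
  hy : ∀ t, HasDerivAt y (y1 t) t
  hy1 : ∀ t, HasDerivAt y1 (q t * y t) t
  hq : ∀ t, X ≤ t → 1 ≤ (q t).re

namespace HalfSol
variable {X : ℝ} {q y y1 : ℝ → ℂ}

lemma hf (h : HalfSol X q y y1) (t : ℝ) :
    HasDerivAt (fun t => ‖y t‖ ^ 2) (2 * (starRingEnd ℂ (y t) * y1 t).re) t := hasDerivAt_normsq (h.hy t)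

lemma hg (h : HalfSol X q y y1) (t : ℝ) :
    HasDerivAt (fun t => (starRingEnd ℂ (y t) * y1 t).re) (‖y1 t‖ ^ 2 + (q t).re * ‖y t‖ ^ 2) t := by
  have h1 : HasDerivAt (fun t => starRingEnd ℂ (y t)) (starRingEnd ℂ (y1 t)) t := (h.hy t).star
  have h2 : HasDerivAt (fun t => starRingEnd ℂ (y t) * y1 t) _ t := h1.mul (h.hy1 t)
  have h3 : HasDerivAt (fun t => (starRingEnd ℂ (y t) * y1 t).re) _ t := Complex.reCLM.hasFDerivAt.comp_hasDerivAt t h2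
  refine h3.congr_deriv ?_
  rw [Complex.reCLM_apply]
  rw [Complex.sq_norm, Complex.sq_norm, normSq_apply, normSq_apply]
  simp only [mul_re, add_re, conj_re, conj_im, mul_im]
  ring

lemma mono_g (h : HalfSol X q y y1) : MonotoneOn (fun t => (starRingEnd ℂ (y t) * y1 t).re) (Ici X) := by
  refine mono_of_deriv' h.hg fun t ht => ?_
  have := h.hq t ht.le
  positivity

lemma grow_f (h : HalfSol X q y y1) {a t : ℝ} (ha : X ≤ a) (hat : a ≤ t) :
    ‖y a‖ ^ 2 + 2 * (starRingEnd ℂ (y a) * y1 a).re * (t - a) ≤ ‖y t‖ ^ 2 := by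
  have key : MonotoneOn (fun t => ‖y t‖ ^ 2 - 2 * (starRingEnd ℂ (y a) * y1 a).re * t) (Ici a) := by
    have hd : ∀ t, HasDerivAt (fun t => ‖y t‖ ^ 2 - 2 * (starRingEnd ℂ (y a) * y1 a).re * t)
      (2 * (starRingEnd ℂ (y t) * y1 t).re - 2 * (starRingEnd ℂ (y a) * y1 a).re * 1) t := fun t =>
        (h.hf t).sub ((hasDerivAt_id t).const_mul (2 * (starRingEnd ℂ (y a) * y1 a).re))
    refine mono_of_deriv' hd fun s hs => ?_
    have := h.mono_g (show a ∈ Ici X from ha) (show s ∈ Ici X from ha.trans hs.le) hs.le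
    simp only at this
    linarith
  have := key (show a ∈ Ici a from le_refl a) (show t ∈ Ici a from hat) hat
  simp only at this
  linarith

lemma g_nonpos (h : HalfSol X q y y1) {B : ℝ} (hB : ∀ t, X ≤ t → ‖y t‖ ≤ B) {a : ℝ} (ha : X ≤ a) :
    (starRingEnd ℂ (y a) * y1 a).re ≤ 0 := by
  by_contra hc
  push Not at hc
  set g := (starRingEnd ℂ (y a) * y1 a).re with hg
  have hB0 : 0 ≤ B := (norm_nonneg _).trans (hB a ha)
  have hpos : 0 ≤ (B ^ 2 + 1) / (2 * g) := by positivity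
  have h1 := h.grow_f ha (t := a + (B ^ 2 + 1) / (2 * g)) (by linarith)
  have h2 := hB (a + (B ^ 2 + 1) / (2 * g)) (by linarith)
  have h3 : ‖y (a + (B ^ 2 + 1) / (2 * g))‖ ^ 2 ≤ B ^ 2 := by gcongr
  rw [← hg] at h1
  have h4 : 2 * g * (a + (B ^ 2 + 1) / (2 * g) - a) = B ^ 2 + 1 := by
    rw [add_sub_cancel_left]; field_simp
  rw [h4] at h1
  nlinarith [sq_nonneg ‖y a‖]

lemma le_of_g (h : HalfSol X q y y1) {T : ℝ} (hT : (starRingEnd ℂ (y T) * y1 T).re ≤ 0) {a t : ℝ} (ha : X ≤ a)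
    (hat : a ≤ t) (htT : t ≤ T) : ‖y t‖ ≤ ‖y a‖ := by
  have hd : AntitoneOn (fun t => ‖y t‖ ^ 2) (Icc X T) := by
    apply antitoneOn_of_deriv_nonpos (convex_Icc _ _)
    · exact fun t _ => (h.hf t).continuousAt.continuousWithinAt
    · exact fun t _ => (h.hf t).differentiableAt.differentiableWithinAt
    · intro s hs
      rw [interior_Icc] at hs
      rw [(h.hf s).deriv]
      have := h.mono_g (show s ∈ Ici X from hs.1.le) (show T ∈ Ici X from (hs.1.trans hs.2).le) hs.2.le
      simp only at this
      linarith
  have := hd ⟨ha, hat.trans htT⟩ ⟨ha.trans hat, htT⟩ hat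
  exact le_of_sq_le_sq this (norm_nonneg _)

lemma tendsto_zero (h : HalfSol X q y y1) {B : ℝ} (hB : ∀ t, X ≤ t → ‖y t‖ ≤ B) :
    Tendsto y atTop (nhds 0) := by
  rw [Metric.tendsto_atTop]
  intro ε hε
  suffices ∃ T, X ≤ T ∧ ‖y T‖ < ε by
    obtain ⟨T, hXT, hT⟩ := this
    refine ⟨T, fun t ht => ?_⟩
    rw [dist_zero_right]
    exact (h.le_of_g (h.g_nonpos hB (hXT.trans ht)) hXT ht le_rfl).trans_lt hT
  by_contra hc
  push Not at hc
  have key : MonotoneOn (fun t => (starRingEnd ℂ (y t) * y1 t).re - ε ^ 2 * t) (Ici X) := by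
    have hd : ∀ t, HasDerivAt (fun t => (starRingEnd ℂ (y t) * y1 t).re - ε ^ 2 * t)
      ((‖y1 t‖ ^ 2 + (q t).re * ‖y t‖ ^ 2) - ε ^ 2 * 1) t := fun t =>
        (h.hg t).sub ((hasDerivAt_id t).const_mul (ε ^ 2))
    refine mono_of_deriv' hd fun s hs => ?_
    have h1 := hc s hs.le
    have h2 : ε ^ 2 ≤ ‖y s‖ ^ 2 := by gcongr
    nlinarith [h.hq s hs.le, sq_nonneg ‖y1 s‖, sq_nonneg ‖y s‖]
  set g := (starRingEnd ℂ (y X) * y1 X).re with hg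
  have hgX : g ≤ 0 := h.g_nonpos hB le_rfl
  have hp : 0 ≤ (1 - g) / ε ^ 2 := by apply div_nonneg; linarith; positivity
  have h1 := key (show X ∈ Ici X from le_refl X) (show X + (1 - g) / ε ^ 2 ∈ Ici X from by simp [hp]) (by linarith)
  simp only at h1
  have h2 := h.g_nonpos hB (a := X + (1 - g) / ε ^ 2) (by linarith)
  have h3 : ε ^ 2 * (X + (1 - g) / ε ^ 2) = ε ^ 2 * X + (1 - g) := by field_simp
  rw [h3] at h1
  linarith

lemma g_lower (h : HalfSol X q y y1) (h0 : y X = 0) {T : ℝ} (hT : X < T) :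
    ‖y T‖ ^ 2 ≤ (T - X) * (starRingEnd ℂ (y T) * y1 T).re := by
  have hT' : 0 < T - X := by linarith
  set a : ℂ := y T / ((T - X : ℝ) : ℂ) with ha
  have hd : ∀ t, HasDerivAt (fun t => (starRingEnd ℂ (y t) * y1 t).re - 2 * (starRingEnd ℂ a * y t).re + ‖a‖ ^ 2 * t)
      ((‖y1 t‖ ^ 2 + (q t).re * ‖y t‖ ^ 2) - 2 * (starRingEnd ℂ a * y1 t).re + ‖a‖ ^ 2 * 1) t := by
    intro t
    have h1 : HasDerivAt (fun t => starRingEnd ℂ a * y t) (starRingEnd ℂ a * y1 t) t := (h.hy t).const_mul _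
    have h2 : HasDerivAt (fun t => (starRingEnd ℂ a * y t).re) (starRingEnd ℂ a * y1 t).re t :=
      Complex.reCLM.hasFDerivAt.comp_hasDerivAt t h1
    exact ((h.hg t).sub (h2.const_mul 2)).add ((hasDerivAt_id t).const_mul _)
  have key := mono_of_deriv' (a := X) hd (by
    intro t ht
    have h1 := h.hq t ht.le
    have h2 : 0 ≤ (q t).re * ‖y t‖ ^ 2 := by positivity
    have h3 : 0 ≤ ‖y1 t‖ ^ 2 - 2 * (starRingEnd ℂ a * y1 t).re + ‖a‖ ^ 2 := by
      rw [Complex.sq_norm, Complex.sq_norm, normSq_apply, normSq_apply]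
      simp only [mul_re, conj_re, conj_im]
      nlinarith [sq_nonneg ((y1 t).re - a.re), sq_nonneg ((y1 t).im - a.im)]
    linarith)
  have h1 := key (show X ∈ Ici X from le_refl X) (show T ∈ Ici X from hT.le) hT.le
  simp only [h0, map_zero, zero_mul, mul_zero, zero_re] at h1
  have e1 : (starRingEnd ℂ a * y T).re = ‖y T‖ ^ 2 / (T - X) := by
    rw [ha, map_div₀, conj_ofReal, div_mul_eq_mul_div, mul_comm, Complex.mul_conj, div_ofReal_re, ofReal_re, Complex.sq_norm]
  have e2 : ‖a‖ ^ 2 = ‖y T‖ ^ 2 / (T - X) ^ 2 := by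
    rw [ha, norm_div, Complex.norm_real, Real.norm_of_nonneg hT'.le, div_pow]
  rw [e1, e2] at h1
  have e3 : ‖y T‖ ^ 2 / (T - X) ^ 2 * T - ‖y T‖ ^ 2 / (T - X) ^ 2 * X = ‖y T‖ ^ 2 / (T - X) := by
    field_simp
  have : ‖y T‖ ^ 2 / (T - X) ≤ (starRingEnd ℂ (y T) * y1 T).re := by linarith
  rw [div_le_iff₀ hT'] at this
  linarith

lemma growth_s (h : HalfSol X q y y1) (h0 : y X = 0) (h1 : ‖y1 X‖ = 1) {T : ℝ} (hT : X < T) :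
    T - X ≤ ‖y T‖ := by
  have hm : MonotoneOn (fun t => ‖y t‖ ^ 2 / (t - X) ^ 2) (Ioi X) := by
    have hd : ∀ t, X < t → HasDerivAt (fun t => ‖y t‖ ^ 2 / (t - X) ^ 2)
      ((2 * (starRingEnd ℂ (y t) * y1 t).re * (t - X) ^ 2 - ‖y t‖ ^ 2 * (2 * (t - X))) / ((t - X) ^ 2) ^ 2) t := by
      intro t ht
      have h2 : HasDerivAt (fun t => (t - X) ^ 2) (2 * (t - X)) t := by
        have := ((hasDerivAt_id t).sub_const X).pow 2
        refine this.congr_deriv ?_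
        simp
      exact (h.hf t).div h2 (by have : t - X ≠ 0 := by linarith
                                positivity)
    apply monotoneOn_of_deriv_nonneg (convex_Ioi X)
    · exact fun t ht => (hd t ht).continuousAt.continuousWithinAt
    · rw [interior_Ioi]
      exact fun t ht => (hd t ht).differentiableAt.differentiableWithinAt
    · rw [interior_Ioi]
      intro t ht
      rw [(hd t ht).deriv]
      apply div_nonneg _ (by positivity)
      have h3 := h.g_lower h0 ht
      have : 0 < t - X := by have : X < t := ht
                             linarith
      nlinarith
  have hlim : Tendsto (fun t => ‖y t‖ ^ 2 / (t - X) ^ 2) (nhdsWithin X (Ioi X)) (nhds 1) := by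
    have h2 := hasDerivWithinAt_iff_tendsto_slope.1 ((h.hy X).hasDerivWithinAt (s := Ioi X))
    have h3 := (h2.norm.pow 2)
    rw [h1, one_pow] at h3
    have e : Ioi X \ {X} = Ioi X := by ext; simp
    rw [e] at h3
    refine h3.congr' ?_
    filter_upwards [self_mem_nhdsWithin] with t ht
    rw [slope_def_module, h0, sub_zero, norm_smul, mul_pow, Real.norm_eq_abs, sq_abs, inv_pow]
    ring
  have hle : 1 ≤ ‖y T‖ ^ 2 / (T - X) ^ 2 := by
    refine le_of_tendsto hlim ?_
    filter_upwards [Ioo_mem_nhdsGT hT] with t ht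
    exact hm ht.1 hT ht.2.le
  have hT' : 0 < T - X := by linarith
  rw [le_div_iff₀ (by positivity), one_mul] at hle
  exact le_of_sq_le_sq hle (norm_nonneg _)

end HalfSol


lemma hasDerivAt_ray' {v d : ℂ → ℂ} (h : ∀ x, HasDerivAt v (d x) x) (w : ℂ) (t : ℝ) :
    HasDerivAt (fun t : ℝ => v (w * t)) (w * d (w * t)) t := by
  have h1 : HasDerivAt (fun t : ℝ => w * (t : ℂ)) (w * 1) t := (Complex.ofRealCLM.hasDerivAt (x := t)).const_mul w
  have h2 := HasDerivAt.comp t (h (w * t)) h1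
  exact h2.congr_deriv (by ring)

lemma IsSol.half {p : ℂ → ℂ} {l : ℂ} {v d : ℂ → ℂ} (h : IsSol p l v d) {w : ℂ} {X : ℝ}
    (hX : ∀ t : ℝ, X ≤ t → 1 ≤ (w ^ 2 * (p (w * t) + l)).re) :
    HalfSol X (fun t => w ^ 2 * (p (w * t) + l)) (fun t => v (w * t)) (fun t => w * d (w * t)) := by
  refine ⟨fun t => hasDerivAt_ray' h.hv w t, fun t => ?_, hX⟩
  have := (hasDerivAt_ray' h.hd w t).const_mul w
  exact this.congr_deriv (by ring)

theorem decay_family (P : Polynomial ℂ) (w : ℂ) (hw : ‖w‖ = 1) (X R : ℝ)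
    (hX : ∀ l ∈ Metric.ball (0 : ℂ) R, ∀ t : ℝ, X ≤ t → 1 ≤ (w ^ 2 * (P.eval (w * t) + l)).re) :
    ∃ f f1 : ℂ → ℂ → ℂ, (∀ l ∈ Metric.ball (0 : ℂ) R, IsSol (fun x => P.eval x) l (f l) (f1 l) ∧
      f l (w * X) = 1 ∧ Tendsto (fun t : ℝ => f l (w * t)) atTop (nhds 0) ∧
      ∀ v d, IsSol (fun x => P.eval x) l v d → Tendsto (fun t : ℝ => v (w * t)) atTop (nhds 0) →
        ∀ x, v x = v (w * X) * f l x ∧ d x = v (w * X) * f1 l x) ∧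
    ∀ x, DifferentiableOn ℂ (fun l => f l x) (Metric.ball 0 R) ∧
      DifferentiableOn ℂ (fun l => f1 l x) (Metric.ball 0 R) := by
  obtain ⟨F, F1, hF, hFd⟩ := exists_fund P (w * X)
  have hs : ∀ l ∈ Metric.ball (0 : ℂ) R, ∀ t : ℝ, X < t → t - X ≤ ‖F 0 1 l (w * t)‖ := by
    intro l hl t ht
    obtain ⟨s, i1, i2⟩ := hF 0 1 l
    exact (s.half (hX l hl)).growth_s i1 (by simp [i2, hw]) ht
  set T : ℕ → ℝ := fun n => X + n + 1 with hT
  have hTX : ∀ n, X < T n := by intro n; simp only [hT]; have : (0 : ℝ) ≤ n := by positivity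
                                linarith
  have hTn : ∀ n, T n - X = n + 1 := by intro n; simp only [hT]; ring
  set W : ℕ → ℂ → ℂ := fun n l => - F 1 0 l (w * T n) / F 0 1 l (w * T n) with hW
  have hs0 : ∀ l ∈ Metric.ball (0 : ℂ) R, ∀ n, F 0 1 l (w * T n) ≠ 0 := by
    intro l hl n h0
    have := hs l hl (T n) (hTX n)
    rw [h0, norm_zero, hTn] at this
    have : (0 : ℝ) ≤ n := by positivity
    linarith
  have hWd : ∀ n, DifferentiableOn ℂ (W n) (Metric.ball 0 R) := by
    intro n
    exact ((hFd 1 0 _).1.differentiableOn.fun_neg).fun_div (hFd 0 1 _).1.differentiableOn (fun l hl => hs0 l hl n)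
  have hsol : ∀ c l, IsSol (fun x => P.eval x) l (fun x => 1 * F 1 0 l x + c * F 0 1 l x)
      (fun x => 1 * F1 1 0 l x + c * F1 0 1 l x) := fun c l => (hF 1 0 l).1.lin (hF 0 1 l).1 1 c
  have hone : ∀ c l, 1 * F 1 0 l (w * X) + c * F 0 1 l (w * X) = 1 := by
    intro c l
    rw [(hF 1 0 l).2.1, (hF 0 1 l).2.1]; ring
  have hb : ∀ l ∈ Metric.ball (0 : ℂ) R, ∀ n, ∀ t, X ≤ t → t ≤ T n →
      ‖1 * F 1 0 l (w * t) + W n l * F 0 1 l (w * t)‖ ≤ 1 := by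
    intro l hl n t h1 h2
    have h0 : 1 * F 1 0 l (w * T n) + W n l * F 0 1 l (w * T n) = 0 := by
      simp only [hW]
      have := hs0 l hl n
      field_simp
      ring
    have h3 := ((hsol (W n l) l).half (hX l hl)).le_of_g (T := T n) (by
      simp only [h0, map_zero, zero_mul, zero_re]; exact le_rfl) le_rfl h1 h2
    simp only [hone, norm_one] at h3
    exact h3
  have hdist : ∀ l ∈ Metric.ball (0 : ℂ) R, ∀ n k, n ≤ k → ‖W k l - W n l‖ ≤ 1 / ((n : ℝ) + 1) := by
    intro l hl n k hnk
    have h1 := hb l hl k (T n) (hTX n).le (by simp only [hT]; gcongr)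
    have h0 : 1 * F 1 0 l (w * T n) + W n l * F 0 1 l (w * T n) = 0 := by
      simp only [hW]
      have := hs0 l hl n
      field_simp
      ring
    have h2 : 1 * F 1 0 l (w * T n) + W k l * F 0 1 l (w * T n) = (W k l - W n l) * F 0 1 l (w * T n) := by
      linear_combination h0
    rw [h2, norm_mul] at h1
    have h3 := hs l hl (T n) (hTX n)
    rw [hTn] at h3
    rw [le_div_iff₀ (by positivity)]
    exact (mul_le_mul_of_nonneg_left h3 (norm_nonneg _)).trans h1
  have hcau : ∀ l, ∃ z, l ∈ Metric.ball (0 : ℂ) R → Tendsto (fun n => W n l) atTop (nhds z) := by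
    intro l
    by_cases hl : l ∈ Metric.ball (0 : ℂ) R
    · have : CauchySeq (fun n => W n l) := by
        refine cauchySeq_of_le_tendsto_0 (fun n => 2 * (1 / ((n : ℝ) + 1))) (fun n k N hn hk => ?_) ?_
        · have h1 := hdist l hl N n hn
          have h2 := hdist l hl N k hk
          rw [dist_eq_norm]
          calc ‖W n l - W k l‖ = ‖(W n l - W N l) - (W k l - W N l)‖ := by congr 1; ring
            _ ≤ _ := by refine (norm_sub_le _ _).trans ?_; linarith
        · simpa using (tendsto_one_div_add_atTop_nhds_zero_nat (𝕜 := ℝ)).const_mul 2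
      obtain ⟨z, hz⟩ := cauchySeq_tendsto_of_complete this
      exact ⟨z, fun _ => hz⟩
    · exact ⟨0, fun h => absurd h hl⟩
  choose Wl hWl using hcau
  have hWlim : ∀ l ∈ Metric.ball (0 : ℂ) R, ∀ n, ‖Wl l - W n l‖ ≤ 1 / ((n : ℝ) + 1) := by
    intro l hl n
    refine le_of_tendsto ((hWl l hl).sub_const (W n l)).norm ?_
    filter_upwards [eventually_ge_atTop n] with k hk using hdist l hl n k hk
  have hWld : DifferentiableOn ℂ Wl (Metric.ball 0 R) := by
    have hu : TendstoUniformlyOn W Wl atTop (Metric.ball 0 R) := by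
      rw [Metric.tendstoUniformlyOn_iff]
      intro ε hε
      have := (tendsto_one_div_add_atTop_nhds_zero_nat (𝕜 := ℝ)).eventually_lt_const hε
      filter_upwards [this] with n hn l hl
      rw [dist_eq_norm]
      exact (hWlim l hl n).trans_lt hn
    exact hu.tendstoLocallyUniformlyOn.differentiableOn (Eventually.of_forall hWd) Metric.isOpen_ball
  refine ⟨fun l x => 1 * F 1 0 l x + Wl l * F 0 1 l x, fun l x => 1 * F1 1 0 l x + Wl l * F1 0 1 l x, ?_, ?_⟩
  · intro l hl
    have hbd : ∀ t, X ≤ t → ‖1 * F 1 0 l (w * t) + Wl l * F 0 1 l (w * t)‖ ≤ 1 := by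
      intro t ht
      have hlim : Tendsto (fun n => ‖1 * F 1 0 l (w * t) + W n l * F 0 1 l (w * t)‖) atTop
          (nhds ‖1 * F 1 0 l (w * t) + Wl l * F 0 1 l (w * t)‖) :=
        (((hWl l hl).mul_const _).const_add _).norm
      refine le_of_tendsto hlim ?_
      obtain ⟨N, hN⟩ := exists_nat_ge (t - X)
      filter_upwards [eventually_ge_atTop N] with n hn
      refine hb l hl n t ht ?_
      simp only [hT]
      have : (N : ℝ) ≤ n := by exact_mod_cast hn
      linarith
    have hdec : Tendsto (fun t : ℝ => 1 * F 1 0 l (w * t) + Wl l * F 0 1 l (w * t)) atTop (nhds 0) :=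
      ((hsol (Wl l) l).half (hX l hl)).tendsto_zero hbd
    refine ⟨hsol _ _, hone _ _, hdec, ?_⟩
    intro v d hv hlim
    have hr := hv.repr (hF 1 0 l).1 (hF 0 1 l).1 (hF 1 0 l).2.1 (hF 1 0 l).2.2 (hF 0 1 l).2.1 (hF 0 1 l).2.2
    have hz : d (w * X) - v (w * X) * Wl l = 0 := by
      by_contra hne
      have h1 : Tendsto (fun t : ℝ => v (w * t) - v (w * X) * (1 * F 1 0 l (w * t) + Wl l * F 0 1 l (w * t)))
          atTop (nhds (0 - v (w * X) * 0)) := hlim.sub (hdec.const_mul _)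
      have h2 : (fun t : ℝ => v (w * t) - v (w * X) * (1 * F 1 0 l (w * t) + Wl l * F 0 1 l (w * t))) =
          fun t : ℝ => (d (w * X) - v (w * X) * Wl l) * F 0 1 l (w * t) := by
        ext t
        rw [(hr (w * t)).1]; ring
      rw [h2, mul_zero, sub_zero] at h1
      have h3 := h1.norm.eventually_lt_const (u := ‖d (w * X) - v (w * X) * Wl l‖) (by simpa using hne)
      obtain ⟨t, ht, ht2⟩ := (h3.and (eventually_ge_atTop (X + 1))).exists
      have h4 := hs l hl t (by linarith)
      rw [norm_mul] at ht
      have h5 : 0 < ‖d (w * X) - v (w * X) * Wl l‖ := by simpa using hne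
      nlinarith
    intro x
    have h1 := hr x
    constructor
    · rw [h1.1]; linear_combination F 0 1 l x * hz
    · rw [h1.2]; linear_combination F1 0 1 l x * hz
  · intro x
    exact ⟨((hFd 1 0 x).1.differentiableOn.const_mul 1).fun_add (hWld.fun_mul (hFd 0 1 x).1.differentiableOn),
      ((hFd 1 0 x).2.differentiableOn.const_mul 1).fun_add (hWld.fun_mul (hFd 0 1 x).2.differentiableOn)⟩


/-- The polynomial `x^m + P(x)`. -/
noncomputable def Pol (m : ℕ) (a : ℕ → ℝ) : Polynomial ℂ :=
  Polynomial.X ^ m + ∑ j ∈ Finset.Icc 1 (m - 1), Polynomial.C (a j : ℂ) * Polynomial.X ^ (m - j)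

lemma Pol_eval (m : ℕ) (a : ℕ → ℝ) (x : ℂ) :
    (Pol m a).eval x = x ^ m + Ppoly m (fun j => (a j : ℂ)) x := by
  unfold Pol Ppoly
  simp [Polynomial.eval_finsetSum]

lemma Pol_conj (m : ℕ) (a : ℕ → ℝ) (x : ℂ) :
    (Pol m a).eval (starRingEnd ℂ x) = starRingEnd ℂ ((Pol m a).eval x) := by
  rw [Pol_eval, Pol_eval]
  unfold Ppoly
  simp [map_sum]

noncomputable def A0 (m : ℕ) (a : ℕ → ℝ) : ℝ := ∑ j ∈ Finset.Icc 1 (m - 1), |a j|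

lemma A0_nonneg (m : ℕ) (a : ℕ → ℝ) : 0 ≤ A0 m a := Finset.sum_nonneg fun _ _ => abs_nonneg _

lemma Ppoly_bound (m : ℕ) (a : ℕ → ℝ) {k : ℝ} (hk : 1 ≤ k) (s : ℂ) :
    ‖Ppoly m (fun j => (a j : ℂ)) (k * s)‖ ≤ A0 m a * k ^ (m - 1) * (1 + ‖s‖ ^ (m - 1)) := by
  unfold Ppoly A0
  rw [Finset.sum_mul, Finset.sum_mul]
  refine (norm_sum_le _ _).trans (Finset.sum_le_sum fun j hj => ?_)
  rw [Finset.mem_Icc] at hj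
  rw [norm_mul, norm_pow, norm_mul, Complex.norm_real, Complex.norm_real, Real.norm_of_nonneg (by linarith : 0 ≤ k),
    mul_pow, Real.norm_eq_abs, mul_assoc]
  have h1 : k ^ (m - j) ≤ k ^ (m - 1) := pow_le_pow_right₀ hk (by omega)
  have h2 : ‖s‖ ^ (m - j) ≤ 1 + ‖s‖ ^ (m - 1) := by
    by_cases hs : ‖s‖ ≤ 1
    · have := pow_le_one₀ (n := m - j) (norm_nonneg s) hs
      have : 0 ≤ ‖s‖ ^ (m - 1) := by positivity
      linarith
    · have := pow_le_pow_right₀ (not_le.1 hs).le (by omega : m - j ≤ m - 1)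
      linarith
  gcongr

/-- Solutions decaying on both rays. -/
structure EV (m : ℕ) (a : ℕ → ℝ) (l : ℂ) (v d : ℂ → ℂ) : Prop where
  sol : IsSol (fun x => (Pol m a).eval x) l v d
  nt : ∃ x, v x ≠ 0
  lim : Tendsto (fun t : ℝ => v (om m * t)) atTop (nhds 0)
  lim' : Tendsto (fun t : ℝ => v (starRingEnd ℂ (om m) * t)) atTop (nhds 0)

lemma IsSol.nontriv {P : Polynomial ℂ} {l : ℂ} {v d : ℂ → ℂ} (h : IsSol (fun x => P.eval x) l v d)
    (hn : ∃ x, v x ≠ 0) (x : ℂ) (hx : v x = 0) : d x ≠ 0 := by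
  intro hd
  obtain ⟨F, F1, hF, -⟩ := exists_fund P x
  obtain ⟨z, hz⟩ := hn
  apply hz
  have hr := (h.repr (hF 1 0 l).1 (hF 0 1 l).1 (hF 1 0 l).2.1 (hF 1 0 l).2.2 (hF 0 1 l).2.1 (hF 0 1 l).2.2 z).1
  rw [hr, hx, hd]; ring

lemma IsSol.conj {m : ℕ} {a : ℕ → ℝ} {l : ℂ} {v d : ℂ → ℂ} (h : IsSol (fun x => (Pol m a).eval x) l v d) :
    IsSol (fun x => (Pol m a).eval x) (starRingEnd ℂ l) (fun x => starRingEnd ℂ (v (starRingEnd ℂ x)))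
      (fun x => starRingEnd ℂ (d (starRingEnd ℂ x))) := by
  constructor
  · intro x
    have := (h.hv (starRingEnd ℂ x)).conj_conj
    simp only [Complex.conj_conj] at this
    exact this
  · intro x
    have := (h.hd (starRingEnd ℂ x)).conj_conj
    simp only [Complex.conj_conj] at this
    refine HasDerivAt.congr_deriv this ?_
    simp only [map_mul, map_add, Pol_conj, Complex.conj_conj]

lemma lim_conj {v : ℂ → ℂ} {w : ℂ} (h : Tendsto (fun t : ℝ => v (w * t)) atTop (nhds 0)) :
    Tendsto (fun t : ℝ => starRingEnd ℂ (v (starRingEnd ℂ (starRingEnd ℂ w * t)))) atTop (nhds 0) := by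
  have h2 := (Complex.continuous_conj.tendsto 0).comp h
  simpa [Function.comp_def] using h2

lemma EV.conj {m : ℕ} {a : ℕ → ℝ} {l : ℂ} {v d : ℂ → ℂ} (h : EV m a l v d) :
    EV m a (starRingEnd ℂ l) (fun x => starRingEnd ℂ (v (starRingEnd ℂ x)))
      (fun x => starRingEnd ℂ (d (starRingEnd ℂ x))) := by
  refine ⟨h.sol.conj, ?_, ?_, lim_conj h.lim⟩
  · obtain ⟨x, hx⟩ := h.nt
    exact ⟨starRingEnd ℂ x, by simpa using hx⟩
  · have := lim_conj h.lim'
    rwa [Complex.conj_conj] at this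

lemma eig_EV {m : ℕ} {a : ℕ → ℝ} {l : ℂ} (h : IsEigenvalue m (fun j => (a j : ℂ)) l) :
    ∃ v d, EV m a l v d := by
  obtain ⟨u, hu, hnc, hode, h1, h2⟩ := h
  have hu1 : ∀ z, HasDerivAt u (deriv u z) z := fun z => (hu z).hasDerivAt
  have hu2 : ∀ z, HasDerivAt (deriv u) (deriv (deriv u) z) z := fun z => by
    have : Differentiable ℂ (deriv u) := by
      have h3 : ContDiff ℂ 2 u := hu.contDiff
      exact (h3.differentiable_deriv_two)
    exact (this z).hasDerivAt
  have hin : ∀ x : ℂ, HasDerivAt (fun x : ℂ => -I * x) (-I) x := fun x => by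
    simpa using (hasDerivAt_id x).const_mul (-I)
  refine ⟨fun x => u (-I * x), fun x => -I * deriv u (-I * x), ⟨⟨fun x => ?_, fun x => ?_⟩, ?_, ?_, ?_⟩⟩
  · have := HasDerivAt.comp x (hu1 (-I * x)) (hin x)
    exact this.congr_deriv (by ring)
  · have := (HasDerivAt.comp x (hu2 (-I * x)) (hin x)).const_mul (-I)
    refine HasDerivAt.congr_deriv this ?_
    have h3 := hode (-I * x)
    have e : I * (-I * x) = x := by
      linear_combination (-x) * I_sq
    rw [e] at h3
    simp only [Pol_eval]
    linear_combination h3 + deriv (deriv u) (-I * x) * I_sq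
  · by_contra hc
    push Not at hc
    apply hnc
    refine ⟨0, fun z => ?_⟩
    have := hc (I * z)
    rwa [show -I * (I * z) = z by linear_combination (-z) * I_sq] at this
  · refine h1.congr fun r => ?_
    congr 1
    have : Complex.exp (((-(Real.pi / 2) + 2 * Real.pi / ((m : ℝ) + 2) : ℝ) : ℂ) * Complex.I) = -I * om m := by
      unfold om bet
      rw [← Complex.exp_neg_pi_div_two_mul_I, ← Complex.exp_add]
      congr 1
      push_cast; ring
    rw [this]; ring
  · refine h2.congr fun r => ?_
    congr 1
    have : Complex.exp (((-(Real.pi / 2) - 2 * Real.pi / ((m : ℝ) + 2) : ℝ) : ℂ) * Complex.I)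
        = -I * starRingEnd ℂ (om m) := by
      unfold om bet
      rw [← Complex.exp_conj, ← Complex.exp_neg_pi_div_two_mul_I, ← Complex.exp_add]
      congr 1
      rw [map_mul, conj_ofReal, conj_I]
      push_cast; ring
    rw [this]; ring

lemma scale {m : ℕ} (hm : 3 ≤ m) {a : ℕ → ℝ} {l : ℂ} {v d : ℂ → ℂ}
    (h : IsSol (fun x => (Pol m a).eval x) l v d) (hn : ∃ x, v x ≠ 0)
    (hl : Tendsto (fun t : ℝ => v (om m * t)) atTop (nhds 0)) {k : ℝ} (hk : 1 ≤ k) :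
    SolEq m (√(k ^ (m + 2))) (A0 m a / k) (l / (k : ℂ) ^ m) (fun s => v (k * s)) (fun s => k * d (k * s))
      (fun s => Ppoly m (fun j => (a j : ℂ)) (k * s) / (k : ℂ) ^ m) := by
  have hk0 : 0 < k := by linarith
  have hkc : (k : ℂ) ≠ 0 := by exact_mod_cast hk0.ne'
  have hin : ∀ x : ℂ, HasDerivAt (fun x : ℂ => (k : ℂ) * x) k x := fun x => by
    simpa using (hasDerivAt_id x).const_mul (k : ℂ)
  refine ⟨fun x => ?_, fun x => ?_, fun x => ?_, fun x hx => ?_, ?_⟩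
  · have := HasDerivAt.comp x (h.hv (k * x)) (hin x)
    exact this.congr_deriv (by ring)
  · have := (HasDerivAt.comp x (h.hd (k * x)) (hin x)).const_mul (k : ℂ)
    refine HasDerivAt.congr_deriv this ?_
    have e : ((√(k ^ (m + 2)) : ℝ) : ℂ) ^ 2 = (k : ℂ) ^ (m + 2) := by
      rw [← ofReal_pow, Real.sq_sqrt (by positivity), ofReal_pow]
    rw [e]
    simp only [Pol_eval]
    field_simp
    ring
  · rw [norm_div, norm_pow, Complex.norm_real, Real.norm_of_nonneg hk0.le, div_le_iff₀ (by positivity)]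
    refine (Ppoly_bound m a hk x).trans (le_of_eq ?_)
    have : k ^ m = k ^ (m - 1) * k := by rw [← pow_succ]; congr 1; omega
    rw [this]
    field_simp
  · exact mul_ne_zero hkc (h.nontriv hn _ hx)
  · have h1 : Tendsto (fun t : ℝ => k * t) atTop atTop := tendsto_id.const_mul_atTop hk0
    refine (hl.comp h1).congr fun t => ?_
    simp only [Function.comp_apply]
    congr 1; push_cast; ring

lemma exists_X {m : ℕ} (hm : 3 ≤ m) (a : ℕ → ℝ) (R : ℝ) : ∃ X : ℝ, 0 ≤ X ∧
    ∀ l ∈ Metric.ball (0 : ℂ) R, ∀ t : ℝ, X ≤ t → 1 ≤ (om m ^ 2 * ((Pol m a).eval (om m * t) + l)).re := by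
  have hA := A0_nonneg m a
  refine ⟨2 * A0 m a + |R| + 1, by positivity, fun l hl t ht => ?_⟩
  rw [mem_ball_zero_iff] at hl
  have hR := le_abs_self R
  have ht1 : 1 ≤ t := by linarith [abs_nonneg R]
  have hP := Ppoly_bound m a (le_refl 1) (om m * t)
  rw [ofReal_one, one_mul, one_pow, mul_one, norm_mul, norm_om, one_mul, Complex.norm_real,
    Real.norm_of_nonneg (by linarith)] at hP
  set p := Ppoly m (fun j => (a j : ℂ)) (om m * t) with hp
  have e : om m ^ 2 * ((Pol m a).eval (om m * t) + l) = (t : ℂ) ^ m + om m ^ 2 * (p + l) := by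
    rw [Pol_eval, mul_pow, ← hp]
    linear_combination (t : ℂ) ^ m * om_pow m
  rw [e, add_re, ← ofReal_pow, ofReal_re]
  have h1 := Complex.abs_re_le_norm (om m ^ 2 * (p + l))
  rw [norm_mul, norm_pow, norm_om, one_pow, one_mul] at h1
  have h2 := (abs_le.1 h1).1
  have h3 := norm_add_le p l
  have h4 : t ^ m = t * t ^ (m - 1) := by rw [← pow_succ']; congr 1; omega
  have h5 : 1 ≤ t ^ (m - 1) := one_le_pow₀ ht1
  rw [h4]
  nlinarith [abs_nonneg R]


lemma exists_large {m : ℕ} (hm : 3 ≤ m) (A K0 ν0 : ℝ) (hν : 0 < ν0) (hA : 0 ≤ A) :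
    ∃ k0 : ℝ, 1 ≤ k0 ∧ ∀ k, k0 ≤ k → K0 ≤ √(k ^ (m + 2)) ∧ A / k ≤ ν0 := by
  refine ⟨max 1 (max |K0| (A / ν0)), le_max_left _ _, fun k hk => ?_⟩
  simp only [max_le_iff] at hk
  obtain ⟨h1, h2, h3⟩ := hk
  constructor
  · apply (le_abs_self K0).trans
    apply Real.le_sqrt_of_sq_le
    calc |K0| ^ 2 ≤ k ^ 2 := by gcongr
      _ ≤ k ^ (m + 2) := pow_le_pow_right₀ h1 (by omega)
  · rw [div_le_iff₀ hν] at h3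
    rw [div_le_iff₀ (by linarith)]
    linarith

lemma clean2 {m : ℕ} {e : ℂ} (he : ‖e‖ = 1) (hi : 0 ≤ e.im) (hs : 0 < Real.sin (2 * bet m)) :
    Real.sin (2 * bet m) ^ 2 / 2 ≤ ‖om m ^ 2 * starRingEnd ℂ e‖ + (om m ^ 2 * starRingEnd ℂ e).re := by
  rw [norm_mul, norm_pow, norm_om, RCLike.norm_conj, he, mul_re, om_sq_re, om_sq_im, conj_re, conj_im]
  have h1 : e.re ^ 2 + e.im ^ 2 = 1 := by
    have := Complex.sq_norm e
    rw [he, normSq_apply] at this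
    linarith
  have h2 := Real.sin_sq_add_cos_sq (2 * bet m)
  nlinarith [sq_nonneg (e.re + Real.cos (2 * bet m)), mul_nonneg hi hs.le, sq_nonneg e.im]

theorem region2_aux {m : ℕ} (hm : 3 ≤ m) (a : ℕ → ℝ) {c : ℝ} (hc : 0 < c) :
    ∃ Λ : ℝ, ∀ l v d, EV m a l v d → Λ ≤ ‖l‖ → c * ‖l‖ ≤ l.im → False := by
  have hs := sin2_pos hm
  set s := Real.sin (2 * bet m) with hsd
  obtain ⟨L, K0, ν0, hL, hK0, hν0, H⟩ := theoremM hm (c := s ^ 2 / 2) (ε := s * c / 16) (by positivity) (by positivity)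
  obtain ⟨k0, hk0, hk⟩ := exists_large hm (A0 m a) K0 ν0 hν0 (A0_nonneg m a)
  refine ⟨k0 ^ m, fun l v d h hl him => ?_⟩
  have hl1 : 1 ≤ ‖l‖ := (one_le_pow₀ hk0).trans hl
  set k : ℝ := ‖l‖ ^ (1 / (m : ℝ)) with hkd
  have hkm : k ^ m = ‖l‖ := by
    rw [hkd, ← Real.rpow_natCast, ← Real.rpow_mul (norm_nonneg _), one_div_mul_cancel, Real.rpow_one]
    exact_mod_cast (by omega : m ≠ 0)
  have hkpos : 0 ≤ k := by positivity
  have hkk : k0 ≤ k := by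
    rw [← hkm] at hl
    exact le_of_pow_le_pow_left₀ (by omega) hkpos hl
  obtain ⟨hK, hν⟩ := hk k hkk
  have hk1 : 1 ≤ k := hk0.trans hkk
  set K := √(k ^ (m + 2)) with hKd
  have hKpos : 0 < K := by linarith
  have s1 := scale hm h.sol h.nt h.lim hk1
  have s2 := scale hm h.conj.sol h.conj.nt h.conj.lim hk1
  have hν' : 0 ≤ A0 m a / k := div_nonneg (A0_nonneg m a) hkpos
  set e := l / (k : ℂ) ^ m with hed
  have hen : ‖e‖ = 1 := by
    rw [hed, norm_div, norm_pow, Complex.norm_real, Real.norm_of_nonneg hkpos, hkm, div_self (by linarith)]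
  have heim : e.im = l.im / ‖l‖ := by
    rw [hed, ← ofReal_pow, div_ofReal_im, hkm]
  have hei : c ≤ e.im := by rw [heim, le_div_iff₀ (by linarith)]; exact him
  have hce : starRingEnd ℂ l / (k : ℂ) ^ m = starRingEnd ℂ e := by
    rw [hed, map_div₀, map_pow, conj_ofReal]
  rw [hce] at s2
  obtain ⟨n1, u1, -⟩ := H _ _ _ _ _ _ s1 hK hν' hν (by rw [hen]; norm_num)
  obtain ⟨n2, -, u2⟩ := H _ _ _ _ _ _ s2 hK hν' hν (by rw [RCLike.norm_conj, hen]; norm_num)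
  have u3 := (u2 (clean2 hen (by linarith) hs)).2
  simp only [mul_zero, map_zero, RCLike.norm_conj, map_mul, conj_ofReal] at u1 u3
  have hp : 0 < ‖v (k * L)‖ := by simpa using n1
  have h3 := le_of_mul_le_mul_right (u3.trans u1) hp
  rw [Real.exp_le_exp] at h3
  have h4 := le_of_mul_le_mul_left h3 hKpos
  have h5 := Phi_gap hm (e := e) (by rw [hen]; norm_num) (by linarith) hL
  rw [← hsd] at h5
  have h6 : s * c ≤ s * e.im := by gcongr
  have h7 : 0 < s * c := by positivity
  linarith

theorem region2 {m : ℕ} (hm : 3 ≤ m) (a : ℕ → ℝ) {c : ℝ} (hc : 0 < c) :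
    ∃ Λ : ℝ, ∀ l v d, EV m a l v d → Λ ≤ ‖l‖ → c * ‖l‖ ≤ |l.im| → False := by
  obtain ⟨Λ, H⟩ := region2_aux hm a hc
  refine ⟨Λ, fun l v d h hl him => ?_⟩
  rcases le_total 0 l.im with h0 | h0
  · rw [abs_of_nonneg h0] at him
    exact H l v d h hl him
  · rw [abs_of_nonpos h0] at him
    exact H _ _ _ h.conj (by rwa [RCLike.norm_conj]) (by rwa [RCLike.norm_conj, conj_im])

theorem om_re_im (m : ℕ) : (om m).re = Real.cos (bet m) ∧ (om m).im = Real.sin (bet m) := by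
  unfold om
  exact ⟨Complex.exp_ofReal_mul_I_re _, Complex.exp_ofReal_mul_I_im _⟩

theorem sin1_pos {m : ℕ} (hm : 3 ≤ m) : 0 < Real.sin (bet m) := by
  have := bet_bounds hm
  have hp := Real.pi_pos
  apply Real.sin_pos_of_pos_of_lt_pi <;> linarith

/-- The lower bound used in the region of negative real part. -/
lemma lower3 {m : ℕ} (hm : 3 ≤ m) (a : ℕ → ℝ) : ∃ Λ : ℝ, 0 < Λ ∧ ∀ l : ℂ, Λ ≤ ‖l‖ → l.re ≤ 0 →
    |l.im| ≤ Real.sin (bet m) / 4 * ‖l‖ → ∀ t : ℝ, 0 ≤ t →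
    1 ≤ -(om m * ((Pol m a).eval (om m * t) + l)).im := by
  have hs := sin1_pos hm
  have hs1 := Real.sin_le_one (bet m)
  set s := Real.sin (bet m) with hsd
  have hA := A0_nonneg m a
  set T := A0 m a / s with hT
  have hT0 : 0 ≤ T := by positivity
  set C := A0 m a * (1 + T ^ (m - 1)) with hC
  have hC0 : 0 ≤ C := by positivity
  refine ⟨2 * (C + 1) / s, by positivity, fun l hl hre him t ht => ?_⟩
  rw [div_le_iff₀ hs] at hl
  have hP := Ppoly_bound m a (le_refl 1) (om m * t)
  rw [ofReal_one, one_mul, one_pow, mul_one, norm_mul, norm_om, one_mul, Complex.norm_real,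
    Real.norm_of_nonneg ht] at hP
  set p := Ppoly m (fun j => (a j : ℂ)) (om m * t) with hp
  have e : om m * ((Pol m a).eval (om m * t) + l) = ((t ^ m : ℝ) : ℂ) * starRingEnd ℂ (om m) + om m * p + om m * l := by
    have h1 : om m * starRingEnd ℂ (om m) = 1 := by
      rw [Complex.mul_conj, Complex.normSq_eq_norm_sq, norm_om]; simp
    have h2 : om m ^ (m + 1) = starRingEnd ℂ (om m) := by
      have := om_pow m
      have h3 : om m * om m ^ (m + 1) = om m * starRingEnd ℂ (om m) := by
        rw [h1, ← this]; ring
      exact mul_left_cancel₀ (om_ne m) h3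
    rw [Pol_eval, mul_pow, ← hp, ← h2]
    push_cast
    ring
  rw [e, add_im, add_im, im_ofReal_mul, conj_im, mul_im (om m) l, (om_re_im m).1, (om_re_im m).2, ← hsd]
  have h1 := (le_abs_self _).trans (Complex.abs_im_le_norm (om m * p))
  rw [norm_mul, norm_om, one_mul] at h1
  have h2 : Real.cos (bet m) * l.im ≤ |l.im| := by
    refine (le_abs_self _).trans ?_
    rw [abs_mul]
    exact mul_le_of_le_one_left (abs_nonneg _) (Real.abs_cos_le_one _)
  have h3 := Complex.norm_le_abs_re_add_abs_im l
  rw [abs_of_nonpos hre] at h3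
  have h4 : t ^ m = t * t ^ (m - 1) := by rw [← pow_succ']; congr 1; omega
  have h5 : A0 m a * (1 + t ^ (m - 1)) ≤ s * t ^ m + C := by
    have hTs : T * s = A0 m a := div_mul_cancel₀ _ hs.ne'
    have ht' : 0 ≤ t ^ (m - 1) := by positivity
    by_cases htT : t ≤ T
    · have : t ^ (m - 1) ≤ T ^ (m - 1) := by gcongr
      have h6 : 0 ≤ s * t ^ m := by positivity
      have h7 : A0 m a * (1 + t ^ (m - 1)) ≤ C := by rw [hC]; gcongr
      linarith
    · have h6 : A0 m a * t ^ (m - 1) ≤ s * t ^ m := by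
        rw [h4, ← hTs]
        have : T * (s * t ^ (m - 1)) ≤ t * (s * t ^ (m - 1)) := by
          gcongr; exact (not_le.1 htT).le
        linarith
      have h7 : A0 m a ≤ C := by
        rw [hC]
        have : 0 ≤ A0 m a * T ^ (m - 1) := by positivity
        linarith
      linarith
  have h8 : s * (‖l‖ - |l.im|) ≤ s * (-l.re) := by gcongr; linarith
  have h9 : s * |l.im| ≤ |l.im| := mul_le_of_le_one_left (abs_nonneg _) hs1
  nlinarith

lemma H_nonpos {m : ℕ} (hm : 3 ≤ m) {a : ℕ → ℝ} {l : ℂ} {v d : ℂ → ℂ}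
    (h : IsSol (fun x => (Pol m a).eval x) l v d) (hn : ∃ x, v x ≠ 0)
    (hlim : Tendsto (fun t : ℝ => v (om m * t)) atTop (nhds 0))
    (hlow : ∀ t : ℝ, 0 ≤ t → 1 ≤ -(om m * ((Pol m a).eval (om m * t) + l)).im) :
    0 < (starRingEnd ℂ (v 0) * d 0).im := by
  set y : ℝ → ℂ := fun t => v (om m * t) with hy
  set y1 : ℝ → ℂ := fun t => om m * d (om m * t) with hy1
  have hs := sin1_pos hm
  have D1 : ∀ t, HasDerivAt y (y1 t) t := fun t => hasDerivAt_ray' h.hv _ t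
  have D2 : ∀ t : ℝ, HasDerivAt y1 (om m ^ 2 * ((Pol m a).eval (om m * t) + l) * y t) t := fun t => by
    have := (hasDerivAt_ray' h.hd (om m) t).const_mul (om m)
    exact this.congr_deriv (by ring)
  set H : ℝ → ℝ := fun t => -(starRingEnd ℂ (y t) * (starRingEnd ℂ (om m) * y1 t)).im with hH
  have h1 : om m * starRingEnd ℂ (om m) = 1 := by
    rw [Complex.mul_conj, Complex.normSq_eq_norm_sq, norm_om]; simp
  have DH : ∀ t : ℝ, HasDerivAt H (Real.sin (bet m) * ‖y1 t‖ ^ 2 +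
      (-(om m * ((Pol m a).eval (om m * t) + l)).im) * ‖y t‖ ^ 2) t := by
    intro t
    have i1 : HasDerivAt (fun t => starRingEnd ℂ (y t)) (starRingEnd ℂ (y1 t)) t := (D1 t).star
    have i2 : HasDerivAt (fun t => starRingEnd ℂ (y t) * (starRingEnd ℂ (om m) * y1 t)) _ t :=
      i1.mul ((D2 t).const_mul (starRingEnd ℂ (om m)))
    have i3 : HasDerivAt (fun t => (starRingEnd ℂ (y t) * (starRingEnd ℂ (om m) * y1 t)).im) _ t :=
      Complex.imCLM.hasFDerivAt.comp_hasDerivAt t i2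
    refine i3.neg.congr_deriv ?_
    rw [Complex.imCLM_apply]
    have e1 : starRingEnd ℂ (om m) * (om m ^ 2 * ((Pol m a).eval (om m * t) + l) * y t)
       = om m * ((Pol m a).eval (om m * t) + l) * y t := by
      linear_combination (om m * ((Pol m a).eval (om m * t) + l) * y t) * h1
    rw [e1]
    generalize om m * ((Pol m a).eval (om m * t) + l) = q
    have e2 : starRingEnd ℂ (y1 t) * (starRingEnd ℂ (om m) * y1 t) + starRingEnd ℂ (y t) * (q * y t)
      = ((‖y1 t‖ ^ 2 : ℝ) : ℂ) * starRingEnd ℂ (om m) + ((‖y t‖ ^ 2 : ℝ) : ℂ) * q := by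
      rw [← Complex.normSq_eq_norm_sq, ← Complex.normSq_eq_norm_sq, ← Complex.mul_conj, ← Complex.mul_conj]
      ring
    rw [e2, add_im, im_ofReal_mul, im_ofReal_mul, conj_im, (om_re_im m).2]
    ring
  have hne : ∀ t : ℝ, 0 < ‖y1 t‖ ^ 2 + ‖y t‖ ^ 2 := by
    intro t
    by_cases h0 : y t = 0
    · have h2 : y1 t ≠ 0 := mul_ne_zero (om_ne m) (h.nontriv hn _ h0)
      have : 0 < ‖y1 t‖ := by simpa using h2
      positivity
    · have : 0 < ‖y t‖ := by simpa using h0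
      positivity
  have hmono : StrictMonoOn H (Ici 0) := by
    apply strictMonoOn_of_deriv_pos (convex_Ici 0)
    · exact fun t _ => (DH t).continuousAt.continuousWithinAt
    · intro t ht
      rw [interior_Ici] at ht
      rw [(DH t).deriv]
      have h2 := hlow t (le_of_lt ht)
      by_cases h0 : y t = 0
      · have h3 := hne t
        rw [h0, norm_zero] at h3 ⊢
        have : 0 < ‖y1 t‖ ^ 2 := by simpa using h3
        have := mul_pos hs this
        simpa using this
      · have : 0 < ‖y t‖ := by simpa using h0
        positivity
  have hle : ∀ t, 0 ≤ t → H t ≤ 0 := by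
    intro t1 ht1
    by_contra hc
    push Not at hc
    obtain ⟨X, hX0, hX⟩ := exists_X hm a (‖l‖ + 1)
    refine no_growth (y := y) (y1 := y1) (q := fun t => om m ^ 2 * ((Pol m a).eval (om m * t) + l))
      (t1 := max X t1) (δ := 2 * H t1) (by positivity) (fun t _ => D1 t) (fun t _ => D2 t) (fun t ht => ?_) hlim
    rw [max_le_iff] at ht
    have i1 := hX l (by simp) t ht.1
    have i2 := hmono.monotoneOn (show t1 ∈ Ici (0 : ℝ) from ht1) (show t ∈ Ici (0 : ℝ) from ht1.trans ht.2) ht.2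
    have i3 : H t ≤ ‖y t‖ * ‖y1 t‖ := by
      have := (neg_le_abs _).trans (Complex.abs_im_le_norm (starRingEnd ℂ (y t) * (starRingEnd ℂ (om m) * y1 t)))
      rwa [norm_mul, norm_mul, RCLike.norm_conj, RCLike.norm_conj, norm_om, one_mul] at this
    nlinarith [sq_nonneg (‖y t‖ - ‖y1 t‖), sq_nonneg ‖y t‖]
  have h3 := hmono (show (0 : ℝ) ∈ Ici (0 : ℝ) by simp) (show (1 : ℝ) ∈ Ici (0 : ℝ) by simp) one_pos
  have h4 := hle 1 zero_le_one
  have h5 : H 0 = -(starRingEnd ℂ (v 0) * d 0).im := by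
    simp only [hH, hy, hy1, ofReal_zero, mul_zero]
    congr 2
    linear_combination (starRingEnd ℂ (v 0) * d 0) * h1
  linarith

theorem region3 {m : ℕ} (hm : 3 ≤ m) (a : ℕ → ℝ) :
    ∃ Λ : ℝ, 0 < Λ ∧ ∀ l v d, EV m a l v d → Λ ≤ ‖l‖ → l.re ≤ 0 →
      |l.im| ≤ Real.sin (bet m) / 4 * ‖l‖ → False := by
  obtain ⟨Λ, h0, H⟩ := lower3 hm a
  refine ⟨Λ, h0, fun l v d h hl hre him => ?_⟩
  have h1 := H_nonpos hm h.sol h.nt h.lim (H l hl hre him)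
  have h2 := H_nonpos hm h.conj.sol h.conj.nt h.conj.lim (H _ (by rwa [RCLike.norm_conj]) (by rwa [conj_re])
    (by rwa [RCLike.norm_conj, conj_im, abs_neg]))
  simp only [map_zero, Complex.conj_conj] at h2
  simp only [mul_im, conj_re, conj_im] at h1 h2
  linarith


lemma diffOn_conj_conj {f : ℂ → ℂ} {R : ℝ} (h : DifferentiableOn ℂ f (Metric.ball 0 R)) :
    DifferentiableOn ℂ (fun l => starRingEnd ℂ (f (starRingEnd ℂ l))) (Metric.ball 0 R) := by
  intro l hl
  have hl' : starRingEnd ℂ l ∈ Metric.ball (0 : ℂ) R := by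
    rw [mem_ball_zero_iff] at hl ⊢
    rwa [RCLike.norm_conj]
  have h1 := (h.differentiableAt (Metric.isOpen_ball.mem_nhds hl')).conj_conj
  rw [Complex.conj_conj] at h1
  exact h1.differentiableWithinAt

theorem finite_bounded {m : ℕ} (hm : 3 ≤ m) (a : ℕ → ℝ) (R : ℝ) :
    {l : ℂ | (∃ v d, EV m a l v d) ∧ ‖l‖ ≤ R}.Finite := by
  obtain ⟨Λ, hΛ0, hΛ⟩ := region3 hm a
  set R' := max R Λ + 1 with hR'
  obtain ⟨X, hX0, hX⟩ := exists_X hm a R'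
  obtain ⟨f, f1, hf, hfd⟩ := decay_family (Pol m a) (om m) (norm_om m) X R' hX
  have hconj : ∀ l, l ∈ Metric.ball (0 : ℂ) R' → starRingEnd ℂ l ∈ Metric.ball (0 : ℂ) R' := by
    intro l hl
    rw [mem_ball_zero_iff] at hl ⊢
    rwa [RCLike.norm_conj]
  set D : ℂ → ℂ := fun l => f l 0 * starRingEnd ℂ (f1 (starRingEnd ℂ l) 0)
    - f1 l 0 * starRingEnd ℂ (f (starRingEnd ℂ l) 0) with hD
  have hDd : DifferentiableOn ℂ D (Metric.ball 0 R') :=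
    ((hfd 0).1.fun_mul (diffOn_conj_conj (hfd 0).2)).fun_sub ((hfd 0).2.fun_mul (diffOn_conj_conj (hfd 0).1))
  have hz : ∀ l ∈ Metric.ball (0 : ℂ) R', (∃ v d, EV m a l v d) → D l = 0 := by
    rintro l hl ⟨v, d, h⟩
    have h1 := (hf l hl).2.2.2 v d h.sol h.lim
    have h2 := (hf _ (hconj l hl)).2.2.2 _ _ h.conj.sol h.conj.lim
    set c1 := v (om m * X) with hc1
    set c2 := starRingEnd ℂ (v (starRingEnd ℂ (om m * X))) with hc2
    have n1 : c1 ≠ 0 := by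
      intro h0
      obtain ⟨x, hx⟩ := h.nt
      apply hx
      rw [(h1 x).1, h0, zero_mul]
    have n2 : c2 ≠ 0 := by
      intro h0
      obtain ⟨x, hx⟩ := h.conj.nt
      apply hx
      rw [(h2 x).1, h0, zero_mul]
    have a1 := (h1 0).1
    have a2 := (h1 0).2
    have b1 := (h2 0).1
    have b2 := (h2 0).2
    rw [map_zero] at b1 b2
    have b1' : v 0 = starRingEnd ℂ c2 * starRingEnd ℂ (f (starRingEnd ℂ l) 0) := by
      rw [← map_mul, ← b1, Complex.conj_conj]
    have b2' : d 0 = starRingEnd ℂ c2 * starRingEnd ℂ (f1 (starRingEnd ℂ l) 0) := by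
      rw [← map_mul, ← b2, Complex.conj_conj]
    have : c1 * starRingEnd ℂ c2 * D l = 0 := by
      simp only [hD]
      have : v 0 * d 0 - d 0 * v 0 = 0 := by ring
      calc _ = (c1 * f l 0) * (starRingEnd ℂ c2 * starRingEnd ℂ (f1 (starRingEnd ℂ l) 0))
          - (c1 * f1 l 0) * (starRingEnd ℂ c2 * starRingEnd ℂ (f (starRingEnd ℂ l) 0)) := by ring
        _ = v 0 * d 0 - d 0 * v 0 := by rw [← a1, ← a2, ← b1', ← b2']
        _ = 0 := this
    have hcc : c1 * starRingEnd ℂ c2 ≠ 0 := mul_ne_zero n1 (by simpa using n2)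
    exact (mul_eq_zero.1 this).resolve_left hcc
  have hnz : ∃ l ∈ Metric.ball (0 : ℂ) R', D l ≠ 0 := by
    refine ⟨((-Λ : ℝ) : ℂ), ?_, ?_⟩
    · rw [mem_ball_zero_iff, Complex.norm_real, norm_neg, Real.norm_of_nonneg hΛ0.le]
      have := le_max_right R Λ
      linarith
    · set l : ℂ := ((-Λ : ℝ) : ℂ) with hl
      have hlb : l ∈ Metric.ball (0 : ℂ) R' := by
        rw [mem_ball_zero_iff, Complex.norm_real, norm_neg, Real.norm_of_nonneg hΛ0.le]
        have := le_max_right R Λ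
        linarith
      have hcl : starRingEnd ℂ l = l := by rw [hl, conj_ofReal]
      intro h0
      obtain ⟨s, i1, i2, -⟩ := hf l hlb
      have s' := s.conj
      rw [hcl] at s'
      have nt : ∃ x, f l x ≠ 0 := ⟨_, by rw [i1]; exact one_ne_zero⟩
      have nt' : ∃ x, starRingEnd ℂ (f l (starRingEnd ℂ x)) ≠ 0 :=
        ⟨starRingEnd ℂ (om m * X), by rw [Complex.conj_conj, i1]; simp⟩
      simp only [hD, hcl] at h0
      have W : ∀ x, f l x * starRingEnd ℂ (f1 l (starRingEnd ℂ x))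
          - f1 l x * starRingEnd ℂ (f l (starRingEnd ℂ x)) = 0 := by
        intro x
        have := s.wronsk s' x 0
        simp only [map_zero] at this
        rw [this, h0]
      -- proportionality with constant read off at the base point
      set z := om m * (X : ℂ) with hzd
      set α := starRingEnd ℂ (f l (starRingEnd ℂ z)) with hα
      obtain ⟨F, F1, hF, -⟩ := exists_fund (Pol m a) z
      have r1 := s.repr (hF 1 0 l).1 (hF 0 1 l).1 (hF 1 0 l).2.1 (hF 1 0 l).2.2 (hF 0 1 l).2.1 (hF 0 1 l).2.2
      have r2 := s'.repr (hF 1 0 l).1 (hF 0 1 l).1 (hF 1 0 l).2.1 (hF 1 0 l).2.2 (hF 0 1 l).2.1 (hF 0 1 l).2.2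
      have Wz := W z
      rw [i1] at Wz
      have prop : ∀ x, starRingEnd ℂ (f l (starRingEnd ℂ x)) = α * f l x := by
        intro x
        rw [(r1 x).1, (r2 x).1, i1]
        linear_combination F 0 1 l x * Wz
      have hα0 : α ≠ 0 := by
        intro h
        obtain ⟨x, hx⟩ := nt'
        apply hx
        rw [prop, h, zero_mul]
      refine hΛ l (f l) (f1 l) ⟨s, nt, i2, ?_⟩ ?_ ?_ ?_
      · have h3 := (lim_conj i2).const_mul α⁻¹
        rw [mul_zero] at h3
        refine h3.congr fun t => ?_
        rw [prop, inv_mul_cancel_left₀ hα0]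
      · rw [hl, Complex.norm_real, norm_neg, Real.norm_of_nonneg hΛ0.le]
      · rw [hl, ofReal_re]; linarith
      · rw [hl, ofReal_im, abs_zero]
        have := sin1_pos hm
        positivity
  obtain ⟨l0, hl0, hDl0⟩ := hnz
  by_contra hinf
  have hsub : {l : ℂ | (∃ v d, EV m a l v d) ∧ ‖l‖ ≤ R} ⊆ Metric.closedBall 0 R := by
    intro l hl
    simpa using hl.2
  obtain ⟨z, hzb, hacc⟩ := Set.Infinite.exists_accPt_of_subset_isCompact hinf (isCompact_closedBall (0 : ℂ) R) hsub
  have hcb : Metric.closedBall (0 : ℂ) R ⊆ Metric.ball 0 R' := by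
    apply Metric.closedBall_subset_ball
    have := le_max_left R Λ
    linarith
  have han : AnalyticOnNhd ℂ D (Metric.ball 0 R') := hDd.analyticOnNhd Metric.isOpen_ball
  have hfreq : ∃ᶠ w in nhdsWithin z {z}ᶜ, D w = 0 := by
    rw [accPt_iff_frequently_nhdsNE] at hacc
    exact hacc.mono fun w hw => hz w (hcb (hsub hw)) hw.1
  have := han.eqOn_zero_of_preconnected_of_frequently_eq_zero (convex_ball _ _).isPreconnected (hcb hzb) hfreq
  exact hDl0 (this hl0)


/-- A quantitative Harnack-type estimate for nonvanishing holomorphic functions. -/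
lemma log_bound {G : ℂ → ℂ} {R M : ℝ} (hR : 0 < R) (hM : 0 < M)
    (hG : DifferentiableOn ℂ G (Metric.ball 0 R))
    (hlow : ∀ z ∈ Metric.ball (0 : ℂ) R, Real.exp (-M) ≤ ‖G z‖)
    (hup : ∀ z ∈ Metric.ball (0 : ℂ) R, ‖G z‖ ≤ Real.exp M) (w : ℂ) (hw : w ∈ Metric.ball (0 : ℂ) R) :
    |Real.log ‖G w‖ - Real.log ‖G 0‖| ≤ 2 * (2 * M) * ‖w‖ / (R - ‖w‖) := by
  have hpos : ∀ z ∈ Metric.ball (0 : ℂ) R, 0 < ‖G z‖ := fun z hz => (Real.exp_pos _).trans_le (hlow z hz)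
  have hne : ∀ z ∈ Metric.ball (0 : ℂ) R, G z ≠ 0 := fun z hz => norm_pos_iff.1 (hpos z hz)
  have h0 : (0 : ℂ) ∈ Metric.ball (0 : ℂ) R := Metric.mem_ball_self hR
  have hq : DifferentiableOn ℂ (fun z => deriv G z / G z) (Metric.ball 0 R) :=
    (hG.deriv Metric.isOpen_ball).div hG hne
  obtain ⟨g, g0, hg⟩ := hq.isExactOn_ball.with_val_at 0 0
  have hGd : ∀ z ∈ Metric.ball (0 : ℂ) R, HasDerivAt G (deriv G z) z := fun z hz =>
    (hG.differentiableAt (Metric.isOpen_ball.mem_nhds hz)).hasDerivAt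
  have hE : ∀ z ∈ Metric.ball (0 : ℂ) R, HasDerivAt (fun z => G z * Complex.exp (-g z)) 0 z := by
    intro z hz
    have := (hGd z hz).mul ((hg z hz).neg.cexp)
    refine this.congr_deriv ?_
    have h5 : G z * (deriv G z / G z) = deriv G z := mul_div_cancel₀ _ (hne z hz)
    linear_combination -Complex.exp (-g z) * h5
  have hconst : ∀ z ∈ Metric.ball (0 : ℂ) R, G z * Complex.exp (-g z) = G 0 := by
    intro z hz
    have := Metric.isOpen_ball.is_const_of_deriv_eq_zero (convex_ball (0 : ℂ) R).isPreconnected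
      (fun z hz => (hE z hz).differentiableAt.differentiableWithinAt) (fun z hz => (hE z hz).deriv) hz h0
    simpa [g0] using this
  have hre : ∀ z ∈ Metric.ball (0 : ℂ) R, (g z).re = Real.log ‖G z‖ - Real.log ‖G 0‖ := by
    intro z hz
    rw [← hconst z hz, norm_mul, Complex.norm_exp, Real.log_mul (hpos z hz).ne' (Real.exp_pos _).ne', Real.log_exp]
    simp
  rw [← hre w hw]
  refine (abs_re_le_norm _).trans ?_
  have hl : ∀ z ∈ Metric.ball (0 : ℂ) R, -M ≤ Real.log ‖G z‖ ∧ Real.log ‖G z‖ ≤ M := by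
    intro z hz
    exact ⟨(Real.le_log_iff_exp_le (hpos z hz)).2 (hlow z hz), (Real.log_le_iff_le_exp (hpos z hz)).2 (hup z hz)⟩
  refine Complex.borelCaratheodory_zero (by positivity)
    (fun z hz => (hg z hz).differentiableAt.differentiableWithinAt) ?_ hR hw g0
  intro z hz
  show (g z).re ≤ 2 * M
  rw [hre z hz]
  linarith [(hl z hz).2, (hl 0 h0).1]

lemma hasDerivAt_csq' {f : ℂ → ℂ} {f' : ℂ} {t : ℂ} (hf : HasDerivAt f f' t)
    (h : f t ∈ slitPlane) : HasDerivAt (fun t => csq (f t)) (f' / (2 * csq (f t))) t := by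
  have hz : f t ≠ 0 := slitPlane_ne_zero h
  have hc : csq (f t) ≠ 0 := by
    intro h0
    apply hz
    rw [← csq_sq (f t), h0]; simp
  have h1 := hf.cpow_const (c := (1 / 2 : ℂ)) h
  have h2 : f t ^ ((1 : ℂ) / 2 - 1) = 1 / csq (f t) := by
    rw [cpow_sub _ _ hz, cpow_one]
    change csq (f t) / f t = _
    nth_rewrite 2 [← csq_sq (f t)]
    field_simp
  rw [h2] at h1
  unfold csq at *
  convert h1 using 1
  field_simp

noncomputable def Jint (m : ℕ) (L : ℝ) (e : ℂ) : ℂ := ∫ t in (0 : ℝ)..L, csq ((t : ℂ) ^ m + om m ^ 2 * e)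

lemma Jint_ii {m : ℕ} {L c : ℝ} (hL : 0 < L) (hc : 0 < c) (hc4 : c ≤ 4) {e : ℂ} (he : ‖e‖ ≤ 2)
    (hcl : c ≤ ‖om m ^ 2 * e‖ + (om m ^ 2 * e).re) :
    IntervalIntegrable (fun t : ℝ => csq ((t : ℂ) ^ m + om m ^ 2 * e)) volume 0 L := by
  apply ContinuousOn.intervalIntegrable
  rw [uIcc_of_le hL.le]
  have hn : ‖om m ^ 2 * e‖ ≤ 2 := by simpa [norm_om] using he
  intro t ht
  have := (clean_low hcl hn hc4 (pow_nonneg ht.1 m)).1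
  push_cast at this
  have hsl := slit_of_clean (hc.trans_le this)
  unfold csq
  apply ContinuousAt.continuousWithinAt
  exact ContinuousAt.cpow (by fun_prop) continuousAt_const hsl

lemma Jint_re {m : ℕ} {L c : ℝ} (hL : 0 < L) (hc : 0 < c) (hc4 : c ≤ 4) {e : ℂ} (he : ‖e‖ ≤ 2)
    (hcl : c ≤ ‖om m ^ 2 * e‖ + (om m ^ 2 * e).re) :
    (Jint m L e).re = Phi m (om m ^ 2 * e) L := by
  unfold Jint Phi
  have := (Complex.reCLM.intervalIntegral_comp_comm (Jint_ii (m := m) hL hc hc4 he hcl))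
  simp only [reCLM_apply] at this
  rw [← this]
  simp only [csq_re]

lemma Jint_diff {m : ℕ} {L c : ℝ} (hL : 0 < L) (hc : 0 < c) (hc4 : c ≤ 4) {U : Set ℂ} (hU : IsOpen U)
    (he : ∀ e ∈ U, ‖e‖ ≤ 2) (hcl : ∀ e ∈ U, c ≤ ‖om m ^ 2 * e‖ + (om m ^ 2 * e).re) :
    DifferentiableOn ℂ (Jint m L) U := by
  intro e0 he0
  have hn : ∀ e ∈ U, ‖om m ^ 2 * e‖ ≤ 2 := fun e h => by simpa [norm_om] using he e h
  have hmeas : Measurable csq := by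
    unfold csq
    exact measurable_id.pow_const _
  have key := intervalIntegral.hasDerivAt_integral_of_dominated_loc_of_deriv_le (𝕜 := ℂ) (μ := volume) (a := 0) (b := L)
    (F := fun (e : ℂ) (t : ℝ) => csq ((t : ℂ) ^ m + om m ^ 2 * e))
    (F' := fun (e : ℂ) (t : ℝ) => om m ^ 2 / (2 * csq ((t : ℂ) ^ m + om m ^ 2 * e)))
    (bound := fun _ => 1 / (2 * √(c / 10)))
    (hU.mem_nhds he0) (Eventually.of_forall fun e => (hmeas.comp (by fun_prop)).aestronglyMeasurable)
    (Jint_ii hL hc hc4 (he e0 he0) (hcl e0 he0))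
    (Measurable.aestronglyMeasurable (Measurable.div measurable_const
      (measurable_const.mul (hmeas.comp (by fun_prop))))) ?_ (by simp) ?_
  · exact key.2.differentiableAt.differentiableWithinAt
  · refine Eventually.of_forall fun t ht e heU => ?_
    rw [uIoc_of_le hL.le] at ht
    have h1 := (clean_low (hcl e heU) (hn e heU) hc4 (pow_nonneg ht.1.le m)).2
    push_cast at h1
    have hT : 0 ≤ t ^ m := pow_nonneg ht.1.le m
    have h2 : √(c / 10) ≤ ‖csq ((t : ℂ) ^ m + om m ^ 2 * e)‖ := by
      refine le_trans ?_ (re_le_norm _)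
      rw [csq_re]
      apply Real.sqrt_le_iff.2 ⟨rsq_nonneg _, le_trans ?_ h1⟩
      nlinarith
    have h3 : 0 < √(c / 10) := by positivity
    rw [norm_div, norm_pow, norm_om, norm_mul, one_pow, Complex.norm_ofNat]
    gcongr
  · refine Eventually.of_forall fun t ht e heU => ?_
    rw [uIoc_of_le hL.le] at ht
    have h1 := (clean_low (hcl e heU) (hn e heU) hc4 (pow_nonneg ht.1.le m)).1
    push_cast at h1
    refine hasDerivAt_csq' (f := fun e => (t : ℂ) ^ m + om m ^ 2 * e) ?_ (slit_of_clean (hc.trans_le h1))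
    simpa using ((hasDerivAt_id e).const_mul (om m ^ 2)).const_add ((t : ℂ) ^ m)


lemma clean1 {m : ℕ} {s : ℝ} (hs : 0 < Real.sin (2 * bet m)) (hsd : s = Real.sin (2 * bet m)) {z : ℂ}
    (hz : ‖z‖ < s ^ 2 / 8) : ‖1 + z‖ ≤ 2 ∧ s ^ 2 / 4 ≤ ‖om m ^ 2 * (1 + z)‖ + (om m ^ 2 * (1 + z)).re := by
  have hs1 : s ≤ 1 := hsd ▸ Real.sin_le_one _
  have hs0 : 0 < s := hsd ▸ hs
  have hc := clean2 (m := m) (e := 1) (by simp) (by simp) hs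
  rw [← hsd] at hc
  simp only [map_one, mul_one, norm_pow, norm_om, one_pow] at hc
  have h1 : ‖1 + z‖ ≤ 1 + ‖z‖ := by simpa using norm_add_le (1 : ℂ) z
  have h2 : 1 - ‖z‖ ≤ ‖1 + z‖ := by simpa using norm_sub_norm_le (1 : ℂ) (-z)
  have h3 : |(om m ^ 2 * z).re| ≤ ‖z‖ :=
    (abs_re_le_norm (om m ^ 2 * z)).trans (by rw [norm_mul, norm_pow, norm_om, one_pow, one_mul])
  have h4 := (abs_le.1 h3).1
  have h5 : s ^ 2 ≤ 1 := by nlinarith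
  refine ⟨by linarith, ?_⟩
  rw [norm_mul, norm_pow, norm_om, mul_add, add_re, mul_one]
  linarith

lemma EV.ratio {m : ℕ} {a : ℕ → ℝ} {l : ℂ} {v d f f1 : ℂ → ℂ} (h : EV m a l v d) {b : ℂ}
    (hb : ∀ x, v x = b * f x ∧ d x = b * f1 x) (x y : ℂ) : ‖f x‖ / ‖f y‖ = ‖v x‖ / ‖v y‖ := by
  have hb0 : b ≠ 0 := by
    rintro rfl
    obtain ⟨x, hx⟩ := h.nt
    exact hx (by simp [(hb x).1])
  rw [(hb x).1, (hb y).1, norm_mul, norm_mul, mul_div_mul_left _ _ (norm_ne_zero_iff.2 hb0)]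

theorem region1_aux {m : ℕ} (hm : 3 ≤ m) (a : ℕ → ℝ) : ∃ c Λ : ℝ, 0 < c ∧ ∀ l v d, EV m a l v d →
    Λ ≤ ‖l‖ → 0 < l.re → 0 ≤ l.im → l.im ≤ c * ‖l‖ → l.im = 0 := by
  have hs := sin2_pos hm
  obtain ⟨s, hsd⟩ : ∃ s, s = Real.sin (2 * bet m) := ⟨_, rfl⟩
  have hs0 : 0 < s := hsd ▸ hs
  have hs1 : s ≤ 1 := hsd ▸ Real.sin_le_one _
  have hs2 : s ^ 2 ≤ 1 := by nlinarith
  obtain ⟨R1, hR1⟩ : ∃ R1, R1 = s ^ 2 / 8 := ⟨_, rfl⟩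
  have hR0 : 0 < R1 := by rw [hR1]; positivity
  obtain ⟨ε, hεd⟩ : ∃ ε, ε = s * R1 / 128 := ⟨_, rfl⟩
  have hε : 0 < ε := by rw [hεd]; positivity
  obtain ⟨L, K0, ν0, hL, hK0, hν0, H⟩ := theoremM hm (c := s ^ 2 / 4) (ε := ε) (by positivity) hε
  obtain ⟨k0, hk0, hk⟩ := exists_large hm (A0 m a) K0 ν0 hν0 (A0_nonneg m a)
  refine ⟨R1 / 4, 2 * k0 ^ m, by positivity, fun l v d h hl hre him himc => ?_⟩
  have hL0 : 0 < L := by linarith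
  have hnl : ‖l‖ ≤ l.re + l.im := by
    have := norm_le_abs_re_add_abs_im l
    rwa [abs_of_pos hre, abs_of_nonneg him] at this
  have hn0 : 0 ≤ ‖l‖ := norm_nonneg l
  have hR8 : R1 ≤ 1 / 8 := by rw [hR1]; linarith
  have him1 : l.im ≤ R1 / 2 * l.re := by nlinarith
  have hre2 : k0 ^ m ≤ l.re := by nlinarith
  obtain ⟨k, hkd⟩ : ∃ k : ℝ, k = l.re ^ (1 / (m : ℝ)) := ⟨_, rfl⟩
  have hkm : k ^ m = l.re := by
    rw [hkd, ← Real.rpow_natCast, ← Real.rpow_mul hre.le, one_div_mul_cancel, Real.rpow_one]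
    exact_mod_cast (by omega : m ≠ 0)
  have hkpos : 0 ≤ k := by rw [hkd]; positivity
  have hkk : k0 ≤ k := by
    rw [← hkm] at hre2
    exact le_of_pow_le_pow_left₀ (by omega) hkpos hre2
  obtain ⟨hK, hν⟩ := hk k hkk
  have hk1 : 1 ≤ k := hk0.trans hkk
  obtain ⟨K, hKd⟩ : ∃ K, K = √(k ^ (m + 2)) := ⟨_, rfl⟩
  rw [← hKd] at hK
  have hKpos : 0 < K := by linarith
  have hν' : 0 ≤ A0 m a / k := div_nonneg (A0_nonneg m a) hkpos
  have hkm0 : 0 < k ^ m := hkm ▸ hre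
  have hkmc : (k : ℂ) ^ m ≠ 0 := by exact_mod_cast hkm0.ne'
  obtain ⟨X, -, hX⟩ := exists_X hm a (2 * k ^ m)
  obtain ⟨f, f1, hf, hfd⟩ := decay_family (Pol m a) (om m) (norm_om m) X (2 * k ^ m) hX
  have hin : ∀ z ∈ Metric.ball (0 : ℂ) R1, (1 + z) * (k : ℂ) ^ m ∈ Metric.ball (0 : ℂ) (2 * k ^ m) := by
    intro z hz
    rw [mem_ball_zero_iff] at hz ⊢
    rw [norm_mul, norm_pow, Complex.norm_real, Real.norm_of_nonneg hkpos]
    have h1 : ‖1 + z‖ ≤ 1 + ‖z‖ := by simpa using norm_add_le (1 : ℂ) z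
    have : ‖1 + z‖ < 2 := by linarith
    gcongr
  have hcl : ∀ z ∈ Metric.ball (0 : ℂ) R1, ‖1 + z‖ ≤ 2 ∧
      s ^ 2 / 4 ≤ ‖om m ^ 2 * (1 + z)‖ + (om m ^ 2 * (1 + z)).re := by
    intro z hz
    rw [mem_ball_zero_iff, hR1] at hz
    exact clean1 hs hsd hz
  have hest : ∀ z ∈ Metric.ball (0 : ℂ) R1, f ((1 + z) * (k : ℂ) ^ m) (k * L) ≠ 0 ∧
      f ((1 + z) * (k : ℂ) ^ m) 0 ≠ 0 ∧
      ‖f ((1 + z) * (k : ℂ) ^ m) 0‖ ≤ Real.exp (K * (Phi m (om m ^ 2 * (1 + z)) L - tau m L + ε)) *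
        ‖f ((1 + z) * (k : ℂ) ^ m) (k * L)‖ ∧
      Real.exp (K * (Phi m (om m ^ 2 * (1 + z)) L - tau m L - ε)) * ‖f ((1 + z) * (k : ℂ) ^ m) (k * L)‖ ≤
        ‖f ((1 + z) * (k : ℂ) ^ m) 0‖ := by
    intro z hz
    obtain ⟨q1, q2, q3, -⟩ := hf _ (hin z hz)
    have sc := scale hm q1 ⟨_, by rw [q2]; exact one_ne_zero⟩ q3 hk1
    rw [mul_div_cancel_right₀ _ hkmc, ← hKd] at sc
    obtain ⟨u1, u2, u3⟩ := H _ _ _ _ _ _ sc hK hν' hν (hcl z hz).1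
    obtain ⟨u4, u5⟩ := u3 (hcl z hz).2
    simp only [mul_zero] at u2 u4 u5
    exact ⟨u1, u4, u2, u5⟩
  have hc4 : s ^ 2 / 4 ≤ 4 := by linarith
  have hc0 : 0 < s ^ 2 / 4 := by positivity
  obtain ⟨G, hG⟩ : ∃ G : ℂ → ℂ, G = fun z => f ((1 + z) * (k : ℂ) ^ m) 0 / f ((1 + z) * (k : ℂ) ^ m) (k * L) *
    Complex.exp (-(K * (Jint m L (1 + z) - tau m L))) := ⟨_, rfl⟩
  have hGn : ∀ z ∈ Metric.ball (0 : ℂ) R1, ‖G z‖ = ‖f ((1 + z) * (k : ℂ) ^ m) 0‖ /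
      ‖f ((1 + z) * (k : ℂ) ^ m) (k * L)‖ * Real.exp (-(K * (Phi m (om m ^ 2 * (1 + z)) L - tau m L))) := by
    intro z hz
    rw [hG]
    simp only [norm_mul, norm_div, Complex.norm_exp]
    rw [← Jint_re hL0 hc0 hc4 (hcl z hz).1 (hcl z hz).2]
    simp
  have hGdiff : DifferentiableOn ℂ G (Metric.ball 0 R1) := by
    have hfx : ∀ x, DifferentiableOn ℂ (fun z => f ((1 + z) * (k : ℂ) ^ m) x) (Metric.ball 0 R1) := by
      intro x
      exact (hfd x).1.comp (f := fun z : ℂ => (1 + z) * (k : ℂ) ^ m) (by fun_prop) hin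
    have hJ : DifferentiableOn ℂ (fun z => Jint m L (1 + z)) (Metric.ball 0 R1) := by
      have hJ1 : DifferentiableOn ℂ (Jint m L) (Metric.ball 1 R1) := by
        have hsub : ∀ e ∈ Metric.ball (1 : ℂ) R1, e - 1 ∈ Metric.ball (0 : ℂ) R1 := fun e he => by
          rw [mem_ball_zero_iff]; rwa [mem_ball_iff_norm] at he
        refine Jint_diff hL0 hc0 hc4 Metric.isOpen_ball (fun e he => ?_) (fun e he => ?_)
        · simpa using (hcl _ (hsub e he)).1
        · simpa using (hcl _ (hsub e he)).2
      refine hJ1.comp (f := fun z : ℂ => 1 + z) (by fun_prop) fun z hz => ?_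
      rw [mem_ball_iff_norm, add_sub_cancel_left]
      rwa [mem_ball_zero_iff] at hz
    rw [hG]
    refine ((hfx 0).div (hfx _) fun z hz => (hest z hz).1).mul ?_
    exact (((hJ.sub_const _).const_mul _).neg).cexp
  have hGlow : ∀ z ∈ Metric.ball (0 : ℂ) R1, Real.exp (-(K * ε)) ≤ ‖G z‖ := by
    intro z hz
    obtain ⟨n1, n2, n3, n4⟩ := hest z hz
    have p1 : 0 < ‖f ((1 + z) * (k : ℂ) ^ m) (k * L)‖ := norm_pos_iff.2 n1
    rw [hGn z hz]
    calc Real.exp (-(K * ε)) = Real.exp (K * (Phi m (om m ^ 2 * (1 + z)) L - tau m L - ε)) *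
          Real.exp (-(K * (Phi m (om m ^ 2 * (1 + z)) L - tau m L))) := by
            rw [← Real.exp_add]; congr 1; ring
      _ ≤ _ := by
        gcongr
        rwa [le_div_iff₀ p1]
  have hGup : ∀ z ∈ Metric.ball (0 : ℂ) R1, ‖G z‖ ≤ Real.exp (K * ε) := by
    intro z hz
    obtain ⟨n1, n2, n3, n4⟩ := hest z hz
    have p1 : 0 < ‖f ((1 + z) * (k : ℂ) ^ m) (k * L)‖ := norm_pos_iff.2 n1
    rw [hGn z hz]
    calc _ ≤ Real.exp (K * (Phi m (om m ^ 2 * (1 + z)) L - tau m L + ε)) *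
          Real.exp (-(K * (Phi m (om m ^ 2 * (1 + z)) L - tau m L))) := by
            gcongr
            rwa [div_le_iff₀ p1]
      _ = _ := by
        rw [← Real.exp_add]; congr 1; ring
  have hlog : ∀ z ∈ Metric.ball (0 : ℂ) R1, Real.log ‖G z‖ = Real.log (‖f ((1 + z) * (k : ℂ) ^ m) 0‖ /
      ‖f ((1 + z) * (k : ℂ) ^ m) (k * L)‖) - K * (Phi m (om m ^ 2 * (1 + z)) L - tau m L) := by
    intro z hz
    obtain ⟨n1, n2, -, -⟩ := hest z hz
    rw [hGn z hz, Real.log_mul (div_ne_zero (norm_ne_zero_iff.2 n2) (norm_ne_zero_iff.2 n1)) (Real.exp_pos _).ne',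
      Real.log_exp]
    ring
  obtain ⟨η, hη⟩ : ∃ η, η = l.im / l.re := ⟨_, rfl⟩
  have hη0 : 0 ≤ η := by rw [hη]; positivity
  have hη2 : η ≤ R1 / 2 := by rw [hη, div_le_iff₀ hre]; exact him1
  have hlim : l.im = η * l.re := by rw [hη, div_mul_cancel₀ _ hre.ne']
  have hz1n : ‖(η : ℂ) * I‖ = η := by simp [abs_of_nonneg hη0]
  have hz2n : ‖-((η : ℂ) * I)‖ = η := by rw [norm_neg, hz1n]
  have hz1 : (η : ℂ) * I ∈ Metric.ball (0 : ℂ) R1 := by rw [mem_ball_zero_iff, hz1n]; linarith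
  have hz2 : -((η : ℂ) * I) ∈ Metric.ball (0 : ℂ) R1 := by rw [mem_ball_zero_iff, hz2n]; linarith
  have hkc : (k : ℂ) ^ m = (l.re : ℂ) := by exact_mod_cast congrArg (fun x : ℝ => (x : ℂ)) hkm
  have e1 : (1 + (η : ℂ) * I) * (k : ℂ) ^ m = l := by
    rw [hkc]
    apply Complex.ext <;> simp [hlim]
  have e2 : (1 + -((η : ℂ) * I)) * (k : ℂ) ^ m = starRingEnd ℂ l := by
    rw [hkc]
    apply Complex.ext <;> simp [hlim]
  have b1 := log_bound hR0 (by positivity : 0 < K * ε) hGdiff hGlow hGup _ hz1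
  have b2 := log_bound hR0 (by positivity : 0 < K * ε) hGdiff hGlow hGup _ hz2
  have f1' := hlog _ hz1
  have f2' := hlog _ hz2
  have i1 := hin _ hz1
  have i2 := hin _ hz2
  rw [e1] at f1' i1
  rw [e2] at f2' i2
  have r1 := h.ratio ((hf l i1).2.2.2 v d h.sol h.lim) 0 (k * L)
  have r2 := h.conj.ratio ((hf _ i2).2.2.2 _ _ h.conj.sol h.conj.lim) 0 (k * L)
  rw [r1] at f1'
  rw [r2] at f2'
  simp only [map_zero, RCLike.norm_conj, map_mul, conj_ofReal] at f2'
  have gap := Phi_gap hm (e := 1 + (η : ℂ) * I) (hcl _ hz1).1 (by simpa using hη0) hL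
  have e3 : starRingEnd ℂ (1 + (η : ℂ) * I) = 1 + -((η : ℂ) * I) := by simp
  have e4 : (1 + (η : ℂ) * I).im = η := by simp
  rw [e3, e4, ← hsd] at gap
  rw [hz1n] at b1
  rw [hz2n] at b2
  have hbd : 2 * (2 * (K * ε)) * η / (R1 - η) ≤ K * (s * η / 16) := by
    rw [div_le_iff₀ (by linarith), hεd]
    have : 0 ≤ K * (s * η) * (R1 - η - R1 / 2) := mul_nonneg (by positivity) (by linarith)
    linarith
  have c1 := (abs_le.1 (b1.trans hbd)).2
  have c2 := (abs_le.1 (b2.trans hbd)).1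
  have gapK := mul_le_mul_of_nonneg_left gap hKpos.le
  rw [hlim]
  by_contra hne
  have hηp : 0 < η := lt_of_le_of_ne hη0 (fun h0 => hne (by rw [← h0, zero_mul]))
  have : 0 < K * (s * η) := by positivity
  linarith

theorem region1 {m : ℕ} (hm : 3 ≤ m) (a : ℕ → ℝ) : ∃ c Λ : ℝ, 0 < c ∧ ∀ l v d, EV m a l v d →
    Λ ≤ ‖l‖ → 0 < l.re → |l.im| ≤ c * ‖l‖ → l.im = 0 := by
  obtain ⟨c, Λ, hc, H⟩ := region1_aux hm a
  refine ⟨c, Λ, hc, fun l v d h hl hre him => ?_⟩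
  rcases le_total 0 l.im with h0 | h0
  · rw [abs_of_nonneg h0] at him
    exact H l v d h hl hre h0 him
  · rw [abs_of_nonpos h0] at him
    have := H _ _ _ h.conj (by rwa [RCLike.norm_conj]) (by simpa using hre) (by simpa using h0)
      (by rwa [RCLike.norm_conj, conj_im])
    simpa using this

/-- For real coefficients, all but finitely many eigenvalues of `H(m,a)` are real
and positive. -/
theorem stmt0 (m : ℕ) (hm : 3 ≤ m) (a : ℕ → ℝ) :
    {lam : ℂ | IsEigenvalue m (fun j => (a j : ℂ)) lam ∧
      ¬ (lam.im = 0 ∧ 0 < lam.re)}.Finite := by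
  obtain ⟨c1, Λ1, hc1, H1⟩ := region1 hm a
  have hsb := sin1_pos hm
  obtain ⟨c, hc⟩ : ∃ c, c = min c1 (Real.sin (bet m) / 4) := ⟨_, rfl⟩
  have hc0 : 0 < c := by rw [hc]; exact lt_min hc1 (by positivity)
  obtain ⟨Λ2, H2⟩ := region2 hm a hc0
  obtain ⟨Λ3, -, H3⟩ := region3 hm a
  refine (finite_bounded hm a (max Λ1 (max Λ2 Λ3))).subset ?_
  rintro l ⟨hl, hn⟩
  obtain ⟨v, d, h⟩ := eig_EV hl
  refine ⟨⟨v, d, h⟩, ?_⟩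
  by_contra hlt
  rw [not_le] at hlt
  have g1 : Λ1 ≤ ‖l‖ := (le_max_left _ _).trans hlt.le
  have g2 : Λ2 ≤ ‖l‖ := ((le_max_left _ _).trans (le_max_right _ _)).trans hlt.le
  have g3 : Λ3 ≤ ‖l‖ := ((le_max_right _ _).trans (le_max_right _ _)).trans hlt.le
  rcases le_total (c * ‖l‖) |l.im| with hi | hi
  · exact H2 l v d h g2 hi
  · have k1 : c * ‖l‖ ≤ c1 * ‖l‖ := mul_le_mul_of_nonneg_right (hc ▸ min_le_left _ _) (norm_nonneg _)
    have k2 : c * ‖l‖ ≤ Real.sin (bet m) / 4 * ‖l‖ :=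
      mul_le_mul_of_nonneg_right (hc ▸ min_le_right _ _) (norm_nonneg _)
    rcases le_or_gt l.re 0 with hr | hr
    · exact H3 l v d h g3 hr (hi.trans k2)
    · exact hn ⟨H1 l v d h g1 hr (hi.trans k1), hr⟩
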